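/- For any two topological embeddings f, f' of the unit circle S¹ into the unit sphere S² (i.e., continuous injective maps f, f' : S¹ → S²), there exists a homeomorphism φ : S² → S² such that φ ∘ f = f'. In particular, φ maps the simple closed curve f(S¹) onto f'(S¹) and sends each marked point f(z) to f'(z). -/

import Mathlib

noncomputable section

abbrev E2 := EuclideanSpace ℝ (Fin 2)
abbrev E3 := EuclideanSpace ℝ (Fin 3)

def sphere1 : Set E2 := Metric.sphere 0 1
def sphere2 : Set E3 := Metric.sphere 0 1

namespace JS
open Set Filter Topology Metric Real MeasureTheory

def SubM (v : ℂ → ℝ) (D : Set ℂ) : Prop :=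
  ContinuousOn v D ∧ ∀ z ∈ D, ∀ᶠ r in 𝓝[>] (0 : ℝ), v z ≤ circleAverage v z r

def Harm (u : ℂ → ℝ) (D : Set ℂ) : Prop :=
  ContinuousOn u D ∧ ∀ z ∈ D, ∀ᶠ r in 𝓝[>] (0 : ℝ), u z = circleAverage u z r

def PI (s : ℂ → ℝ) (c : ℂ) (R : ℝ) (w : ℂ) : ℝ :=
  circleAverage (fun ζ => poissonKernel c w ζ * s ζ) c R

lemma small_ball {D : Set ℂ} (hD : IsOpen D) {z : ℂ} (hz : z ∈ D) :
    ∀ᶠ r in 𝓝[>] (0 : ℝ), 0 < r ∧ closedBall z r ⊆ D := by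
  obtain ⟨ε, hε, h⟩ := Metric.isOpen_iff.1 hD z hz
  have : Ioo 0 ε ∈ 𝓝[>] (0 : ℝ) := Ioo_mem_nhdsGT hε
  filter_upwards [this] with r hr
  exact ⟨hr.1, (closedBall_subset_ball hr.2).trans h⟩

lemma sphere_sub {z : ℂ} {r : ℝ} (hr : 0 < r) {D : Set ℂ} (h : closedBall z r ⊆ D) :
    sphere z |r| ⊆ D := by
  rw [abs_of_pos hr]; exact sphere_subset_closedBall.trans h

lemma ci {v : ℂ → ℝ} {D : Set ℂ} (hv : ContinuousOn v D) {z : ℂ} {r : ℝ} (hr : 0 < r)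
    (h : closedBall z r ⊆ D) : CircleIntegrable v z r :=
  ContinuousOn.circleIntegrable hr.le (hv.mono (sphere_subset_closedBall.trans h))

lemma Harm.subM {u : ℂ → ℝ} {D : Set ℂ} (h : Harm u D) : SubM u D :=
  ⟨h.1, fun z hz => (h.2 z hz).mono fun _ hr => hr.le⟩

lemma SubM.mono {u : ℂ → ℝ} {D E : Set ℂ} (h : SubM u D) (hE : E ⊆ D) : SubM u E :=
  ⟨h.1.mono hE, fun z hz => h.2 z (hE hz)⟩

lemma Harm.mono {u : ℂ → ℝ} {D E : Set ℂ} (h : Harm u D) (hE : E ⊆ D) : Harm u E :=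
  ⟨h.1.mono hE, fun z hz => h.2 z (hE hz)⟩

lemma SubM.add {u v : ℂ → ℝ} {D : Set ℂ} (hD : IsOpen D) (h : SubM u D) (h' : SubM v D) :
    SubM (fun z => u z + v z) D := by
  refine ⟨h.1.add h'.1, fun z hz => ?_⟩
  filter_upwards [h.2 z hz, h'.2 z hz, small_ball hD hz] with r h1 h2 h3
  rw [circleAverage_fun_add (ci h.1 h3.1 h3.2) (ci h'.1 h3.1 h3.2)]
  linarith

lemma Harm.add {u v : ℂ → ℝ} {D : Set ℂ} (hD : IsOpen D) (h : Harm u D) (h' : Harm v D) :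
    Harm (fun z => u z + v z) D := by
  refine ⟨h.1.add h'.1, fun z hz => ?_⟩
  filter_upwards [h.2 z hz, h'.2 z hz, small_ball hD hz] with r h1 h2 h3
  rw [circleAverage_fun_add (ci h.1 h3.1 h3.2) (ci h'.1 h3.1 h3.2)]
  linarith

lemma SubM.smul {u : ℂ → ℝ} {D : Set ℂ} (h : SubM u D) {a : ℝ} (ha : 0 ≤ a) :
    SubM (fun z => a * u z) D := by
  refine ⟨continuousOn_const.mul h.1, fun z hz => ?_⟩
  filter_upwards [h.2 z hz] with r h1
  have := circleAverage_fun_smul (a := a) (f := u) (c := z) (R := r)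
  simp only [smul_eq_mul] at this
  rw [this]; gcongr

lemma Harm.smul {u : ℂ → ℝ} {D : Set ℂ} (h : Harm u D) (a : ℝ) :
    Harm (fun z => a * u z) D := by
  refine ⟨continuousOn_const.mul h.1, fun z hz => ?_⟩
  filter_upwards [h.2 z hz] with r h1
  have := circleAverage_fun_smul (a := a) (f := u) (c := z) (R := r)
  simp only [smul_eq_mul] at this
  rw [this, ← h1]

lemma Harm.neg {u : ℂ → ℝ} {D : Set ℂ} (h : Harm u D) : Harm (fun z => - u z) D := by
  simpa using h.smul (-1)

lemma Harm.const (a : ℝ) (D : Set ℂ) : Harm (fun _ => a) D :=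
  ⟨continuousOn_const, fun z _ => Eventually.of_forall fun r => (circleAverage_const a z r).symm⟩

lemma SubM.sup {u v : ℂ → ℝ} {D : Set ℂ} (hD : IsOpen D) (h : SubM u D) (h' : SubM v D) :
    SubM (fun z => max (u z) (v z)) D := by
  have hc : ContinuousOn (fun z => max (u z) (v z)) D := h.1.sup h'.1
  refine ⟨hc, fun z hz => ?_⟩
  filter_upwards [h.2 z hz, h'.2 z hz, small_ball hD hz] with r h1 h2 h3
  refine max_le (h1.trans ?_) (h2.trans ?_)
  · exact circleAverage_mono (ci h.1 h3.1 h3.2) (ci hc h3.1 h3.2) fun x _ => le_max_left _ _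
  · exact circleAverage_mono (ci h'.1 h3.1 h3.2) (ci hc h3.1 h3.2) fun x _ => le_max_right _ _

lemma harm_re {G : ℂ → ℂ} {D : Set ℂ} (hD : IsOpen D) (hG : DifferentiableOn ℂ G D) :
    Harm (fun z => (G z).re) D := by
  refine ⟨Complex.continuous_re.comp_continuousOn hG.continuousOn, fun z hz => ?_⟩
  filter_upwards [small_ball hD hz] with r hr
  have hd : DiffContOnCl ℂ G (ball z |r|) := by
    rw [abs_of_pos hr.1]
    apply DifferentiableOn.diffContOnCl
    rw [closure_ball _ hr.1.ne']
    exact hG.mono hr.2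
  have h1 := hd.circleAverage
  have h2 := Complex.reCLM.circleAverage_comp_comm (f := G) (c := z) (R := r)
    (ContinuousOn.circleIntegrable hr.1.le
      (hG.continuousOn.mono (sphere_subset_closedBall.trans hr.2)))
  rw [h1] at h2
  exact h2.symm

lemma avg_eq_zero {v : ℂ → ℝ} {z : ℂ} {r : ℝ} (hr : 0 < r) (hv : ContinuousOn v (sphere z r))
    {m : ℝ} (hle : ∀ x ∈ sphere z r, v x ≤ m) (h : m ≤ circleAverage v z r) :
    v (z + r) = m := by
  by_contra hne
  have hzr : z + r ∈ sphere z r := by simp [abs_of_pos hr]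
  have hlt : v (z + r) < m := lt_of_le_of_ne (hle _ hzr) hne
  have hcm : Continuous (fun θ => v (circleMap z r θ)) :=
    hv.comp_continuous (continuous_circleMap z r) fun θ => circleMap_mem_sphere z hr.le θ
  have key : ∫ θ in (0:ℝ)..2 * π, v (circleMap z r θ) < ∫ θ in (0:ℝ)..2 * π, m := by
    apply intervalIntegral.integral_lt_integral_of_continuousOn_of_le_of_exists_lt
      two_pi_pos hcm.continuousOn continuousOn_const
    · intro x _; exact hle _ (circleMap_mem_sphere z hr.le x)
    · refine ⟨0, ⟨le_rfl, two_pi_pos.le⟩, ?_⟩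
      simpa [circleMap] using hlt
  have : circleAverage v z r < circleAverage (fun _ => m) z r := by
    unfold circleAverage
    exact mul_lt_mul_of_pos_left key (by positivity)
  rw [circleAverage_const] at this
  linarith

theorem max_principle {D : Set ℂ} (hD : IsOpen D) (hb : Bornology.IsBounded D) {v : ℂ → ℝ}
    (hv : SubM v D) {m : ℝ} (hfr : ∀ x ∈ frontier D, ∀ ε > 0, ∀ᶠ z in 𝓝[D] x, v z ≤ m + ε) :
    ∀ z ∈ D, v z ≤ m := by
  intro z1 hz1
  by_contra hlt
  push Not at hlt
  have hcl : ∀ a, m < a → IsClosed {z | z ∈ D ∧ a ≤ v z} := by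
    intro a ha
    rw [← isOpen_compl_iff, isOpen_iff_mem_nhds]
    intro x hx
    by_cases hxD : x ∈ D
    · have hxa : v x < a := by by_contra h; exact hx ⟨hxD, not_lt.1 h⟩
      have := (hv.1.continuousAt (hD.mem_nhds hxD)).eventually_lt continuousAt_const hxa
      filter_upwards [this] with y hy hy2
      exact absurd hy2.2 (not_le.2 hy)
    · by_cases hxc : x ∈ closure D
      · have hxf : x ∈ frontier D := ⟨hxc, by rwa [hD.interior_eq]⟩
        have := hfr x hxf ((a - m) / 2) (by linarith)
        rw [eventually_nhdsWithin_iff] at this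
        filter_upwards [this] with y hy hy2
        have := hy hy2.1
        linarith [hy2.2]
      · filter_upwards [isClosed_closure.isOpen_compl.mem_nhds hxc] with y hy hy2
        exact hy (subset_closure hy2.1)
  have hcp : ∀ a, m < a → IsCompact {z | z ∈ D ∧ a ≤ v z} := fun a ha =>
    Metric.isCompact_of_isClosed_isBounded (hcl a ha) (hb.subset fun z hz => hz.1)
  obtain ⟨x, hx, hxm⟩ := (hcp (v z1) hlt).exists_isMaxOn ⟨z1, hz1, le_rfl⟩
    (hv.1.mono fun z hz => hz.1)
  have hxv : m < v x := lt_of_lt_of_le hlt hx.2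
  have hmax : ∀ y ∈ D, v y ≤ v x := by
    intro y hy
    by_cases h : v z1 ≤ v y
    · exact hxm ⟨hy, h⟩
    · exact (not_le.1 h).le.trans hx.2
  obtain ⟨y, hy, hym⟩ := (hcp (v x) hxv).exists_isMaxOn ⟨x, hx.1, le_rfl⟩
    Complex.continuous_re.continuousOn
  have hyv : v y = v x := le_antisymm (hmax y hy.1) hy.2
  obtain ⟨r, h1, h2⟩ := ((hv.2 y hy.1).and (small_ball hD hy.1)).exists
  have hs : sphere y r ⊆ D := sphere_subset_closedBall.trans h2.2
  have := avg_eq_zero h2.1 (hv.1.mono hs) (m := v x) (fun z hz => hmax z (hs hz)) (hyv ▸ h1)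
  have h3 : y + r ∈ sphere y r := by simp [abs_of_pos h2.1]
  have h4 := hym (a := y + r) ⟨hs h3, this.ge⟩
  simp at h4
  linarith [h2.1]

/-- version with continuity up to the boundary -/
theorem max_principle' {D : Set ℂ} (hD : IsOpen D) (hb : Bornology.IsBounded D) {v : ℂ → ℝ}
    (hv : SubM v D) (hc : ContinuousOn v (closure D)) {m : ℝ} (hfr : ∀ x ∈ frontier D, v x ≤ m) :
    ∀ z ∈ closure D, v z ≤ m := by
  have h := max_principle hD hb hv (m := m) (by
    intro x hx ε hε
    have h1 : Tendsto v (𝓝[D] x) (𝓝 (v x)) :=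
      (hc x (frontier_subset_closure hx)).mono_left (nhdsWithin_mono _ subset_closure)
    have : v x < m + ε := by linarith [hfr x hx]
    exact (h1.eventually_lt_const this).mono fun _ h => h.le)
  intro z hz
  by_cases hzD : z ∈ D
  · exact h z hzD
  · exact hfr z ⟨hz, by rwa [hD.interior_eq]⟩

/-! Poisson integral -/

lemma pk_cont {c w : ℂ} {R : ℝ} (hw : w ∈ ball c R) :
    ContinuousOn (poissonKernel c w) (sphere c R) := by
  unfold poissonKernel
  apply ContinuousOn.div (by fun_prop) (by fun_prop)
  intro x hx
  have : x ≠ w := by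
    rintro rfl
    simp only [mem_ball, mem_sphere] at hw hx
    linarith
  simpa [sub_eq_zero] using this

lemma pk_nonneg {c w z : ℂ} {R : ℝ} (hw : w ∈ ball c R) (hz : z ∈ sphere c R) :
    0 ≤ poissonKernel c w z := by
  unfold poissonKernel
  simp only [mem_ball, mem_sphere, dist_eq_norm] at hw hz
  apply div_nonneg _ (by positivity)
  rw [hz]
  nlinarith [norm_nonneg (w - c)]

lemma pk_ci {c w : ℂ} {R : ℝ} (hR : 0 < R) (hw : w ∈ ball c R) {s : ℂ → ℝ}
    (hs : ContinuousOn s (sphere c R)) :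
    CircleIntegrable (fun ζ => poissonKernel c w ζ * s ζ) c R :=
  ContinuousOn.circleIntegrable hR.le ((pk_cont hw).mul hs)

lemma PI_mono {c w : ℂ} {R : ℝ} (hR : 0 < R) (hw : w ∈ ball c R) {s t : ℂ → ℝ}
    (hs : ContinuousOn s (sphere c R)) (ht : ContinuousOn t (sphere c R))
    (h : ∀ x ∈ sphere c R, s x ≤ t x) : PI s c R w ≤ PI t c R w := by
  apply circleAverage_mono (pk_ci hR hw hs) (pk_ci hR hw ht)
  rw [abs_of_pos hR]
  intro x hx
  exact mul_le_mul_of_nonneg_left (h x hx) (pk_nonneg hw hx)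

lemma PI_re {c w : ℂ} {R : ℝ} (hR : 0 < R) (hw : w ∈ ball c R) {G : ℂ → ℂ}
    (hG : DiffContOnCl ℂ G (ball c R)) : PI (fun z => (G z).re) c R w = (G w).re := by
  have h := hG.circleAverage_poissonKernel_smul hw
  have hc : ContinuousOn G (sphere c R) := hG.continuousOn.mono (by
    rw [closure_ball _ hR.ne']; exact sphere_subset_closedBall)
  have h2 := Complex.reCLM.circleAverage_comp_comm (f := poissonKernel c w • G) (c := c) (R := R)
    (ContinuousOn.circleIntegrable hR.le ((pk_cont hw).smul hc))
  rw [h] at h2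
  simp only [Complex.reCLM_apply] at h2
  rw [← h2]
  unfold PI
  congr 1
  ext ζ
  simp

lemma PI_const {c w : ℂ} {R : ℝ} (hR : 0 < R) (hw : w ∈ ball c R) (a : ℝ) :
    PI (fun _ => a) c R w = a := by
  have := PI_re hR hw (G := fun _ => (a : ℂ)) diffContOnCl_const
  simpa using this

lemma PI_holo' {c : ℂ} {R : ℝ} {s : ℂ → ℝ} (hs : CircleIntegrable s c R) :
    ∃ G : ℂ → ℂ, DifferentiableOn ℂ G (ball c R) ∧ ∀ w ∈ ball c R, PI s c R w = (G w).re := by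
  set s0 : ℂ → ℝ := fun z => s (z + c) with hs0
  have hci' : CircleIntegrable s0 0 R := by
    unfold CircleIntegrable at *
    refine hs.congr ?_
    intro θ _
    simp [hs0, circleMap, add_comm]
  have hci : CircleIntegrable (fun ζ => (s0 ζ : ℂ)) 0 R := by
    unfold CircleIntegrable at *
    exact ⟨hci'.1.ofReal, hci'.2.ofReal⟩
  have hd := differentiableOn_circleAverage_herglotzRieszKernel_smul hci
  refine ⟨fun w => circleAverage (fun ζ ↦ herglotzRieszKernel 0 (w - c) ζ • (s0 ζ : ℂ)) 0 R,
    ?_, ?_⟩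
  · refine hd.comp (t := ball 0 R) (f := fun w => w - c) (by fun_prop) ?_
    intro x hx
    simpa [dist_eq_norm] using hx
  · intro w hw
    have hw0 : w - c ∈ ball (0 : ℂ) R := by simpa [dist_eq_norm] using hw
    dsimp only
    rw [re_circleAverage_herglotzRieszKernel_smul hci' hw0]
    unfold PI
    rw [← circleAverage_map_add_const]
    congr 1
    ext ζ
    simp only [hs0, Pi.smul_apply', smul_eq_mul, poissonKernel_eq_re_herglotzRieszKernel,
      Function.comp_apply, herglotzRieszKernel_add_const]

lemma PI_holo {c : ℂ} {R : ℝ} (hR : 0 < R) {s : ℂ → ℝ} (hs : ContinuousOn s (sphere c R)) :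
    ∃ G : ℂ → ℂ, DifferentiableOn ℂ G (ball c R) ∧ ∀ w ∈ ball c R, PI s c R w = (G w).re :=
  PI_holo' (ContinuousOn.circleIntegrable hR.le hs)

lemma PI_tendsto {c : ℂ} {R : ℝ} (hR : 0 < R) {s : ℂ → ℝ} (hs : ContinuousOn s (sphere c R))
    {z0 : ℂ} (hz0 : z0 ∈ sphere c R) :
    Tendsto (PI s c R) (𝓝[ball c R] z0) (𝓝 (s z0)) := by
  rw [Metric.tendsto_nhds]
  intro ε hε
  -- global estimate on the sphere
  obtain ⟨M, hM⟩ := (isCompact_sphere c R).exists_bound_of_continuousOn hs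
  have hM0 : 0 ≤ M := (norm_nonneg _).trans (hM z0 hz0)
  obtain ⟨δ, hδ, hd⟩ := Metric.continuousOn_iff.1 hs z0 hz0 (ε / 2) (by linarith)
  set C := 2 * M / δ ^ 2 with hC
  have hC0 : 0 ≤ C := by positivity
  have est : ∀ x ∈ sphere c R, |s x - s z0| ≤ ε / 2 + C * ‖x - z0‖ ^ 2 := by
    intro x hx
    by_cases h : dist x z0 < δ
    · have := hd x hx h
      rw [Real.dist_eq] at this
      have : 0 ≤ C * ‖x - z0‖ ^ 2 := by positivity
      linarith
    · have h1 : δ ≤ ‖x - z0‖ := by rw [← dist_eq_norm]; exact not_lt.1 h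
      have h2 : |s x - s z0| ≤ 2 * M := by
        have := hM x hx; have := hM z0 hz0
        rw [Real.norm_eq_abs] at *
        exact (abs_sub _ _).trans (by linarith)
      have h3 : C * δ ^ 2 ≤ C * ‖x - z0‖ ^ 2 := by gcongr
      have h4 : C * δ ^ 2 = 2 * M := by rw [hC]; field_simp
      linarith
  -- affine function
  set A : ℂ → ℂ := fun x => ((2 * R ^ 2 : ℝ) : ℂ) - 2 * (x - c) * (starRingEnd ℂ) (z0 - c) with hA
  have hAs : ∀ x ∈ sphere c R, (A x).re = ‖x - z0‖ ^ 2 := by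
    intro x hx
    simp only [mem_sphere, dist_eq_norm] at hx hz0
    have h1 : ‖x - z0‖ ^ 2 = ‖(x - c) - (z0 - c)‖ ^ 2 := by congr 2; ring
    rw [h1, ← Complex.normSq_eq_norm_sq, Complex.normSq_sub, Complex.normSq_eq_norm_sq,
      Complex.normSq_eq_norm_sq, hx, hz0]
    simp only [hA]
    rw [mul_assoc, Complex.sub_re, Complex.ofReal_re,
      show (2 * ((x - c) * (starRingEnd ℂ) (z0 - c))).re
        = 2 * ((x - c) * (starRingEnd ℂ) (z0 - c)).re by simp]
    ring
  have hAd : Differentiable ℂ A := by fun_prop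
  have hA0 : (A z0).re = 0 := by rw [hAs z0 hz0]; simp
  have hev : ∀ᶠ w in 𝓝[ball c R] z0, C * (A w).re < ε / 2 := by
    have : Continuous fun w => C * (A w).re := by
      exact continuous_const.mul (Complex.continuous_re.comp hAd.continuous)
    have h2 : Tendsto (fun w => C * (A w).re) (𝓝[ball c R] z0) (𝓝 (C * (A z0).re)) :=
      this.continuousAt.continuousWithinAt
    rw [hA0, mul_zero] at h2
    exact h2.eventually_lt_const (by linarith)
  filter_upwards [hev, self_mem_nhdsWithin] with w hw hwb
  have hAR : Continuous fun w => (A w).re := Complex.continuous_re.comp hAd.continuous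
  have hup : PI s c R w ≤ (s z0 + ε / 2) + C * (A w).re := by
    have h1 : PI (fun x => (((s z0 + ε / 2 : ℝ) : ℂ) + (C : ℂ) * A x).re) c R w = _ :=
      PI_re hR hwb (Differentiable.diffContOnCl (by fun_prop))
    have h2 : PI s c R w ≤ PI (fun x => (((s z0 + ε / 2 : ℝ) : ℂ) + (C : ℂ) * A x).re) c R w := by
      apply PI_mono hR hwb hs
      · exact (Complex.continuous_re.comp (by fun_prop)).continuousOn
      · intro x hx
        rw [Complex.add_re, Complex.ofReal_re, Complex.re_ofReal_mul, hAs x hx]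
        have := est x hx
        have := le_abs_self (s x - s z0)
        linarith
    rw [h1, Complex.add_re, Complex.ofReal_re, Complex.re_ofReal_mul] at h2
    exact h2
  have hlo : (s z0 - ε / 2) - C * (A w).re ≤ PI s c R w := by
    have h1 : PI (fun x => (((s z0 - ε / 2 : ℝ) : ℂ) - (C : ℂ) * A x).re) c R w = _ :=
      PI_re hR hwb (Differentiable.diffContOnCl (by fun_prop))
    have h2 : PI (fun x => (((s z0 - ε / 2 : ℝ) : ℂ) - (C : ℂ) * A x).re) c R w ≤ PI s c R w := by
      apply PI_mono hR hwb _ hs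
      · intro x hx
        rw [Complex.sub_re, Complex.ofReal_re, Complex.re_ofReal_mul, hAs x hx]
        have := est x hx
        have := neg_abs_le (s x - s z0)
        linarith
      · exact (Complex.continuous_re.comp (by fun_prop)).continuousOn
    rw [h1, Complex.sub_re, Complex.ofReal_re, Complex.re_ofReal_mul] at h2
    exact h2
  rw [Real.dist_eq, abs_lt]
  constructor <;> linarith

open Classical in
def Pmod (s : ℂ → ℝ) (c : ℂ) (R : ℝ) (w : ℂ) : ℝ := if w ∈ ball c R then PI s c R w else s w

lemma Pmod_in {s : ℂ → ℝ} {c : ℂ} {R : ℝ} {w : ℂ} (h : w ∈ ball c R) :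
    Pmod s c R w = PI s c R w := if_pos h

lemma Pmod_out {s : ℂ → ℝ} {c : ℂ} {R : ℝ} {w : ℂ} (h : w ∉ ball c R) :
    Pmod s c R w = s w := if_neg h

lemma PI_harm {c : ℂ} {R : ℝ} (hR : 0 < R) {s : ℂ → ℝ} (hs : ContinuousOn s (sphere c R)) :
    Harm (PI s c R) (ball c R) := by
  obtain ⟨G, hG, h⟩ := PI_holo hR hs
  have h1 := harm_re isOpen_ball hG
  refine ⟨h1.1.congr h, fun z hz => ?_⟩
  filter_upwards [h1.2 z hz, small_ball isOpen_ball hz] with r hr hr2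
  rw [h z hz, hr]
  apply circleAverage_congr_sphere
  intro x hx
  exact (h x (sphere_sub hr2.1 hr2.2 hx)).symm

lemma Pmod_cont {c : ℂ} {R : ℝ} (hR : 0 < R) {s : ℂ → ℝ} {E : Set ℂ} (hE : closedBall c R ⊆ E)
    (hs : ContinuousOn s E) : ContinuousOn (Pmod s c R) E := by
  have hss : ContinuousOn s (sphere c R) := hs.mono (sphere_subset_closedBall.trans hE)
  intro x hx
  by_cases hxb : x ∈ ball c R
  · have h1 := ((PI_harm hR hss).1.continuousAt (isOpen_ball.mem_nhds hxb))
    refine ContinuousAt.continuousWithinAt (h1.congr ?_)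
    filter_upwards [isOpen_ball.mem_nhds hxb] with y hy
    exact (Pmod_in hy).symm
  · have h2 : Tendsto s (𝓝[E] x) (𝓝 (s x)) := hs x hx
    unfold ContinuousWithinAt
    rw [Pmod_out hxb]
    have hu : 𝓝[E] x ≤ 𝓝[ball c R] x ⊔ 𝓝[E \ ball c R] x := by
      rw [← nhdsWithin_union]
      apply nhdsWithin_mono
      intro y hy
      by_cases h : y ∈ ball c R
      · exact Or.inl h
      · exact Or.inr ⟨hy, h⟩
    refine Tendsto.mono_left (Tendsto.sup ?_ ?_) hu
    · by_cases hxs : x ∈ sphere c R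
      · refine (PI_tendsto hR hss hxs).congr' ?_
        filter_upwards [self_mem_nhdsWithin] with y hy
        exact (Pmod_in hy).symm
      · have : x ∉ closure (ball c R) := by
          rw [closure_ball _ hR.ne']
          simp only [mem_closedBall, mem_ball, mem_sphere] at *
          intro h; exact hxs (le_antisymm h (not_lt.1 hxb))
        have h3 : 𝓝[ball c R] x = ⊥ := by
          simpa [mem_closure_iff_nhdsWithin_neBot, not_neBot] using this
        rw [h3]; exact tendsto_bot
    · refine (h2.mono_left (nhdsWithin_mono _ sdiff_subset)).congr' ?_
      filter_upwards [self_mem_nhdsWithin] with y hy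
      exact (Pmod_out hy.2).symm

lemma le_Pmod {c : ℂ} {R : ℝ} (hR : 0 < R) {s : ℂ → ℝ} (hs : SubM s univ) (w : ℂ) :
    s w ≤ Pmod s c R w := by
  have hsc : ContinuousOn s univ := hs.1
  have hss : ContinuousOn s (sphere c R) := hs.1.mono (subset_univ _)
  by_cases hw : w ∈ ball c R
  · have hP := Pmod_cont (c := c) hR (subset_univ _) hs.1
    have hsub : SubM (fun z => s z + - PI s c R z) (ball c R) :=
      (hs.mono (subset_univ _)).add isOpen_ball (PI_harm hR hss).neg.subM
    have hsub' : SubM (fun z => s z + - Pmod s c R z) (ball c R) := by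
      refine ⟨(hsc.mono (subset_univ _)).add (hP.mono (subset_univ _)).neg, fun z hz => ?_⟩
      filter_upwards [hsub.2 z hz, small_ball isOpen_ball hz] with r h1 h2
      rw [Pmod_in hz]
      refine h1.trans_eq ?_
      apply circleAverage_congr_sphere
      intro x hx
      simp only
      rw [Pmod_in (sphere_sub h2.1 h2.2 hx)]
    have := max_principle' isOpen_ball isBounded_ball hsub'
      ((hsc.mono (subset_univ _)).add (hP.mono (subset_univ _)).neg) (m := 0) (by
        intro x hx
        rw [frontier_ball _ hR.ne'] at hx
        rw [Pmod_out]
        · simp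
        · intro h; simp only [mem_ball, mem_sphere] at *; linarith) w (subset_closure hw)
    linarith
  · rw [Pmod_out hw]

lemma Pmod_subM {c : ℂ} {R : ℝ} (hR : 0 < R) {s : ℂ → ℝ} (hs : SubM s univ) :
    SubM (Pmod s c R) univ := by
  have hc := Pmod_cont (c := c) hR (subset_univ _) hs.1
  have hss : ContinuousOn s (sphere c R) := hs.1.mono (subset_univ _)
  refine ⟨hc, fun z _ => ?_⟩
  by_cases hz : z ∈ ball c R
  · filter_upwards [(PI_harm hR hss).2 z hz, small_ball isOpen_ball hz] with r h1 h2
    rw [Pmod_in hz, h1]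
    apply le_of_eq
    apply circleAverage_congr_sphere
    intro x hx
    rw [Pmod_in (sphere_sub h2.1 h2.2 hx)]
  · filter_upwards [hs.2 z (mem_univ _), self_mem_nhdsWithin] with r h1 (hr : 0 < r)
    rw [Pmod_out hz]
    exact h1.trans (circleAverage_mono (ci hs.1 hr (subset_univ _)) (ci hc hr (subset_univ _))
      fun x _ => le_Pmod hR hs x)

/-- A harmonic function is its own Poisson integral. -/
lemma Harm.eq_PI {u : ℂ → ℝ} {D : Set ℂ} (hu : Harm u D) {c : ℂ} {R : ℝ} (hR : 0 < R)
    (hB : closedBall c R ⊆ D) {w : ℂ} (hw : w ∈ ball c R) : u w = PI u c R w := by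
  have hus : ContinuousOn u (sphere c R) := hu.1.mono (sphere_subset_closedBall.trans hB)
  have hP := (Pmod_cont (c := c) hR hB hu.1).mono hB
  have hPh : Harm (Pmod u c R) (ball c R) := by
    have h := PI_harm hR hus
    refine ⟨hP.mono ball_subset_closedBall, fun z hz => ?_⟩
    filter_upwards [h.2 z hz, small_ball isOpen_ball hz] with r h1 h2
    rw [Pmod_in hz, h1]
    apply circleAverage_congr_sphere
    intro x hx
    rw [Pmod_in (sphere_sub h2.1 h2.2 hx)]
  have hub := hu.mono (ball_subset_closedBall.trans hB)
  have hcb : closure (ball c R) = closedBall c R := closure_ball _ hR.ne'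
  have hfr : ∀ x ∈ frontier (ball c R), Pmod u c R x = u x := by
    intro x hx
    rw [frontier_ball _ hR.ne'] at hx
    rw [Pmod_out]
    intro h; simp only [mem_ball, mem_sphere] at *; linarith
  rw [← Pmod_in hw]
  apply le_antisymm
  · have := max_principle' isOpen_ball isBounded_ball (hub.add isOpen_ball hPh.neg).subM
      (by rw [hcb]; exact (hu.1.mono hB).add hP.neg) (m := 0)
      (by intro x hx; rw [hfr x hx]; simp) w (subset_closure hw)
    linarith
  · have := max_principle' isOpen_ball isBounded_ball (hPh.add isOpen_ball hub.neg).subM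
      (by rw [hcb]; exact hP.add (hu.1.mono hB).neg) (m := 0)
      (by intro x hx; rw [hfr x hx]; simp) w (subset_closure hw)
    linarith

lemma Harm.holo {u : ℂ → ℝ} {D : Set ℂ} (hu : Harm u D) {c : ℂ} {R : ℝ} (hR : 0 < R)
    (hB : closedBall c R ⊆ D) :
    ∃ G : ℂ → ℂ, DifferentiableOn ℂ G (ball c R) ∧ ∀ w ∈ ball c R, u w = (G w).re := by
  obtain ⟨G, h1, h2⟩ := PI_holo hR (hu.1.mono (sphere_subset_closedBall.trans hB))
  exact ⟨G, h1, fun w hw => (hu.eq_PI hR hB hw).trans (h2 w hw)⟩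

lemma harm_of_holo {u : ℂ → ℝ} {D : Set ℂ}
    (h : ∀ z ∈ D, ∃ r > 0, ∃ G : ℂ → ℂ, DifferentiableOn ℂ G (ball z r) ∧
      ∀ w ∈ ball z r, u w = (G w).re) : Harm u D := by
  constructor
  · intro z hz
    obtain ⟨r, hr, G, hG, h⟩ := h z hz
    have := (harm_re isOpen_ball hG).1.congr h
    exact (this.continuousAt (ball_mem_nhds z hr)).continuousWithinAt
  · intro z hz
    obtain ⟨r, hr, G, hG, h⟩ := h z hz
    filter_upwards [(harm_re isOpen_ball hG).2 z (mem_ball_self hr),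
      small_ball isOpen_ball (mem_ball_self (x := z) hr)] with ρ h1 h2
    rw [h z (mem_ball_self hr), h1]
    apply circleAverage_congr_sphere
    intro x hx
    exact (h x (sphere_sub h2.1 h2.2 hx)).symm

end JS

namespace JS
open Set Filter Topology Metric Real MeasureTheory

lemma exists_cover {D : Set ℂ} (hD : IsOpen D) (hne : D.Nonempty) :
    ∃ (c : ℕ → ℂ) (R : ℕ → ℝ), (∀ k, 0 < R k) ∧ (∀ k, closedBall (c k) (R k) ⊆ D) ∧
      ∀ z ∈ D, ∃ k, z ∈ ball (c k) (R k) := by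
  have : ∀ z : D, ∃ r > 0, closedBall (z : ℂ) r ⊆ D := by
    intro z
    obtain ⟨r, h⟩ := (small_ball hD z.2).exists
    exact ⟨r, h⟩
  choose r hr hrD using this
  obtain ⟨T, hT, hTU⟩ := TopologicalSpace.isOpen_iUnion_countable
    (fun z : D => ball (z : ℂ) (r z)) (fun z => isOpen_ball)
  have hTn : T.Nonempty := by
    obtain ⟨z, hz⟩ := hne
    have : z ∈ ⋃ i : D, ball (i : ℂ) (r i) := mem_iUnion.2 ⟨⟨z, hz⟩, mem_ball_self (hr _)⟩
    rw [← hTU] at this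
    simp only [mem_iUnion] at this
    obtain ⟨i, hi, _⟩ := this
    exact ⟨i, hi⟩
  obtain ⟨e, he⟩ := hT.exists_eq_range hTn
  refine ⟨fun k => e k, fun k => r (e k), fun k => hr _, fun k => hrD _, fun z hz => ?_⟩
  have : z ∈ ⋃ i : D, ball (i : ℂ) (r i) := mem_iUnion.2 ⟨⟨z, hz⟩, mem_ball_self (hr _)⟩
  rw [← hTU] at this
  simp only [mem_iUnion] at this
  obtain ⟨i, hi, h⟩ := this
  rw [he] at hi
  obtain ⟨k, rfl⟩ := hi
  exact ⟨k, h⟩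

def bal (s0 : ℂ → ℝ) (c : ℕ → ℂ) (R : ℕ → ℝ) : ℕ → ℂ → ℝ
  | 0 => s0
  | n + 1 => Pmod (bal s0 c R n) (c (Nat.unpair n).1) (R (Nat.unpair n).1)

theorem balayage {D : Set ℂ} (hD : IsOpen D) (hb : Bornology.IsBounded D) (hne : D.Nonempty)
    {s0 : ℂ → ℝ} (hs0 : SubM s0 univ) :
    ∃ u : ℂ → ℝ, Harm u D ∧ (∀ z ∈ D, s0 z ≤ u z) ∧ ∀ z ∈ D, ∀ b : ℝ,
      (∀ s : ℂ → ℝ, SubM s univ → (∀ x, x ∉ D → s x = s0 x) → s z ≤ b) → u z ≤ b := by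
  obtain ⟨c, R, hR, hcR, hcov⟩ := exists_cover hD hne
  set s := bal s0 c R with hs
  have hsub : ∀ n, SubM (s n) univ := by
    intro n
    induction n with
    | zero => exact hs0
    | succ n ih => exact Pmod_subM (hR _) ih
  have hmono : ∀ z, Monotone fun n => s n z := by
    intro z
    exact monotone_nat_of_le_succ fun n => le_Pmod (hR _) (hsub n) z
  have hout : ∀ n, ∀ x, x ∉ D → s n x = s0 x := by
    intro n
    induction n with
    | zero => intro x _; rfl
    | succ n ih =>
      intro x hx
      rw [← ih x hx]
      exact Pmod_out fun h => hx (hcR _ (ball_subset_closedBall h))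
  have hfc : IsCompact (frontier D) :=
    Metric.isCompact_of_isClosed_isBounded isClosed_frontier
      (hb.closure.subset frontier_subset_closure)
  obtain ⟨M, hM⟩ := hfc.exists_bound_of_continuousOn (hs0.1.mono (subset_univ _))
  have hbd : ∀ n, ∀ z ∈ D, s n z ≤ M := by
    intro n z hz
    refine max_principle' hD hb ((hsub n).mono (subset_univ _)) ((hsub n).1.mono (subset_univ _))
      (m := M) ?_ z (subset_closure hz)
    intro x hx
    rw [hout n x (by rw [hD.frontier_eq] at hx; exact hx.2)]
    exact (le_abs_self _).trans (hM x hx)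
  set u : ℂ → ℝ := fun z => ⨆ n, s n z with hu
  have hlim : ∀ z ∈ D, Tendsto (fun n => s n z) atTop (𝓝 (u z)) := fun z hz =>
    tendsto_atTop_ciSup (hmono z) ⟨M, by rintro _ ⟨n, rfl⟩; exact hbd n z hz⟩
  refine ⟨u, ?_, ?_, ?_⟩
  · apply harm_of_holo
    intro z hz
    obtain ⟨k, hk⟩ := hcov z hz
    have hsD : sphere (c k) (R k) ⊆ D := sphere_subset_closedBall.trans (hcR k)
    have hcm : ∀ θ, circleMap (c k) (R k) θ ∈ sphere (c k) (R k) :=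
      fun θ => circleMap_mem_sphere _ (hR k).le θ
    have hcont : ∀ n, Continuous fun θ => s n (circleMap (c k) (R k) θ) := fun n =>
      (continuousOn_univ.1 (hsub n).1).comp (continuous_circleMap _ _)
    -- bound
    obtain ⟨m, hm⟩ := (isCompact_sphere (c k) (R k)).exists_bound_of_continuousOn
      (hs0.1.mono (subset_univ _))
    have hbound : ∀ n, ∀ x ∈ sphere (c k) (R k), |s n x| ≤ max m M := by
      intro n x hx
      rw [abs_le]
      constructor
      · have h1 := hm x hx
        rw [Real.norm_eq_abs] at h1
        have h2 := hmono x (Nat.zero_le n)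
        have h3 : s 0 x = s0 x := rfl
        have := neg_abs_le (s0 x)
        have := le_max_left m M
        simp only at h2
        linarith
      · exact (hbd n x (hsD hx)).trans (le_max_right _ _)
    have humeas : Measurable fun θ => u (circleMap (c k) (R k) θ) := by
      refine measurable_of_tendsto_metrizable (fun n => (hcont n).measurable) ?_
      rw [tendsto_pi_nhds]
      intro θ
      exact hlim _ (hsD (hcm θ))
    have hub : ∀ x ∈ sphere (c k) (R k), |u x| ≤ max m M := by
      intro x hx
      exact le_of_tendsto ((hlim x (hsD hx)).abs) (Eventually.of_forall fun n => hbound n x hx)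
    have huci : CircleIntegrable u (c k) (R k) := by
      unfold CircleIntegrable
      refine IntervalIntegrable.mono_fun' (g := fun _ => max m M) intervalIntegrable_const
        humeas.aestronglyMeasurable ?_
      exact Eventually.of_forall fun θ => hub _ (hcm θ)
    have hPI : ∀ w ∈ ball (c k) (R k), u w = PI u (c k) (R k) w := by
      intro w hw
      have h1 : Tendsto (fun j => s (Nat.pair k j + 1) w) atTop (𝓝 (u w)) := by
        refine (hlim w (hcR k (ball_subset_closedBall hw))).comp (g := fun n => s n w)
          (f := fun j => Nat.pair k j + 1) ?_
        refine tendsto_atTop_mono (fun j => ?_) tendsto_id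
        exact (Nat.right_le_pair k j).trans (Nat.le_succ _)
      have h2 : ∀ j, s (Nat.pair k j + 1) w = PI (s (Nat.pair k j)) (c k) (R k) w := by
        intro j
        have : s (Nat.pair k j + 1) = Pmod (s (Nat.pair k j)) (c k) (R k) := by
          simp only [hs, bal, Nat.unpair_pair]
        rw [this, Pmod_in hw]
      have h3 : Tendsto (fun j => PI (s (Nat.pair k j)) (c k) (R k) w) atTop
          (𝓝 (PI u (c k) (R k) w)) := by
        unfold PI circleAverage
        apply Tendsto.const_smul
        obtain ⟨C, hC⟩ := (isCompact_sphere (c k) (R k)).exists_bound_of_continuousOn (pk_cont hw)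
        have hpc : Continuous fun θ => poissonKernel (c k) w (circleMap (c k) (R k) θ) :=
          (pk_cont hw).comp_continuous (continuous_circleMap _ _) hcm
        apply intervalIntegral.tendsto_integral_filter_of_dominated_convergence
          (fun _ => C * max m M)
        · exact Eventually.of_forall fun j => (hpc.mul (hcont _)).aestronglyMeasurable
        · refine Eventually.of_forall fun j => Eventually.of_forall fun θ _ => ?_
          rw [norm_mul]
          exact mul_le_mul (hC _ (hcm θ)) (hbound _ _ (hcm θ)) (norm_nonneg _)
            ((norm_nonneg _).trans (hC _ (hcm θ)))
        · exact intervalIntegrable_const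
        · refine Eventually.of_forall fun θ _ => ?_
          apply Tendsto.const_mul
          refine (hlim _ (hsD (hcm θ))).comp ?_
          exact tendsto_atTop_mono (fun j => Nat.right_le_pair k j) tendsto_id
      exact tendsto_nhds_unique (h1.congr h2) h3
    obtain ⟨G, hG, hGu⟩ := PI_holo' huci
    obtain ⟨r, hr, hrb⟩ := Metric.isOpen_iff.1 (isOpen_ball (x := c k) (ε := R k)) z hk
    exact ⟨r, hr, G, hG.mono hrb, fun w hw => (hPI w (hrb hw)).trans (hGu w (hrb hw))⟩
  · intro z hz
    exact (hmono z).ge_of_tendsto (hlim z hz) 0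
  · intro z hz b hb
    exact le_of_tendsto (hlim z hz) (Eventually.of_forall fun n => hb _ (hsub n) (hout n))

def Barrier (D : Set ℂ) (x0 : ℂ) : Prop :=
  ∀ r > 0, ∀ ε > 0, ∃ w : ℂ → ℝ, Harm w D ∧ (∀ z ∈ D, 0 ≤ w z) ∧
    (∀ z ∈ D, r ≤ ‖z - x0‖ → 1 ≤ w z) ∧ ∀ᶠ z in 𝓝[D] x0, w z < ε

lemma barrier_bound {D : Set ℂ} (hD : IsOpen D) (hb : Bornology.IsBounded D)
    {s0 : ℂ → ℝ} (hs0 : SubM s0 univ) {x0 : ℂ} (hB : Barrier D x0) {η : ℝ} (hη : 0 < η) :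
    ∀ᶠ z in 𝓝[D] x0, ∀ s : ℂ → ℝ, SubM s univ → (∀ x, x ∉ D → s x = s0 x) →
      s z ≤ s0 x0 + η := by
  have hfc : IsCompact (frontier D) :=
    Metric.isCompact_of_isClosed_isBounded isClosed_frontier
      (hb.closure.subset frontier_subset_closure)
  obtain ⟨M, hM⟩ := hfc.exists_bound_of_continuousOn (hs0.1.mono (subset_univ _))
  have hcs : Continuous s0 := continuousOn_univ.1 hs0.1
  obtain ⟨ρ, hρ, hρs⟩ := Metric.continuousAt_iff.1 (hcs.continuousAt (x := x0)) (η / 2)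
    (by linarith)
  set K := max (M - s0 x0) 0 with hK
  have hK0 : 0 ≤ K := le_max_right _ _
  have hK1 : M - s0 x0 ≤ K := le_max_left _ _
  obtain ⟨w, hw, hw0, hw1, hwε⟩ := hB (ρ / 2) (by linarith) (η / (2 * (K + 1))) (by positivity)
  filter_upwards [hwε, self_mem_nhdsWithin] with z hz hzD
  intro s hs hso
  have key : ∀ z ∈ D, s z + -K * w z ≤ s0 x0 + η / 2 := by
    have hsub : SubM (fun z => s z + -K * w z) D :=
      (hs.mono (subset_univ _)).add hD (hw.smul (-K)).subM
    refine max_principle hD hb hsub ?_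
    intro x hx ε hε
    have hxD : x ∉ D := by rw [hD.frontier_eq] at hx; exact hx.2
    have hsx := hso x hxD
    have hscx : Tendsto s (𝓝[D] x) (𝓝 (s x)) :=
      (continuousOn_univ.1 hs.1).continuousAt.continuousWithinAt
    by_cases hxx : dist x x0 < ρ
    · have h1 := hρs hxx
      rw [Real.dist_eq, abs_lt] at h1
      have : s x < s0 x0 + η / 2 := by rw [hsx]; linarith [h1.2]
      filter_upwards [hscx.eventually_lt_const this, self_mem_nhdsWithin] with y hy hyD
      have := hw0 y hyD
      nlinarith
    · have h2 : s x < s0 x0 + K + ε := by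
        have := hM x hx
        rw [hsx]
        have := (le_abs_self _).trans this
        linarith
      have h3 : ∀ᶠ y in 𝓝[D] x, dist y x < ρ / 2 :=
        mem_nhdsWithin_of_mem_nhds (ball_mem_nhds x (by linarith))
      filter_upwards [hscx.eventually_lt_const h2, self_mem_nhdsWithin, h3] with y hy hyD hy3
      have h4 : ρ / 2 ≤ ‖y - x0‖ := by
        rw [← dist_eq_norm]
        have := dist_triangle_left x x0 y
        push Not at hxx
        linarith
      have := hw1 y hyD h4
      nlinarith
  have h1 := key z hzD
  have h2 : K * w z ≤ η / 2 := by
    have : K * w z ≤ (K + 1) * (η / (2 * (K + 1))) := by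
      have := hw0 z hzD
      nlinarith
    have h3 : (K + 1) * (η / (2 * (K + 1))) = η / 2 := by field_simp
    linarith
  linarith

end JS

namespace JS
open Set Filter Topology Metric Real MeasureTheory

lemma abs_log_le {a b x : ℝ} (ha : 0 < a) (h1 : a ≤ x) (h2 : x ≤ b) :
    |log x| ≤ |log a| + |log b| := by
  have h3 := Real.log_le_log ha h1
  have h4 := Real.log_le_log (ha.trans_le h1) h2
  rw [abs_le]
  constructor
  · have := neg_abs_le (log a); have := abs_nonneg (log b); linarith
  · have := le_abs_self (log b); have := abs_nonneg (log a); linarith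

lemma dist_ge_of_ball {D : Set ℂ} {z y : ℂ} {δ : ℝ} (h : ball z δ ⊆ D) (hy : y ∉ D) :
    δ ≤ ‖z - y‖ := by
  by_contra hlt
  push Not at hlt
  exact hy (h (by rw [mem_ball, dist_comm, dist_eq_norm]; exact hlt))

lemma pot_harm {D : Set ℂ} (hD : IsOpen D) {ζ : ℝ → ℂ} (hζ : Measurable ζ) (hζD : ∀ t, ζ t ∉ D)
    {x0 : ℂ} {ρ : ℝ} (hρ : 0 < ρ) (hζn : ∀ t ∈ Icc 0 ρ, ‖ζ t - x0‖ = t) :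
    Harm (fun z => ∫ t in (0:ℝ)..ρ, log ‖z - ζ t‖) D := by
  have hup : ∀ z, ∀ t ∈ Icc 0 ρ, ‖z - ζ t‖ ≤ ‖z - x0‖ + ρ := by
    intro z t ht
    calc ‖z - ζ t‖ = ‖(z - x0) - (ζ t - x0)‖ := by congr 1; ring
      _ ≤ ‖z - x0‖ + ‖ζ t - x0‖ := norm_sub_le _ _
      _ ≤ _ := by rw [hζn t ht]; linarith [ht.2]
  have hI : ∀ t ∈ uIoc 0 ρ, t ∈ Icc 0 ρ := by
    intro t ht; rw [uIoc_of_le hρ.le] at ht; exact ⟨ht.1.le, ht.2⟩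
  constructor
  · intro z0 hz0
    apply ContinuousAt.continuousWithinAt
    obtain ⟨δ, hδ, hb⟩ := Metric.isOpen_iff.1 hD z0 hz0
    refine intervalIntegral.continuousAt_of_dominated_interval
      (bound := fun _ => |log (δ / 2)| + |log (‖z0 - x0‖ + δ + ρ)|) ?_ ?_ ?_ ?_
    · refine Eventually.of_forall fun z => Measurable.aestronglyMeasurable ?_
      exact Real.measurable_log.comp (measurable_norm.comp (measurable_const.sub hζ))
    · filter_upwards [ball_mem_nhds z0 (half_pos hδ)] with z hz
      refine Eventually.of_forall fun t ht => ?_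
      rw [mem_ball, dist_eq_norm] at hz
      apply abs_log_le (half_pos hδ)
      · have h1 := dist_ge_of_ball hb (hζD t)
        have h2 : ‖z0 - ζ t‖ ≤ ‖z - ζ t‖ + ‖z - z0‖ := by
          have := norm_sub_le (z - ζ t) (z - z0)
          rwa [sub_sub_sub_cancel_left] at this
        linarith
      · have h1 := hup z t (hI t ht)
        have h2 : ‖z - x0‖ ≤ ‖z - z0‖ + ‖z0 - x0‖ := by
          have := norm_add_le (z - z0) (z0 - x0)
          rwa [sub_add_sub_cancel] at this
        linarith
    · exact intervalIntegrable_const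
    · refine Eventually.of_forall fun t _ => ?_
      apply ContinuousAt.log (by fun_prop)
      rw [norm_ne_zero_iff, sub_ne_zero]
      rintro rfl
      exact hζD t hz0
  · intro z hz
    obtain ⟨δ, hδ, hb⟩ := Metric.isOpen_iff.1 hD z hz
    filter_upwards [Ioo_mem_nhdsGT hδ] with r hr
    have hmean : ∀ t, circleAverage (fun x => log ‖x - ζ t‖) z r = log ‖z - ζ t‖ := by
      intro t
      have h1 := dist_ge_of_ball hb (hζD t)
      rw [circleAverage_log_norm_sub_const_eq_log_radius_add_posLog hr.1.ne',
        Real.posLog_eq_log, Real.log_mul (inv_ne_zero hr.1.ne') (by linarith), Real.log_inv]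
      · ring
      · rw [abs_of_nonneg (by have := hr.1; positivity), inv_mul_eq_div, le_div_iff₀ hr.1]
        linarith [hr.2]
    have hm2 : ∀ t, log ‖z - ζ t‖ = (2 * π)⁻¹ * ∫ θ in (0:ℝ)..2 * π,
        log ‖circleMap z r θ - ζ t‖ := fun t => (hmean t).symm
    rw [circleAverage, smul_eq_mul]
    simp_rw [hm2]
    rw [intervalIntegral.integral_const_mul]
    congr 1
    apply intervalIntegral_intervalIntegral_swap
    have hfin : (volume.prod volume) ((uIoc 0 ρ) ×ˢ (uIoc 0 (2 * π))) < ⊤ := by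
      rw [Measure.prod_prod]
      simp [uIoc, ENNReal.mul_lt_top_iff]
    refine Measure.integrableOn_of_bounded (M := |log (δ - r)| + |log (‖z - x0‖ + r + ρ)|)
      hfin.ne ?_ ?_
    · apply Measurable.aestronglyMeasurable
      apply Real.measurable_log.comp (measurable_norm.comp _)
      exact ((continuous_circleMap z r).measurable.comp measurable_snd).sub (hζ.comp measurable_fst)
    · refine (ae_restrict_mem (measurableSet_uIoc.prod measurableSet_uIoc)).mono ?_
      rintro ⟨t, θ⟩ ⟨ht, _⟩
      simp only [Function.uncurry]
      have h0 : ‖circleMap z r θ - z‖ = r := by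
        rw [← dist_eq_norm]; exact circleMap_mem_sphere z hr.1.le θ
      apply abs_log_le (by linarith [hr.2])
      · have h1 := dist_ge_of_ball hb (hζD t)
        have h2 : ‖z - ζ t‖ ≤ ‖circleMap z r θ - ζ t‖ + ‖circleMap z r θ - z‖ := by
          have := norm_sub_le (circleMap z r θ - ζ t) (circleMap z r θ - z)
          rwa [sub_sub_sub_cancel_left] at this
        linarith
      · have h1 := hup (circleMap z r θ) t (hI t ht)
        have h2 : ‖circleMap z r θ - x0‖ ≤ ‖circleMap z r θ - z‖ + ‖z - x0‖ := by
          have := norm_add_le (circleMap z r θ - z) (z - x0)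
          rwa [sub_add_sub_cancel] at this
        linarith

lemma log_ineq {d ρ : ℝ} (hρ : 0 < ρ) (hd : 0 ≤ d) :
    -(2 * ρ) + ρ * log ρ ≤ ∫ t in (0:ℝ)..ρ, log (d - t) := by
  rw [intervalIntegral.integral_comp_sub_left, integral_log, sub_zero]
  -- goal in terms of d log d - (d-ρ) log (d-ρ)
  have hx : ∀ x : ℝ, 0 ≤ x → x * log x ≥ x * log ρ + x - ρ := by
    intro x hx
    rcases hx.eq_or_lt with rfl | hx
    · simp; linarith
    · have h := Real.one_sub_inv_le_log_of_pos (div_pos hx hρ)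
      rw [Real.log_div hx.ne' hρ.ne'] at h
      have h2 : x * (1 - (x / ρ)⁻¹) = x - ρ := by field_simp
      nlinarith [mul_le_mul_of_nonneg_left h hx.le]
  by_cases h : d ≤ ρ
  · have h1 := hx d hd
    have h2 := hx (ρ - d) (by linarith)
    have h3 : log (d - ρ) = log (ρ - d) := by rw [← Real.log_neg_eq_log]; congr 1; ring
    rw [h3]
    nlinarith
  · push Not at h
    have h1 : log (d - ρ) ≤ log d := Real.log_le_log (by linarith) (by linarith)
    have h2 : log ρ ≤ log d := Real.log_le_log hρ h.le
    have h3 : (d - ρ) * log (d - ρ) ≤ (d - ρ) * log d :=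
      mul_le_mul_of_nonneg_left h1 (by linarith)
    nlinarith

theorem exists_selection {γ : ℝ → ℂ} (hγ : Continuous γ) {θ1 : ℝ} (hθ1 : 0 ≤ θ1) :
    ∃ ζ : ℝ → ℂ, Measurable ζ ∧ (∀ t, ζ t ∈ range γ) ∧
      ∀ t ∈ Icc 0 ‖γ θ1 - γ 0‖, ‖ζ t - γ 0‖ = t := by
  set g : ℝ → ℝ := fun θ => ‖γ θ - γ 0‖ with hg
  have hgc : Continuous g := by fun_prop
  set S : ℝ → Set ℝ := fun t => {θ | θ ∈ Icc 0 θ1 ∧ min t (g θ1) ≤ g θ} with hS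
  have hSne : ∀ t, (S t).Nonempty := fun t => ⟨θ1, ⟨hθ1, le_rfl⟩, min_le_right _ _⟩
  have hSb : ∀ t, BddBelow (S t) := fun t => ⟨0, fun θ h => h.1.1⟩
  have hSc : ∀ t, IsClosed (S t) := fun t =>
    isClosed_Icc.inter (isClosed_le continuous_const hgc)
  set p : ℝ → ℝ := fun t => sInf (S t) with hp
  have hpm : ∀ t, p t ∈ S t := fun t => (hSc t).csInf_mem (hSne t) (hSb t)
  have hmono : Monotone p := by
    intro t t' htt
    apply csInf_le_csInf (hSb t) (hSne t')
    intro θ hθ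
    exact ⟨hθ.1, (min_le_min_right _ htt).trans hθ.2⟩
  refine ⟨fun t => γ (p t), hγ.measurable.comp hmono.measurable, fun t => mem_range_self _, ?_⟩
  intro t ht
  have hmin : min t (g θ1) = t := min_eq_left ht.2
  apply le_antisymm
  · by_contra hlt
    push Not at hlt
    have hg0 : g 0 = 0 := by simp [hg]
    have hivt := intermediate_value_Icc (hpm t).1.1 hgc.continuousOn (f := g)
    obtain ⟨θ, hθ, hθt⟩ := hivt ⟨by rw [hg0]; exact ht.1, hlt.le⟩
    have hθS : θ ∈ S t := ⟨⟨hθ.1, hθ.2.trans (hpm t).1.2⟩, by rw [hmin, hθt]⟩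
    have h1 : p t ≤ θ := csInf_le (hSb t) hθS
    have h2 : θ = p t := le_antisymm hθ.2 h1
    rw [h2] at hθt
    simp only [hg] at hθt
    linarith
  · have := (hpm t).2
    rwa [hmin] at this

theorem barrier_of_curve {D : Set ℂ} (hD : IsOpen D) {γ : ℝ → ℂ} (hγ : Continuous γ)
    (hγD : ∀ θ, γ θ ∉ D) {θ1 : ℝ} (hθ1 : 0 ≤ θ1) (hne : γ θ1 ≠ γ 0) : Barrier D (γ 0) := by
  intro r hr ε hε
  obtain ⟨ζ, hζm, hζr, hζn⟩ := exists_selection hγ hθ1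
  have hζD : ∀ t, ζ t ∉ D := by
    intro t; obtain ⟨θ, h⟩ := hζr t; rw [← h]; exact hγD θ
  have hρ1 : 0 < ‖γ θ1 - γ 0‖ := norm_pos_iff.2 (sub_ne_zero.2 hne)
  -- choose ρ
  have htend : Tendsto (fun ρ : ℝ => log ((r - ρ) / ρ)) (𝓝[>] 0) atTop := by
    apply Real.tendsto_log_atTop.comp
    have h1 : Tendsto (fun ρ : ℝ => r - ρ) (𝓝[>] 0) (𝓝 r) := by
      have : Tendsto (fun ρ : ℝ => r - ρ) (𝓝[>] 0) (𝓝 (r - 0)) :=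
        (continuous_const.sub continuous_id).continuousAt.continuousWithinAt
      simpa using this
    exact (Filter.Tendsto.pos_mul_atTop hr h1 tendsto_inv_nhdsGT_zero)
  obtain ⟨ρ, hρA, hρ0, hρ2⟩ := ((htend.eventually_ge_atTop (4 / ε)).and
    (Ioo_mem_nhdsGT (lt_min hρ1 hr))).exists
  have hρle : ρ ≤ ‖γ θ1 - γ 0‖ := (hρ2.trans_le (min_le_left _ _)).le
  have hρr : ρ < r := hρ2.trans_le (min_le_right _ _)
  have hζn' : ∀ t ∈ Icc 0 ρ, ‖ζ t - γ 0‖ = t := fun t ht => hζn t ⟨ht.1, ht.2.trans hρle⟩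
  set x0 := γ 0
  set V : ℂ → ℝ := fun z => ∫ t in (0:ℝ)..ρ, log ‖z - ζ t‖ with hV
  have hVh : Harm V D := pot_harm hD hζm hζD hρ0 hζn'
  set A := log ((r - ρ) / ρ) with hA
  have hA0 : 0 < A + 2 := by have : 0 < 4 / ε := by positivity
                             linarith
  have h_integ : ∀ z ∈ D, IntervalIntegrable (fun t => log ‖z - ζ t‖) volume 0 ρ := by
    intro z hz
    obtain ⟨δ, hδ, hb⟩ := Metric.isOpen_iff.1 hD z hz
    refine IntervalIntegrable.mono_fun' (g := fun _ => |log δ| + |log (‖z - x0‖ + ρ)|)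
      intervalIntegrable_const
      (Real.measurable_log.comp (measurable_norm.comp
        (measurable_const.sub hζm))).aestronglyMeasurable ?_
    refine (ae_restrict_mem measurableSet_uIoc).mono ?_
    intro t ht
    rw [uIoc_of_le hρ0.le] at ht
    apply abs_log_le hδ (dist_ge_of_ball hb (hζD t))
    have := norm_sub_le (z - x0) (ζ t - x0)
    rw [sub_sub_sub_cancel_right, hζn' t ⟨ht.1.le, ht.2⟩] at this
    linarith [ht.2]
  have hlow : ∀ z ∈ D, -(2 * ρ) + ρ * log ρ ≤ V z := by
    intro z hz
    refine (log_ineq hρ0 (norm_nonneg (z - x0))).trans ?_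
    apply intervalIntegral.integral_mono_ae_restrict hρ0.le
    · have := (intervalIntegral.intervalIntegrable_log' (a := ‖z - x0‖) (b := ‖z - x0‖ - ρ)).comp_sub_left
        (‖z - x0‖)
      simpa using this
    · exact h_integ z hz
    · have hae : ∀ᵐ t ∂(volume.restrict (Icc 0 ρ)), t ≠ ‖z - x0‖ :=
        ae_restrict_of_ae (Measure.ae_ne volume _)
      filter_upwards [hae, ae_restrict_mem measurableSet_Icc] with t h0 ht
      rw [← Real.log_abs]
      apply Real.log_le_log (abs_pos.2 (sub_ne_zero.2 h0.symm))
      have := abs_norm_sub_norm_le (z - x0) (ζ t - x0)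
      rwa [sub_sub_sub_cancel_right, hζn' t ht] at this
  have hfar : ∀ z ∈ D, r ≤ ‖z - x0‖ → ρ * log (r - ρ) ≤ V z := by
    intro z hz hzr
    have : ∫ t in (0:ℝ)..ρ, log (r - ρ) ≤ V z := by
      apply intervalIntegral.integral_mono_on hρ0.le intervalIntegrable_const (h_integ z hz)
      intro t ht
      apply Real.log_le_log (by linarith)
      have := norm_sub_norm_le (z - x0) (ζ t - x0)
      rw [sub_sub_sub_cancel_right, hζn' t ht] at this
      linarith [ht.2]
    simpa using this
  have hnear : ∀ z ∈ D, ‖z - x0‖ ≤ ρ → V z ≤ ρ * log (2 * ρ) := by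
    intro z hz hzr
    have : V z ≤ ∫ t in (0:ℝ)..ρ, log (2 * ρ) := by
      apply intervalIntegral.integral_mono_on hρ0.le (h_integ z hz) intervalIntegrable_const
      intro t ht
      have hzt : 0 < ‖z - ζ t‖ := norm_pos_iff.2 (sub_ne_zero.2 fun h => hζD t (h ▸ hz))
      apply Real.log_le_log hzt
      have := norm_sub_le (z - x0) (ζ t - x0)
      rw [sub_sub_sub_cancel_right, hζn' t ht] at this
      linarith [ht.2]
    simpa using this
  have hAr : log (r - ρ) = A + log ρ := by
    rw [hA, Real.log_div (by linarith) hρ0.ne']; ring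
  refine ⟨fun z => (A + 2)⁻¹ * (ρ⁻¹ * V z + (2 - log ρ)),
    ((hVh.smul _).add hD (Harm.const _ D)).smul _, ?_, ?_, ?_⟩
  · intro z hz
    have h1 := hlow z hz
    have h2 : ρ⁻¹ * (-(2 * ρ) + ρ * log ρ) ≤ ρ⁻¹ * V z := by gcongr
    have h3 : ρ⁻¹ * (-(2 * ρ) + ρ * log ρ) = -2 + log ρ := by field_simp
    have : 0 ≤ ρ⁻¹ * V z + (2 - log ρ) := by linarith
    positivity
  · intro z hz hzr
    have h1 := hfar z hz hzr
    have h2 : ρ⁻¹ * (ρ * log (r - ρ)) ≤ ρ⁻¹ * V z := by gcongr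
    have h3 : ρ⁻¹ * (ρ * log (r - ρ)) = log (r - ρ) := by field_simp
    have : A + 2 ≤ ρ⁻¹ * V z + (2 - log ρ) := by linarith
    dsimp only
    rw [inv_mul_eq_div, le_div_iff₀ hA0]
    linarith
  · filter_upwards [mem_nhdsWithin_of_mem_nhds (ball_mem_nhds x0 hρ0), self_mem_nhdsWithin]
      with z hz hzD
    rw [mem_ball, dist_eq_norm] at hz
    have h1 := hnear z hzD hz.le
    have h2 : ρ⁻¹ * V z ≤ ρ⁻¹ * (ρ * log (2 * ρ)) := by gcongr
    have h3 : ρ⁻¹ * (ρ * log (2 * ρ)) = log 2 + log ρ := by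
      rw [Real.log_mul (by norm_num) hρ0.ne']; field_simp
    have h4 : log 2 < 1 := by have := Real.log_two_lt_d9; linarith
    rw [inv_mul_eq_div, div_lt_iff₀ hA0]
    have h5 : ε * (4 / ε) ≤ ε * A := by gcongr
    have h6 : ε * (4 / ε) = 4 := by field_simp
    nlinarith

end JS

namespace JS
open Set Filter Topology Metric Real MeasureTheory

lemma Harm.mean {u : ℂ → ℝ} {D : Set ℂ} (hu : Harm u D) {c : ℂ} {R : ℝ} (hR : 0 < R)
    (hB : closedBall c R ⊆ D) : u c = circleAverage u c R := by
  rw [hu.eq_PI hR hB (mem_ball_self hR)]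
  unfold PI
  apply circleAverage_congr_sphere
  intro x hx
  rw [abs_of_pos hR, mem_sphere, dist_eq_norm] at hx
  have : poissonKernel c c x = 1 := by
    unfold poissonKernel
    simp [hx, hR.ne']
  simp only [this, one_mul]

def Solv (D : Set ℂ) (φ : C(frontier D, ℝ)) : Prop :=
  ∃ u : ℂ → ℝ, Harm u D ∧ ContinuousOn u (closure D) ∧ ∀ x : frontier D, u x = φ x

open Classical in
lemma solv_subM {D : Set ℂ} (hD : IsOpen D) (hb : Bornology.IsBounded D) (hne : D.Nonempty)
    (hB : ∀ x ∈ frontier D, Barrier D x) {s0 : ℂ → ℝ} (hs0 : SubM s0 univ) :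
    ∃ u : ℂ → ℝ, Harm u D ∧ ContinuousOn u (closure D) ∧ ∀ x ∈ frontier D, u x = s0 x := by
  obtain ⟨u, hu, hlo, hup⟩ := balayage hD hb hne hs0
  set U : ℂ → ℝ := fun z => if z ∈ D then u z else s0 z with hU
  have hUin : ∀ z ∈ D, U z = u z := fun z hz => if_pos hz
  have hUout : ∀ z, z ∉ D → U z = s0 z := fun z hz => if_neg hz
  have hc0 : Continuous s0 := continuousOn_univ.1 hs0.1
  have hUh : Harm U D := by
    refine ⟨hu.1.congr hUin, fun z hz => ?_⟩
    filter_upwards [hu.2 z hz, small_ball hD hz] with r h1 h2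
    rw [hUin z hz, h1]
    apply circleAverage_congr_sphere
    intro x hx
    exact (hUin x (sphere_sub h2.1 h2.2 hx)).symm
  refine ⟨U, hUh, ?_, ?_⟩
  · intro x hx
    by_cases hxD : x ∈ D
    · exact (hUh.1.continuousAt (hD.mem_nhds hxD)).continuousWithinAt
    · have hxf : x ∈ frontier D := by rw [hD.frontier_eq]; exact ⟨hx, hxD⟩
      apply ContinuousAt.continuousWithinAt
      unfold ContinuousAt
      rw [hUout x hxD, Metric.tendsto_nhds]
      intro ε hε
      have h1 := barrier_bound hD hb hs0 (hB x hxf) (half_pos hε)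
      rw [eventually_nhdsWithin_iff] at h1
      have h2 := Metric.tendsto_nhds.1 (hc0.continuousAt (x := x)) ε hε
      filter_upwards [h1, h2] with z hz1 hz2
      by_cases hzD : z ∈ D
      · rw [hUin z hzD]
        have h3 := hup z hzD _ (hz1 hzD)
        have h4 := hlo z hzD
        rw [Real.dist_eq, abs_lt] at *
        constructor <;> linarith
      · rw [hUout z hzD]; exact hz2
  · intro x hx
    rw [hD.frontier_eq] at hx
    exact hUout x hx.2

lemma solv_closed {D : Set ℂ} (hD : IsOpen D) (hb : Bornology.IsBounded D)
    [CompactSpace (frontier D)] :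
    IsClosed {φ | Solv D φ} := by
  rw [← isSeqClosed_iff_isClosed]
  intro φ φ0 hφ hlim
  choose u hu huc hub using hφ
  have hdiff : ∀ n m, ∀ z ∈ closure D, u n z - u m z ≤ dist (φ n) (φ m) := by
    intro n m z hz
    have := max_principle' hD hb ((hu n).add hD (hu m).neg).subM ((huc n).add (huc m).neg)
      (m := dist (φ n) (φ m)) (by
        intro x hx
        simp only [hub n ⟨x, hx⟩, hub m ⟨x, hx⟩]
        have := ContinuousMap.dist_apply_le_dist (f := φ n) (g := φ m) ⟨x, hx⟩
        rw [Real.dist_eq] at this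
        have := le_abs_self (φ n ⟨x, hx⟩ - φ m ⟨x, hx⟩)
        linarith) z hz
    linarith
  have habs : ∀ n m, ∀ z ∈ closure D, |u n z - u m z| ≤ dist (φ n) (φ m) := by
    intro n m z hz
    rw [abs_le]
    have h1 := hdiff n m z hz
    have h2 := hdiff m n z hz
    rw [dist_comm] at h2
    constructor <;> linarith
  have hcau : CauchySeq φ := hlim.cauchySeq
  have hex : ∀ z, ∃ l, z ∈ closure D → Tendsto (fun n => u n z) atTop (𝓝 l) := by
    intro z
    by_cases hz : z ∈ closure D
    · have : CauchySeq fun n => u n z := by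
        rw [Metric.cauchySeq_iff] at *
        intro ε hε
        obtain ⟨N, hN⟩ := hcau ε hε
        exact ⟨N, fun m hm n hn => lt_of_le_of_lt (habs m n z hz) (hN m hm n hn)⟩
      obtain ⟨l, hl⟩ := cauchySeq_tendsto_of_complete this
      exact ⟨l, fun _ => hl⟩
    · exact ⟨0, fun h => absurd h hz⟩
  choose U hU using hex
  have hUn : ∀ n, ∀ z ∈ closure D, |u n z - U z| ≤ dist (φ n) φ0 := by
    intro n z hz
    refine le_of_tendsto_of_tendsto ((tendsto_const_nhds.sub (hU z hz)).abs)
      (tendsto_const_nhds.dist hlim) (Eventually.of_forall fun m => habs n m z hz)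
  have hd0 : Tendsto (fun n => dist (φ n) φ0) atTop (𝓝 0) := tendsto_iff_dist_tendsto_zero.1 hlim
  have hunif : TendstoUniformlyOn u U atTop (closure D) := by
    rw [Metric.tendstoUniformlyOn_iff]
    intro ε hε
    filter_upwards [hd0.eventually_lt_const hε] with n hn z hz
    rw [dist_comm, Real.dist_eq]
    exact (hUn n z hz).trans_lt hn
  have hUc : ContinuousOn U (closure D) := hunif.continuousOn (Frequently.of_forall huc)
  refine ⟨U, ⟨hUc.mono subset_closure, fun z hz => ?_⟩, hUc, fun x => ?_⟩
  · filter_upwards [small_ball hD hz] with r hr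
    have hcl : closedBall z r ⊆ closure D := hr.2.trans subset_closure
    have hUci : CircleIntegrable U z r := ci hUc hr.1 hcl
    have havg : ∀ n, |circleAverage U z r - u n z| ≤ dist (φ n) φ0 := by
      intro n
      have hm := (hu n).mean hr.1 hr.2
      have hnci : CircleIntegrable (u n) z r := ci (huc n) hr.1 hcl
      have hk : CircleIntegrable (fun _ => dist (φ n) φ0) z r :=
        ContinuousOn.circleIntegrable hr.1.le continuousOn_const
      have h1 : circleAverage U z r ≤ circleAverage (fun x => u n x + dist (φ n) φ0) z r := by
        apply circleAverage_mono hUci (hnci.add hk)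
        intro x hx
        have := hUn n x (hcl (sphere_sub hr.1 Subset.rfl hx))
        rw [abs_le] at this
        simp only [Pi.add_apply]
        linarith [this.1]
      have h2 : circleAverage (u n) z r ≤ circleAverage (fun x => U x + dist (φ n) φ0) z r := by
        apply circleAverage_mono hnci (hUci.add hk)
        intro x hx
        have := hUn n x (hcl (sphere_sub hr.1 Subset.rfl hx))
        rw [abs_le] at this
        simp only [Pi.add_apply]
        linarith [this.2]
      rw [circleAverage_fun_add hnci hk, circleAverage_const, ← hm] at h1
      rw [circleAverage_fun_add hUci hk, circleAverage_const, ← hm] at h2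
      rw [abs_le]; constructor <;> linarith
    have h1 : Tendsto (fun n => |circleAverage U z r - u n z|) atTop
        (𝓝 |circleAverage U z r - U z|) :=
      (tendsto_const_nhds.sub (hU z (subset_closure hz))).abs
    have h2 := le_of_tendsto_of_tendsto h1 hd0 (Eventually.of_forall havg)
    have h3 := abs_nonpos_iff.1 h2
    linarith
  · have h1 := hU x (frontier_subset_closure x.2)
    have h2 : Tendsto (fun n => φ n x) atTop (𝓝 (φ0 x)) :=
      ((continuous_eval_const x).tendsto φ0).comp hlim
    simp only [hub] at h1
    exact tendsto_nhds_unique h1 h2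

theorem dirichlet {D : Set ℂ} (hD : IsOpen D) (hb : Bornology.IsBounded D) (hne : D.Nonempty)
    (hB : ∀ x ∈ frontier D, Barrier D x) (φ : C(frontier D, ℝ)) : Solv D φ := by
  have hfc : IsCompact (frontier D) :=
    Metric.isCompact_of_isClosed_isBounded isClosed_frontier
      (hb.closure.subset frontier_subset_closure)
  have : CompactSpace (frontier D) := isCompact_iff_compactSpace.1 hfc
  set L : Set C(frontier D, ℝ) := {φ | ∃ s t : ℂ → ℝ, SubM s univ ∧ SubM t univ ∧
    ∀ x : frontier D, φ x = s x - t x} with hL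
  have hLS : L ⊆ {φ | Solv D φ} := by
    rintro φ ⟨s, t, hs, ht, h⟩
    obtain ⟨u, h1, h2, h3⟩ := solv_subM hD hb hne hB hs
    obtain ⟨v, h1', h2', h3'⟩ := solv_subM hD hb hne hB ht
    refine ⟨fun z => u z + - v z, h1.add hD h1'.neg, h2.add h2'.neg, fun x => ?_⟩
    simp only [h3 x x.2, h3' x x.2, h x]; ring
  have htop : closure L = ⊤ := by
    apply ContinuousMap.sublattice_closure_eq_top
    · exact ⟨0, fun _ => 0, fun _ => 0, (Harm.const 0 univ).subM, (Harm.const 0 univ).subM,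
        fun x => by simp⟩
    · rintro φ ⟨s, t, hs, ht, h⟩ ψ ⟨s', t', hs', ht', h'⟩
      refine ⟨fun z => s z + s' z, fun z => max (t z + s' z) (t' z + s z),
        hs.add isOpen_univ hs', (ht.add isOpen_univ hs').sup isOpen_univ
          (ht'.add isOpen_univ hs), fun x => ?_⟩
      rw [ContinuousMap.inf_apply, h, h', ← min_sub_sub_left]
      congr 1 <;> ring
    · rintro φ ⟨s, t, hs, ht, h⟩ ψ ⟨s', t', hs', ht', h'⟩
      refine ⟨fun z => max (s z + t' z) (s' z + t z), fun z => t z + t' z,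
        (hs.add isOpen_univ ht').sup isOpen_univ
          (hs'.add isOpen_univ ht), ht.add isOpen_univ ht', fun x => ?_⟩
      rw [ContinuousMap.sup_apply, h, h', ← max_sub_sub_right]
      congr 1 <;> ring
    · intro v x y
      have hharm : ∀ a b : ℂ, SubM (fun z => (a * z + b).re) univ := fun a b =>
        (harm_re isOpen_univ (G := fun z => a * z + b) (by fun_prop)).subM
      have : ∃ a b : ℂ, (a * x + b).re = v x ∧ (x ≠ y → (a * y + b).re = v y) := by
        by_cases hxy : x = y
        · exact ⟨0, v x, by simp, fun h => absurd hxy h⟩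
        · have hne : (y : ℂ) - x ≠ 0 := sub_ne_zero.2 fun h => hxy (Subtype.ext h.symm)
          refine ⟨((v y : ℂ) - v x) / (y - x), v x - ((v y : ℂ) - v x) / (y - x) * x, ?_, ?_⟩
          · simp
          · intro _
            have : ((v y : ℂ) - v x) / (y - x) * y + (v x - ((v y : ℂ) - v x) / (y - x) * x)
                = v y := by field_simp; ring
            rw [this]; simp
      obtain ⟨a, b, h1, h2⟩ := this
      refine ⟨⟨fun z => (a * z + b).re, by fun_prop⟩, ⟨fun z => (a * z + b).re, fun _ => 0,
        hharm a b, (Harm.const 0 univ).subM, fun x => by simp⟩, h1, ?_⟩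
      by_cases hxy : x = y
      · rw [← hxy]; exact h1
      · exact h2 hxy
  have : φ ∈ closure L := by rw [htop]; trivial
  exact (closure_minimal hLS (solv_closed hD hb)) this

end JS

namespace JS
open Set Filter Topology Metric Real MeasureTheory

/-- `g` has a continuous logarithm on `K`. -/
def HasLog (g : ℂ → ℂ) (K : Set ℂ) : Prop :=
  ∃ L : ℂ → ℂ, ContinuousOn L K ∧ ∀ z ∈ K, Complex.exp (L z) = g z

lemma HasLog.mono {g : ℂ → ℂ} {K K' : Set ℂ} (h : HasLog g K) (hK : K' ⊆ K) : HasLog g K' := by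
  obtain ⟨L, hL, hg⟩ := h
  exact ⟨L, hL.mono hK, fun z hz => hg z (hK hz)⟩

lemma exists_log {A : Type*} [TopologicalSpace A] [SimplyConnectedSpace A]
    [LocallyPathConnectedSpace A] (a0 : A) {g : A → ℂ} (hg : Continuous g) (h0 : ∀ a, g a ≠ 0) :
    ∃ L : A → ℂ, Continuous L ∧ ∀ a, Complex.exp (L a) = g a := by
  let G : C(A, {z : ℂ // z ≠ 0}) := ⟨fun a => ⟨g a, h0 a⟩, by fun_prop⟩
  obtain ⟨F, ⟨hF1, hF2⟩, -⟩ := Complex.isCoveringMap_exp.existsUnique_continuousMap_lifts G a0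
    (Complex.log (g a0)) (by apply Subtype.ext; exact Complex.exp_log (h0 a0))
  refine ⟨F, F.continuous, fun a => ?_⟩
  have := congrArg Subtype.val (congrFun hF2 a)
  exact this

lemma log_unique {A : Type*} [TopologicalSpace A] {S : Set A} (hS : IsPreconnected S)
    {L1 L2 : A → ℂ} (h1 : ContinuousOn L1 S) (h2 : ContinuousOn L2 S)
    (h : ∀ a ∈ S, Complex.exp (L1 a) = Complex.exp (L2 a)) :
    ∃ n : ℤ, ∀ a ∈ S, L1 a = L2 a + n * (2 * π * Complex.I) := by
  rcases S.eq_empty_or_nonempty with rfl | ⟨a0, ha0⟩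
  · exact ⟨0, by simp⟩
  have key : ∀ a ∈ S, ∃ n : ℤ, L1 a = L2 a + n * (2 * π * Complex.I) := fun a ha =>
    Complex.exp_eq_exp_iff_exists_int.1 (h a ha)
  have hpi : (2 * π * Complex.I) ≠ 0 := Complex.two_pi_I_ne_zero
  choose! n hn using key
  refine ⟨n a0, fun a ha => ?_⟩
  have hc : ContinuousOn (fun a => ((L1 a - L2 a) / (2 * π * Complex.I)).re) S :=
    Complex.continuous_re.comp_continuousOn ((h1.sub h2).div_const _)
  have hv : ∀ a ∈ S, ((L1 a - L2 a) / (2 * π * Complex.I)).re = n a := by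
    intro a ha
    rw [hn a ha]
    simp [hpi]
  have hc' : ContinuousOn (fun a => ((n a : ℤ) : ℝ)) S := hc.congr (fun a ha => (hv a ha).symm)
  have hc2 : ContinuousOn n S := by
    rw [Int.isClosedEmbedding_coe_real.isInducing.continuousOn_iff]
    exact hc'
  have := hS.constant hc2 ha ha0
  rw [hn a ha, this]

lemma no_log_circle {p : ℂ} {R : ℝ} (hR : 0 < R) {m : ℤ} (hm : m ≠ 0) :
    ¬ HasLog (fun z => (z - p) ^ m) (sphere p R) := by
  rintro ⟨L, hL, hg⟩
  have hmem : ∀ θ : ℝ, p + R * Complex.exp (θ * Complex.I) ∈ sphere p R := by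
    intro θ
    simp [Complex.norm_exp_ofReal_mul_I, abs_of_pos hR]
  obtain ⟨n, hn⟩ := log_unique (A := ℝ) (S := univ) isPreconnected_univ
    (L1 := fun θ : ℝ => L (p + R * Complex.exp (θ * Complex.I)))
    (L2 := fun θ : ℝ => m * (Complex.log R + θ * Complex.I))
    (by
      apply hL.comp (by fun_prop)
      intro θ _
      exact hmem θ) (by fun_prop) (by
      intro θ _
      rw [hg _ (hmem θ)]
      simp only [add_sub_cancel_left]
      rw [Complex.exp_int_mul, Complex.exp_add, Complex.exp_log (by exact_mod_cast hR.ne')])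
  have h0 := hn 0 trivial
  have h1 := hn (2 * π) trivial
  simp only [Complex.ofReal_mul, Complex.ofReal_ofNat, Complex.exp_two_pi_mul_I] at h1
  simp only [Complex.ofReal_zero, zero_mul, Complex.exp_zero] at h0
  rw [h0] at h1
  have : (m : ℂ) * (2 * π * Complex.I) = 0 := by linear_combination -h1
  simp [hm, Real.pi_ne_zero] at this

/-- T2: no log on the frontier of a bounded open set. -/
lemma no_log_frontier {U : Set ℂ} (hU : IsOpen U) (hb : Bornology.IsBounded U) {p : ℂ}
    (hp : p ∈ U) {g : ℂ → ℂ} (hg : ContinuousOn g (closure U)) (hg0 : ∀ z ∈ closure U, g z ≠ 0)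
    {m : ℤ} (hm : m ≠ 0) : ¬ HasLog (fun z => (z - p) ^ m * g z) (frontier U) := by
  rintro ⟨L, hL, hLg⟩
  obtain ⟨L', hL'⟩ := ContinuousMap.exists_restrict_eq (isClosed_frontier (s := U))
    (⟨(frontier U).domRestrict L, hL.domRestrict⟩ : C(frontier U, ℂ))
  have hLL : ∀ z ∈ frontier U, L' z = L z := by
    intro z hz
    have := congrArg (fun F => F ⟨z, hz⟩) hL'
    exact this
  classical
  let F : ℂ → ℂ := U.piecewise (fun z => Complex.exp (L' z) / g z) (fun z => (z - p) ^ m)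
  have hFc : Continuous F := by
    apply continuous_piecewise
    · intro z hz
      rw [hLL z hz, hLg z hz, mul_div_cancel_right₀]
      exact hg0 z (frontier_subset_closure hz)
    · exact (Complex.continuous_exp.comp L'.continuous).continuousOn.div hg hg0
    · apply ContinuousOn.zpow₀ (by fun_prop)
      intro z hz
      left
      rw [sub_ne_zero]
      rintro rfl
      rw [hU.isClosed_compl.closure_eq] at hz
      exact hz hp
  have hF0 : ∀ z, F z ≠ 0 := by
    intro z
    by_cases hz : z ∈ U
    · simp only [F, piecewise_eq_of_mem _ _ _ hz]
      exact div_ne_zero (Complex.exp_ne_zero _) (hg0 z (subset_closure hz))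
    · simp only [F, piecewise_eq_of_notMem _ _ _ hz]
      apply zpow_ne_zero
      rw [sub_ne_zero]
      rintro rfl
      exact hz hp
  obtain ⟨M, hM, hMF⟩ := exists_log (0 : ℂ) hFc hF0
  obtain ⟨R, hR, hUR⟩ := hb.subset_ball_lt 0 p
  apply no_log_circle (p := p) hR hm
  refine ⟨M, hM.continuousOn, fun z hz => ?_⟩
  rw [hMF]
  simp only [F]
  rw [piecewise_eq_of_notMem]
  intro hzU
  have := hUR hzU
  simp only [mem_ball, mem_sphere] at this hz
  linarith

/-- T1 -/
lemma log_quot {K C : Set ℂ} (hK : IsCompact K) (hC : IsPreconnected C) (hCK : Disjoint C K)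
    {p q : ℂ} (hp : p ∈ C) (hq : q ∈ C) : HasLog (fun z => (z - p) / (z - q)) K := by
  have hne : ∀ x ∈ C, ∀ z ∈ K, z - x ≠ 0 := by
    intro x hx z hz h
    rw [sub_eq_zero] at h
    exact Set.disjoint_left.1 hCK hx (h ▸ hz)
  refine hC.induction₂' (fun p q => HasLog (fun z => (z - p) / (z - q)) K) ?_ ?_ hp hq
  · intro x hx
    have hxK : x ∈ Kᶜ := Set.disjoint_left.1 hCK hx
    obtain ⟨r, hr, hrK⟩ := Metric.isOpen_iff.1 hK.isClosed.isOpen_compl x hxK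
    have h1 : ∀ᶠ y in 𝓝[C] x, y ∈ ball x r := nhdsWithin_le_nhds (ball_mem_nhds x hr)
    have h2 : ∀ᶠ y in 𝓝[C] x, y ∈ C := self_mem_nhdsWithin
    filter_upwards [h1, h2] with y hy hyC
    have hs : ∀ z ∈ K, (z - y) / (z - x) ∈ Complex.slitPlane := by
      intro z hz
      have hzr : r ≤ ‖z - x‖ := by
        by_contra! hlt
        exact hrK (by rw [mem_ball, dist_eq_norm]; exact hlt) hz
      have hyx : ‖y - x‖ < r := by rwa [mem_ball, dist_eq_norm] at hy
      have e : (z - y) / (z - x) = 1 - (y - x) / (z - x) := by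
        rw [eq_sub_iff_add_eq, ← add_div, sub_add_sub_cancel, div_self (hne x hx z hz)]
      have : ‖(y - x) / (z - x)‖ < 1 := by
        rw [norm_div, div_lt_one (by linarith)]
        linarith
      left
      rw [e]
      have := (Complex.abs_re_le_norm ((y - x) / (z - x)))
      have := le_abs_self ((y - x) / (z - x)).re
      simp only [Complex.sub_re, Complex.one_re]
      linarith
    have hc : ContinuousOn (fun z => Complex.log ((z - y) / (z - x))) K := by
      apply ContinuousOn.clog _ hs
      exact ContinuousOn.div (by fun_prop) (by fun_prop) (fun z hz => hne x hx z hz)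
    constructor
    · refine ⟨_, hc.neg, fun z hz => ?_⟩
      rw [Pi.neg_apply, Complex.exp_neg, Complex.exp_log (Complex.slitPlane_ne_zero (hs z hz)), inv_div]
    · exact ⟨_, hc, fun z hz => Complex.exp_log (Complex.slitPlane_ne_zero (hs z hz))⟩
  · rintro x y z hx hy hz ⟨L1, h1, h1'⟩ ⟨L2, h2, h2'⟩
    refine ⟨_, h1.add h2, fun w hw => ?_⟩
    rw [Pi.add_apply, Complex.exp_add, h1' w hw, h2' w hw]
    have := hne y hy w hw
    have := hne z hz w hw
    field_simp

/-- Descent along a quotient of a compact set. -/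
lemma descend {K : Set ℝ} (hK : IsCompact K) {γ : ℝ → ℂ} (hγ : ContinuousOn γ K) {M : ℝ → ℂ}
    (hM : ContinuousOn M K) (h : ∀ s ∈ K, ∀ t ∈ K, γ s = γ t → M s = M t) :
    ∃ M' : ℂ → ℂ, ContinuousOn M' (γ '' K) ∧ ∀ t ∈ K, M' (γ t) = M t := by
  classical
  let M' : ℂ → ℂ := fun z => if hz : z ∈ γ '' K then M hz.choose else 0
  have hM' : ∀ t ∈ K, M' (γ t) = M t := by
    intro t ht
    have hz : γ t ∈ γ '' K := ⟨t, ht, rfl⟩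
    simp only [M', dif_pos hz]
    exact h _ hz.choose_spec.1 _ ht hz.choose_spec.2
  refine ⟨M', ?_, hM'⟩
  rw [continuousOn_iff_isClosed]
  intro s hs
  obtain ⟨C, hC, hCs⟩ := continuousOn_iff_isClosed.1 hM s hs
  refine ⟨γ '' (K ∩ C), ((hK.inter_right hC).image_of_continuousOn
    (hγ.mono inter_subset_left)).isClosed, ?_⟩
  ext z
  constructor
  · rintro ⟨hz, t, ht, rfl⟩
    rw [mem_preimage, hM' t ht] at hz
    have : t ∈ C ∩ K := by rw [← hCs]; exact ⟨hz, ht⟩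
    exact ⟨⟨t, ⟨ht, this.1⟩, rfl⟩, t, ht, rfl⟩
  · rintro ⟨⟨t, ⟨ht, htC⟩, rfl⟩, -⟩
    refine ⟨?_, t, ht, rfl⟩
    rw [mem_preimage, hM' t ht]
    have : t ∈ M ⁻¹' s ∩ K := by rw [hCs]; exact ⟨htC, ht⟩
    exact this.1

lemma conn_outside {R : ℝ} (hR : 0 < R) : IsPreconnected {z : ℂ | R < ‖z‖} := by
  have : {z : ℂ | R < ‖z‖} = Complex.exp '' {w : ℂ | Real.log R < w.re} := by
    ext z
    constructor
    · intro hz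
      have hz' : R < ‖z‖ := hz
      have h0 : z ≠ 0 := by
        rintro rfl
        simp at hz'
        linarith
      refine ⟨Complex.log z, ?_, Complex.exp_log h0⟩
      simp only [mem_ofPred_eq, Complex.log_re]
      exact Real.log_lt_log hR hz'
    · rintro ⟨w, hw, rfl⟩
      simp only [mem_ofPred_eq, Complex.norm_exp] at hw ⊢
      exact (Real.log_lt_iff_lt_exp hR).1 hw
  rw [this]
  exact (convex_halfSpace_re_gt _).isPreconnected.image _ Complex.continuous_exp.continuousOn

/-- Components of the complement of a closed set: frontier lies in the set -/
lemma frontier_comp {K : Set ℂ} (hK : IsClosed K) (p : ℂ) :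
    frontier (connectedComponentIn Kᶜ p) ⊆ K := by
  intro x hx
  by_contra hxK
  have hxK : x ∈ Kᶜ := hxK
  have ho : IsOpen (connectedComponentIn Kᶜ x) := hK.isOpen_compl.connectedComponentIn
  have hop : IsOpen (connectedComponentIn Kᶜ p) := hK.isOpen_compl.connectedComponentIn
  obtain ⟨y, hy1, hy2⟩ := mem_closure_iff.1 (frontier_subset_closure hx) _ ho
    (mem_connectedComponentIn hxK)
  have e1 := connectedComponentIn_eq hy1
  have e2 := connectedComponentIn_eq hy2
  rw [hop.frontier_eq] at hx
  apply hx.2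
  rw [e2, ← e1]
  exact mem_connectedComponentIn hxK

lemma unbdd_unique {K : Set ℂ} (hK : Bornology.IsBounded K) {p q : ℂ}
    (hp : ¬ Bornology.IsBounded (connectedComponentIn Kᶜ p))
    (hq : ¬ Bornology.IsBounded (connectedComponentIn Kᶜ q)) :
    connectedComponentIn Kᶜ p = connectedComponentIn Kᶜ q := by
  obtain ⟨R, hR, hKR⟩ := hK.subset_closedBall_lt 0 0
  have hsub : {z : ℂ | R < ‖z‖} ⊆ Kᶜ := by
    intro z hz hzK
    have := hKR hzK
    simp at this
    exact absurd hz (not_lt.2 this)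
  have key : ∀ p, ¬ Bornology.IsBounded (connectedComponentIn Kᶜ p) →
      connectedComponentIn Kᶜ p = connectedComponentIn Kᶜ (((R + 1 : ℝ) : ℂ)) := by
    intro p hp
    have : ∃ z ∈ connectedComponentIn Kᶜ p, R < ‖z‖ := by
      by_contra! h
      apply hp
      exact (isBounded_closedBall (x := (0:ℂ)) (r := R)).subset (fun z hz => by simpa using h z hz)
    obtain ⟨z, hz, hzR⟩ := this
    rw [connectedComponentIn_eq hz]
    apply connectedComponentIn_eq
    have h1 : (((R + 1 : ℝ) : ℂ)) ∈ {z : ℂ | R < ‖z‖} := by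
      simp only [mem_ofPred_eq, Complex.norm_real, Real.norm_eq_abs]
      rw [abs_of_pos (by linarith)]
      linarith
    exact (conn_outside hR).subset_connectedComponentIn hzR hsub h1
  rw [key p hp, key q hq]

/-- F1: arcs do not separate the plane. -/
lemma arc_compl {α : ℝ → ℂ} {a b : ℝ} (hab : a ≤ b) (hα : ContinuousOn α (Icc a b))
    (hi : InjOn α (Icc a b)) : IsPreconnected (α '' Icc a b)ᶜ := by
  set A := α '' Icc a b with hA
  have hAc : IsCompact A := isCompact_Icc.image_of_continuousOn hα
  have hunb : ∀ p ∈ Aᶜ, ¬ Bornology.IsBounded (connectedComponentIn Aᶜ p) := by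
    intro p hp hb
    have h1 := no_log_frontier (g := fun _ => 1) hAc.isClosed.isOpen_compl.connectedComponentIn hb
      (mem_connectedComponentIn hp) continuousOn_const (by simp) (m := 1) one_ne_zero
    apply h1
    have : HasLog (fun z => z - p) A := by
      obtain ⟨M, hM, hMe⟩ := exists_log (0 : ℝ)
        (g := fun t => α (projIcc a b hab t) - p)
        ((continuousOn_iff_continuous_domRestrict.1 hα).comp continuous_projIcc |>.sub
          continuous_const) (by
          intro t h
          rw [sub_eq_zero] at h
          exact hp ⟨_, (projIcc a b hab t).2, h⟩)
      obtain ⟨M', hM', hMM⟩ := descend isCompact_Icc hα hM.continuousOn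
        (fun s hs t ht h => by rw [hi hs ht h])
      refine ⟨M', hM', ?_⟩
      rintro _ ⟨t, ht, rfl⟩
      rw [hMM t ht, hMe, projIcc_of_mem hab ht]
    simp only [zpow_one, mul_one]
    exact this.mono (frontier_comp hAc.isClosed p)
  rcases (Aᶜ).eq_empty_or_nonempty with h | ⟨p, hp⟩
  · rw [h]; exact isPreconnected_empty
  have : Aᶜ = connectedComponentIn Aᶜ p := by
    apply subset_antisymm _ (connectedComponentIn_subset _ _)
    intro q hq
    rw [unbdd_unique hAc.isBounded (hunb p hp) (hunb q hq)]
    exact mem_connectedComponentIn hq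
  rw [this]
  exact isPreconnected_connectedComponentIn

end JS

namespace JS
open Set Filter Topology Metric Real MeasureTheory

/-- A simple closed curve, parametrised by the line. -/
structure Loop (γ : ℝ → ℂ) : Prop where
  cont : Continuous γ
  eq_iff : ∀ s t, γ s = γ t ↔ ∃ n : ℤ, s = t + n * (2 * π)

lemma Loop.injOn {γ : ℝ → ℂ} (h : Loop γ) {a b : ℝ} (hab : b < a + 2 * π) :
    InjOn γ (Icc a b) := by
  intro s hs t ht hst
  obtain ⟨n, hn⟩ := (h.eq_iff s t).1 hst
  have hpi := Real.pi_pos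
  have h1 : (n : ℝ) < 1 := by
    by_contra! hc
    nlinarith [hs.1, hs.2, ht.1, ht.2]
  have h2 : (-1 : ℝ) < n := by
    by_contra! hc
    nlinarith [hs.1, hs.2, ht.1, ht.2]
  have : n = 0 := by
    have h1' : n < 1 := by exact_mod_cast h1
    have h2' : -1 < n := by exact_mod_cast h2
    omega
  simpa [this] using hn

lemma Loop.range_eq {γ : ℝ → ℂ} (h : Loop γ) (a : ℝ) : range γ = γ '' Icc a (a + 2 * π) := by
  apply subset_antisymm _ (image_subset_range _ _)
  rintro _ ⟨t, rfl⟩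
  have hpi : 0 < 2 * π := by positivity
  refine ⟨toIcoMod hpi a t, Ico_subset_Icc_self (toIcoMod_mem_Ico hpi a t), ?_⟩
  rw [h.eq_iff]
  refine ⟨-toIcoDiv hpi a t, ?_⟩
  rw [toIcoMod]
  simp [sub_eq_add_neg]

lemma Loop.compact {γ : ℝ → ℂ} (h : Loop γ) : IsCompact (range γ) := by
  rw [h.range_eq 0]
  exact isCompact_Icc.image h.cont

lemma Loop.per {γ : ℝ → ℂ} (h : Loop γ) (t : ℝ) : γ (t + 2 * π) = γ t := by
  rw [h.eq_iff]
  exact ⟨1, by simp⟩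

lemma arc_log {α : ℝ → ℂ} (hα : Continuous α) {a b : ℝ} (hab : a ≤ b) :
    HasLog (fun w => (w - α b) / (w - α a)) (α '' Icc a b)ᶜ := by
  classical
  set A := α '' Icc a b with hA
  have hmem : ∀ t : unitInterval, α (a + t * (b - a)) ∈ A := by
    intro t
    refine ⟨_, ⟨?_, ?_⟩, rfl⟩
    · nlinarith [t.2.1, t.2.2]
    · nlinarith [t.2.1, t.2.2]
  have hne : ∀ (t : unitInterval) (w : (Aᶜ : Set ℂ)), (w : ℂ) - α (a + t * (b - a)) ≠ 0 := by
    intro t w h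
    rw [sub_eq_zero] at h
    exact w.2 (h ▸ hmem t)
  have hne0 : ∀ (w : (Aᶜ : Set ℂ)), (w : ℂ) - α a ≠ 0 := by
    intro w
    simpa using hne 0 w
  let H : C(unitInterval × (Aᶜ : Set ℂ), {z : ℂ // z ≠ 0}) :=
    ⟨fun x => ⟨((x.2 : ℂ) - α (a + x.1 * (b - a))) / ((x.2 : ℂ) - α a),
      div_ne_zero (hne _ _) (hne0 _)⟩, by
      apply Continuous.subtype_mk
      apply Continuous.div
      · fun_prop
      · fun_prop
      · intro x
        exact hne0 _⟩
  have H0 : ∀ w, H (0, w) = (fun z : ℂ ↦ (⟨_, z.exp_ne_zero⟩ : {z : ℂ // z ≠ 0}))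
      ((ContinuousMap.const (Aᶜ : Set ℂ) (0 : ℂ)) w) := by
    intro w
    apply Subtype.ext
    simp [H, div_self (hne0 w)]
  let F := Complex.isCoveringMap_exp.liftHomotopy H (ContinuousMap.const (Aᶜ : Set ℂ) (0 : ℂ)) H0
  have hF := Complex.isCoveringMap_exp.liftHomotopy_lifts H
    (ContinuousMap.const (Aᶜ : Set ℂ) (0 : ℂ)) H0
  refine ⟨fun w => if hw : w ∈ Aᶜ then F (1, ⟨w, hw⟩) else 0, ?_, ?_⟩
  · rw [continuousOn_iff_continuous_domRestrict]
    have : (Aᶜ).domRestrict (fun w => if hw : w ∈ Aᶜ then F (1, ⟨w, hw⟩) else 0) =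
        fun w => F (1, w) := by
      ext w
      simp only [domRestrict_apply]
      rw [dif_pos w.2]
    rw [this]
    fun_prop
  · intro w hw
    have := congrArg Subtype.val (congrFun hF (1, ⟨w, hw⟩))
    beta_reduce
    rw [dif_pos hw]
    refine this.trans ?_
    simp [H]

/-- F2 -/
lemma Loop.sep {γ : ℝ → ℂ} (h : Loop γ) : ¬ IsPreconnected (range γ)ᶜ := by
  intro hJ
  have hpi := Real.pi_pos
  set a := γ 0 with ha
  set b := γ π with hb
  have h2 : γ (2 * π) = a := by simpa using h.per 0
  have hba : b ≠ a := by
    intro hba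
    have := h.injOn (a := 0) (b := π) (by linarith) ⟨hpi.le, le_rfl⟩ ⟨le_rfl, hpi.le⟩ hba
    linarith
  obtain ⟨LA, hLA, hLA'⟩ := arc_log h.cont (a := 0) (b := π) hpi.le
  obtain ⟨LB, hLB, hLB'⟩ := arc_log h.cont (a := π) (b := 2 * π) (by linarith)
  rw [h2] at hLB'
  set A := γ '' Icc 0 π with hA
  set B := γ '' Icc π (2 * π) with hB
  have hAcl : IsOpen Aᶜ := (isCompact_Icc.image h.cont).isClosed.isOpen_compl
  have hBcl : IsOpen Bᶜ := (isCompact_Icc.image h.cont).isClosed.isOpen_compl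
  have hJA : (range γ)ᶜ ⊆ Aᶜ := compl_subset_compl.2 (image_subset_range _ _)
  have hJB : (range γ)ᶜ ⊆ Bᶜ := compl_subset_compl.2 (image_subset_range _ _)
  have hJAB : Aᶜ ∩ Bᶜ ⊆ (range γ)ᶜ := by
    rintro z ⟨hzA, hzB⟩ hz
    rw [h.range_eq 0] at hz
    obtain ⟨t, ht, rfl⟩ := hz
    rcases le_total t π with htp | htp
    · exact hzA ⟨t, ⟨ht.1, htp⟩, rfl⟩
    · exact hzB ⟨t, ⟨htp, by linarith [ht.2]⟩, rfl⟩
  obtain ⟨n, hn⟩ := log_unique hJ (hLA.mono hJA) (hLB.mono hJB).neg (by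
    intro z hz
    rw [hLA' z (hJA hz), Pi.neg_apply, Complex.exp_neg, hLB' z (hJB hz), inv_div])
  have h_integ : ∀ z, z ∉ Aᶜ → z ∉ Bᶜ → z = a ∨ z = b := by
    intro z hzA hzB
    rw [notMem_compl_iff] at hzA hzB
    obtain ⟨s, hs, rfl⟩ := hzA
    obtain ⟨t, ht, hst⟩ := hzB
    obtain ⟨n, hn⟩ := (h.eq_iff t s).1 hst
    rcases eq_or_lt_of_le hs.1 with h0 | h0
    · left; rw [← h0]
    right
    have h1 : (n : ℝ) < 1 := by
      by_contra! hc
      nlinarith [hs.1, hs.2, ht.1, ht.2]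
    have hn0 : (n : ℝ) ≤ 0 := by
      have h1' : n < 1 := by exact_mod_cast h1
      exact_mod_cast (by omega : n ≤ 0)
    have : s = π := by nlinarith [hs.1, hs.2, ht.1, ht.2]
    rw [this]
  -- glue
  classical
  let L : ℂ → ℂ := fun z => if z ∈ Aᶜ then LA z else - LB z + n * (2 * π * Complex.I)
  have hLeq : ∀ z ∈ Bᶜ, L z = - LB z + n * (2 * π * Complex.I) := by
    intro z hz
    by_cases hzA : z ∈ Aᶜ
    · simp only [L, if_pos hzA]
      exact hn z (hJAB ⟨hzA, hz⟩)
    · simp only [L, if_neg hzA]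
  have hLc : ∀ z, z ≠ a → z ≠ b → ContinuousAt L z := by
    intro z hza hzb
    by_cases hzA : z ∈ Aᶜ
    · have : L =ᶠ[𝓝 z] LA := by
        filter_upwards [hAcl.mem_nhds hzA] with w hw
        simp only [L, if_pos hw]
      exact (hLA.continuousAt (hAcl.mem_nhds hzA)).congr this.symm
    · have hzB : z ∈ Bᶜ := by
        by_contra hzB
        rcases h_integ z hzA hzB with h | h <;> contradiction
      have : L =ᶠ[𝓝 z] fun z => - LB z + n * (2 * π * Complex.I) := by
        filter_upwards [hBcl.mem_nhds hzB] with w hw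
        exact hLeq w hw
      exact ((hLB.continuousAt (hBcl.mem_nhds hzB)).neg.add continuousAt_const).congr this.symm
  have hLe : ∀ z, z ≠ a → z ≠ b → Complex.exp (L z) = (z - b) / (z - a) := by
    intro z hza hzb
    by_cases hzA : z ∈ Aᶜ
    · simp only [L, if_pos hzA]
      exact hLA' z hzA
    · have hzB : z ∈ Bᶜ := by
        by_contra hzB
        rcases h_integ z hzA hzB with h | h <;> contradiction
      rw [hLeq z hzB, Complex.exp_add, Complex.exp_int_mul_two_pi_mul_I, Complex.exp_neg,
        hLB' z hzB, inv_div, mul_one]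
  have hd : 0 < dist b a := dist_pos.2 hba
  have hball : closure (ball a (dist b a / 2)) = closedBall a (dist b a / 2) :=
    closure_ball a (by positivity)
  have hfr : frontier (ball a (dist b a / 2)) = sphere a (dist b a / 2) :=
    frontier_ball a (by positivity)
  have hnb : b ∉ closedBall a (dist b a / 2) := by
    rw [mem_closedBall]
    linarith
  refine no_log_frontier (U := ball a (dist b a / 2)) isOpen_ball isBounded_ball (p := a)
    (mem_ball_self (by positivity)) (g := fun z => z - b) (by fun_prop) ?_ (m := -1) (by norm_num) ?_
  · intro z hz hzb
    rw [hball] at hz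
    rw [sub_eq_zero] at hzb
    exact hnb (hzb ▸ hz)
  · have key : ∀ z ∈ sphere a (dist b a / 2), z ≠ a ∧ z ≠ b := by
      intro z hz
      constructor
      · rintro rfl
        rw [mem_sphere, dist_self] at hz
        linarith
      · rintro rfl
        exact hnb (sphere_subset_closedBall hz)
    rw [hfr]
    refine ⟨L, fun z hz => (hLc z (key z hz).1 (key z hz).2).continuousWithinAt, fun z hz => ?_⟩
    beta_reduce
    rw [hLe z (key z hz).1 (key z hz).2, zpow_neg_one, div_eq_inv_mul]

/-- F3 -/
lemma Loop.bdd_unique {γ : ℝ → ℂ} (h : Loop γ) {p q : ℂ} (hp : p ∈ (range γ)ᶜ)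
    (hq : q ∈ (range γ)ᶜ) (hbp : Bornology.IsBounded (connectedComponentIn (range γ)ᶜ p))
    (hbq : Bornology.IsBounded (connectedComponentIn (range γ)ᶜ q)) :
    connectedComponentIn (range γ)ᶜ p = connectedComponentIn (range γ)ᶜ q := by
  by_contra hne
  have hcl : IsClosed (range γ) := h.compact.isClosed
  have lift : ∀ p ∈ (range γ)ᶜ, ∃ (L : ℝ → ℂ) (n : ℤ), Continuous L ∧
      (∀ t, Complex.exp (L t) = γ t - p) ∧
      ∀ t, L (t + 2 * π) = L t + n * (2 * π * Complex.I) := by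
    intro p hp
    obtain ⟨L, hL, hLe⟩ := exists_log (0 : ℝ) (g := fun t => γ t - p)
      (h.cont.sub continuous_const) (by
        intro t ht
        rw [sub_eq_zero] at ht
        exact hp ⟨t, ht⟩)
    obtain ⟨n, hn⟩ := log_unique (A := ℝ) (S := univ) isPreconnected_univ
      (L1 := fun t => L (t + 2 * π)) (L2 := L) (by fun_prop) hL.continuousOn (by
        intro t _
        rw [hLe, hLe, h.per])
    exact ⟨L, n, hL, hLe, fun t => hn t trivial⟩
  have desc : ∀ M : ℝ → ℂ, Continuous M → (∀ t, M (t + 2 * π) = M t) →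
      ∃ M' : ℂ → ℂ, ContinuousOn M' (range γ) ∧ ∀ t, M' (γ t) = M t := by
    intro M hM hper
    have hP : Function.Periodic M (2 * π) := hper
    have hinv : ∀ s t, γ s = γ t → M s = M t := by
      intro s t hst
      obtain ⟨n, rfl⟩ := (h.eq_iff s t).1 hst
      exact hP.int_mul n t
    obtain ⟨M', hM', hMM⟩ := descend (isCompact_Icc (a := 0) (b := 0 + 2 * π)) h.cont.continuousOn
      hM.continuousOn (fun s _ t _ => hinv s t)
    rw [← h.range_eq 0] at hM'
    refine ⟨M', hM', fun t => ?_⟩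
    have : γ t ∈ γ '' Icc 0 (0 + 2 * π) := by
      rw [← h.range_eq 0]
      exact mem_range_self t
    obtain ⟨s, hs, hst⟩ := this
    rw [← hst, hMM s hs, hinv s t hst]
  obtain ⟨L1, n1, hL1, hL1e, hL1p⟩ := lift p hp
  obtain ⟨L2, n2, hL2, hL2e, hL2p⟩ := lift q hq
  by_cases hn2 : n2 = 0
  · obtain ⟨M', hM', hMM⟩ := desc L2 hL2 (by intro t; rw [hL2p, hn2]; simp)
    refine no_log_frontier (g := fun _ => 1) hcl.isOpen_compl.connectedComponentIn hbq
      (mem_connectedComponentIn hq) continuousOn_const (by simp) (m := 1) one_ne_zero ?_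
    refine HasLog.mono ?_ (frontier_comp hcl q)
    refine ⟨M', hM', ?_⟩
    rintro _ ⟨t, rfl⟩
    rw [hMM, hL2e]
    simp
  · obtain ⟨M', hM', hMM⟩ := desc (fun t => n2 * L1 t - n1 * L2 t) (by fun_prop) (by
      intro t
      simp only [hL2p, hL1p]
      ring)
    have hqn : ∀ z ∈ closure (connectedComponentIn (range γ)ᶜ p), z - q ≠ 0 := by
      intro z hz hzq
      rw [sub_eq_zero] at hzq
      subst hzq
      obtain ⟨y, hy1, hy2⟩ := mem_closure_iff.1 hz _ hcl.isOpen_compl.connectedComponentIn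
        (mem_connectedComponentIn hq)
      exact hne ((connectedComponentIn_eq hy2).trans (connectedComponentIn_eq hy1).symm)
    refine no_log_frontier (g := fun z => (z - q) ^ (-n1))
      hcl.isOpen_compl.connectedComponentIn hbp
      (mem_connectedComponentIn hp) ?_ ?_ (m := n2) hn2 ?_
    · exact ContinuousOn.zpow₀ (by fun_prop) _ (fun z hz => Or.inl (hqn z hz))
    · intro z hz
      exact zpow_ne_zero _ (hqn z hz)
    · refine HasLog.mono ?_ (frontier_comp hcl p)
      refine ⟨M', hM', ?_⟩
      rintro _ ⟨t, rfl⟩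
      rw [hMM, sub_eq_add_neg, Complex.exp_add, Complex.exp_int_mul, hL1e, ← neg_mul,
        ← Int.cast_neg, Complex.exp_int_mul, hL2e]

lemma Loop.frontier_eq {γ : ℝ → ℂ} (h : Loop γ) {U : Set ℂ} (hU : IsOpen U)
    (hUne : U.Nonempty) (hfr : frontier U ⊆ range γ)
    {q : ℂ} (hq : q ∈ (range γ)ᶜ) (hqU : q ∉ U) (hUJ : U ⊆ (range γ)ᶜ) : frontier U = range γ := by
  apply subset_antisymm hfr
  rintro _ ⟨t, rfl⟩
  by_contra ht
  have hpi := Real.pi_pos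
  have ho : IsOpen (γ ⁻¹' (frontier U)ᶜ) := isClosed_frontier.isOpen_compl.preimage h.cont
  obtain ⟨ε, hε, hεs⟩ := Metric.isOpen_iff.1 ho t ht
  set δ := min (ε / 2) 1
  have hδ : 0 < δ := by positivity
  have hδε : δ < ε := (min_le_left _ _).trans_lt (by linarith)
  have hδ1 : δ ≤ 1 := min_le_right _ _
  have hpi3 := Real.pi_gt_three
  have hsub : frontier U ⊆ γ '' Icc (t + δ) (t + 2 * π - δ) := by
    intro z hz
    have hz' := hfr hz
    rw [h.range_eq (t - δ)] at hz'
    obtain ⟨s, hs, rfl⟩ := hz'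
    refine ⟨s, ⟨?_, by linarith [hs.2]⟩, rfl⟩
    by_contra! hc
    have : s ∈ ball t ε := by
      rw [mem_ball, Real.dist_eq, abs_lt]
      constructor <;> linarith [hs.1]
    exact hεs this hz
  have hpre := arc_compl (α := γ) (a := t + δ) (b := t + 2 * π - δ) (by linarith)
    h.cont.continuousOn (h.injOn (by linarith))
  have hJA : (range γ)ᶜ ⊆ (γ '' Icc (t + δ) (t + 2 * π - δ))ᶜ :=
    compl_subset_compl.2 (image_subset_range _ _)
  have := hpre.subset_of_closure_inter_subset hU
    (by obtain ⟨x, hx⟩ := hUne; exact ⟨x, hJA (hUJ hx), hx⟩) (by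
      rintro z ⟨hz1, hz2⟩
      by_contra hzU
      apply hz2
      apply hsub
      rw [hU.frontier_eq]
      exact ⟨hz1, hzU⟩)
  exact hqU (this (hJA hq))

/-- The Jordan curve theorem. -/
theorem Loop.jordan {γ : ℝ → ℂ} (h : Loop γ) : ∃ U V : Set ℂ, IsOpen U ∧ IsOpen V ∧
    IsConnected U ∧ IsConnected V ∧ Disjoint U V ∧ U ∪ V = (range γ)ᶜ ∧ Bornology.IsBounded U ∧
    ¬ Bornology.IsBounded V ∧ frontier U = range γ ∧ frontier V = range γ := by
  have hcl : IsClosed (range γ) := h.compact.isClosed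
  have hop : ∀ p, IsOpen (connectedComponentIn (range γ)ᶜ p) := fun p =>
    hcl.isOpen_compl.connectedComponentIn
  obtain ⟨R, hR, hKR⟩ := h.compact.isBounded.subset_closedBall_lt 0 0
  have hsub : {z : ℂ | R < ‖z‖} ⊆ (range γ)ᶜ := by
    intro z hz hzK
    have := hKR hzK
    simp at this
    exact absurd hz (not_lt.2 this)
  have hq0 : (((R + 1 : ℝ) : ℂ)) ∈ {z : ℂ | R < ‖z‖} := by
    simp only [mem_ofPred_eq, Complex.norm_real, Real.norm_eq_abs]
    rw [abs_of_pos (by linarith)]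
    linarith
  set q : ℂ := ((R + 1 : ℝ) : ℂ)
  have hq := hsub hq0
  have hVsub := (conn_outside hR).subset_connectedComponentIn hq0 hsub
  have hVu : ¬ Bornology.IsBounded (connectedComponentIn (range γ)ᶜ q) := by
    intro hb
    obtain ⟨S, hS, hbS⟩ := (hb.subset hVsub).subset_closedBall_lt 0 0
    have : (((R + S : ℝ) : ℂ)) ∈ closedBall (0 : ℂ) S := by
      apply hbS
      simp only [mem_ofPred_eq, Complex.norm_real, Real.norm_eq_abs]
      rw [abs_of_pos (by linarith)]
      linarith
    simp only [mem_closedBall, dist_zero_right, Complex.norm_real, Real.norm_eq_abs] at this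
    rw [abs_of_pos (by linarith)] at this
    linarith
  have hex : ∃ p ∈ (range γ)ᶜ, Bornology.IsBounded (connectedComponentIn (range γ)ᶜ p) := by
    by_contra! hc
    apply h.sep
    have : (range γ)ᶜ = connectedComponentIn (range γ)ᶜ q := by
      apply subset_antisymm _ (connectedComponentIn_subset _ _)
      intro p hp
      rw [unbdd_unique h.compact.isBounded hVu (hc p hp)]
      exact mem_connectedComponentIn hp
    rw [this]
    exact isPreconnected_connectedComponentIn
  obtain ⟨p, hp, hbp⟩ := hex
  have hdis : Disjoint (connectedComponentIn (range γ)ᶜ p) (connectedComponentIn (range γ)ᶜ q) := by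
    rw [Set.disjoint_left]
    intro z hz1 hz2
    apply hVu
    rw [connectedComponentIn_eq hz2, ← connectedComponentIn_eq hz1]
    exact hbp
  have hpU := mem_connectedComponentIn hp
  have hqV := mem_connectedComponentIn hq
  refine ⟨connectedComponentIn (range γ)ᶜ p, connectedComponentIn (range γ)ᶜ q, hop _, hop _,
    ⟨⟨p, hpU⟩, isPreconnected_connectedComponentIn⟩,
    ⟨⟨q, hqV⟩, isPreconnected_connectedComponentIn⟩, hdis, ?_, hbp, hVu, ?_, ?_⟩
  · apply subset_antisymm
    · exact union_subset (connectedComponentIn_subset _ _) (connectedComponentIn_subset _ _)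
    · intro z hz
      by_cases hb : Bornology.IsBounded (connectedComponentIn (range γ)ᶜ z)
      · left
        rw [h.bdd_unique hp hz hbp hb]
        exact mem_connectedComponentIn hz
      · right
        rw [unbdd_unique h.compact.isBounded hVu hb]
        exact mem_connectedComponentIn hz
  · exact h.frontier_eq (hop _) ⟨p, hpU⟩ (frontier_comp hcl p) hq
      (Set.disjoint_right.1 hdis hqV) (connectedComponentIn_subset _ _)
  · exact h.frontier_eq (hop _) ⟨q, hqV⟩ (frontier_comp hcl q) hp
      (Set.disjoint_left.1 hdis hpU) (connectedComponentIn_subset _ _)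

end JS

namespace JS
open Set Filter Topology Metric Real MeasureTheory

lemma cos_level {τ c : ℝ} (hc : c ≤ 1) (t : ℝ) (ht : t ∈ Icc (τ - π) (τ + π)) :
    c ≤ Real.cos (t - τ) ↔ t ∈ Icc (τ - Real.arccos c) (τ + Real.arccos c) := by
  have habs : |t - τ| ≤ π := by
    rw [abs_le]
    constructor <;> linarith [ht.1, ht.2]
  rw [← Real.cos_abs]
  constructor
  · intro h
    have h1 := Real.antitone_arccos h
    rw [Real.arccos_cos (abs_nonneg _) habs] at h1
    rw [abs_le] at h1
    constructor <;> linarith [h1.1, h1.2]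
  · intro h
    rcases le_total c (-1) with h1 | h1
    · linarith [Real.neg_one_le_cos |t - τ|]
    have h2 : |t - τ| ≤ Real.arccos c := by
      rw [abs_le]
      constructor <;> linarith [h.1, h.2]
    rw [← Real.cos_arccos h1 hc]
    exact Real.cos_le_cos_of_nonneg_of_le_pi (abs_nonneg _) (Real.arccos_le_pi c) h2

lemma level_conn {γ : ℝ → ℂ} (h : Loop γ) {D : Set ℂ} (hD : IsOpen D)
    (hb : Bornology.IsBounded D) (hfr : frontier D = range γ) {u : ℂ → ℝ} (hu : Harm u D)
    (huc : ContinuousOn u (closure D)) {τ : ℝ} (hbd : ∀ t, u (γ t) = Real.cos (t - τ)) (c : ℝ) :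
    IsPreconnected {z ∈ closure D | c ≤ u z} := by
  set s := {z ∈ closure D | c ≤ u z} with hs
  have hsclosed : IsClosed s := by
    have := huc.preimage_isClosed_of_isClosed isClosed_closure (isClosed_Ici (a := c))
    exact this
  have hscompact : IsCompact s := hb.isCompact_closure.of_isClosed_subset hsclosed (fun z hz => hz.1)
  have hJcl : range γ ⊆ closure D := hfr ▸ frontier_subset_closure
  have hsJ : IsPreconnected (s ∩ range γ) := by
    rcases lt_or_ge 1 c with hc | hc
    · have : s ∩ range γ = ∅ := by
        ext z
        simp only [mem_inter_iff, mem_empty_iff_false, iff_false, not_and]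
        rintro hz ⟨t, rfl⟩
        have h1 := hz.2
        rw [hbd] at h1
        linarith [Real.cos_le_one (t - τ)]
      rw [this]
      exact isPreconnected_empty
    · have : s ∩ range γ = γ '' Icc (τ - Real.arccos c) (τ + Real.arccos c) := by
        ext z
        constructor
        · rintro ⟨hz, hzJ⟩
          rw [h.range_eq (τ - π)] at hzJ
          obtain ⟨t, ht, rfl⟩ := hzJ
          refine ⟨t, ?_, rfl⟩
          have h1 := hz.2
          rw [hbd] at h1
          exact (cos_level hc t ⟨ht.1, by linarith [ht.2]⟩).1 h1
        · rintro ⟨t, ht, rfl⟩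
          refine ⟨⟨hJcl (mem_range_self t), ?_⟩, mem_range_self t⟩
          rw [hbd]
          refine (cos_level hc t ⟨?_, ?_⟩).2 ht
          · linarith [ht.1, Real.arccos_le_pi c]
          · linarith [ht.2, Real.arccos_le_pi c]
      rw [this]
      exact isPreconnected_Icc.image _ h.cont.continuousOn
  -- the key claim
  have claim : ∀ t t' : Set ℂ, IsClosed t → IsClosed t' → s ⊆ t ∪ t' → (s ∩ t').Nonempty →
      ¬ (s ∩ (t ∩ t')).Nonempty → (s ∩ range γ ∩ t').Nonempty := by
    intro t t' ht ht' hst hne hem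
    by_contra hJe
    have hQD : s ∩ t' ⊆ D \ (s ∩ t) := by
      rintro z ⟨hz, hzt'⟩
      refine ⟨?_, fun hzt => hem ⟨z, hz, hzt.2, hzt'⟩⟩
      by_contra hzD
      apply hJe
      refine ⟨z, ⟨hz, ?_⟩, hzt'⟩
      rw [← hfr, hD.frontier_eq]
      exact ⟨hz.1, hzD⟩
    obtain ⟨V, hV, hQV, hVU, hVc⟩ := exists_open_between_and_isCompact_closure
      (hscompact.inter_right ht') (hD.sdiff (hsclosed.inter ht)) hQD
    have hVD : closure V ⊆ D := hVU.trans sdiff_subset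
    have hlt : ∀ x ∈ frontier V, u x < c := by
      intro x hx
      by_contra! hxc
      have hxcl := frontier_subset_closure hx
      have hxs : x ∈ s := ⟨subset_closure (hVD hxcl), hxc⟩
      rcases hst hxs with h1 | h1
      · exact (hVU hxcl).2 ⟨hxs, h1⟩
      · rw [hV.frontier_eq] at hx
        exact hx.2 (hQV ⟨hxs, h1⟩)
    have hucV : ContinuousOn u (closure V) := huc.mono (hVD.trans subset_closure)
    obtain ⟨m, hm, hmu⟩ : ∃ m < c, ∀ x ∈ frontier V, u x ≤ m := by
      rcases (frontier V).eq_empty_or_nonempty with he | hne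
      · exact ⟨c - 1, by linarith, by simp [he]⟩
      · obtain ⟨x, hx, hmax⟩ := (hVc.of_isClosed_subset isClosed_frontier
          frontier_subset_closure).exists_isMaxOn hne (hucV.mono frontier_subset_closure)
        exact ⟨u x, hlt x hx, fun y hy => hmax hy⟩
    obtain ⟨z, hz⟩ := hne
    have hVb : Bornology.IsBounded V := hVc.isBounded.subset subset_closure
    have := max_principle' hV hVb (hu.mono (subset_closure.trans hVD)).subM hucV hmu z
      (subset_closure (hQV hz))
    linarith [hz.1.2]
  rw [isPreconnected_closed_iff]
  intro t t' ht ht' hst hn hn'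
  by_contra hem
  have h1 := claim t t' ht ht' hst hn' hem
  have h2 := claim t' t ht' ht (by rwa [union_comm]) hn (by rwa [inter_comm t' t])
  have := isPreconnected_closed_iff.1 hsJ t t' ht ht' (inter_subset_left.trans hst) h2 h1
  obtain ⟨z, hz, hz'⟩ := this
  exact hem ⟨z, hz.1, hz'⟩

end JS

namespace JS
open Set Filter Topology Metric Real MeasureTheory

lemma slit_aux {v : ℂ} (hv : v.im ≠ 0 ∨ v.re < 0) {s r : ℝ} (hr : 0 ≤ r) (hs : 0 ≤ s)
    (hsr : 0 < s + r) : (s : ℂ) - r * v ∈ Complex.slitPlane := by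
  rw [Complex.mem_slitPlane_iff]
  simp only [Complex.sub_re, Complex.ofReal_re, Complex.mul_re, Complex.ofReal_im, zero_mul,
    sub_zero, Complex.sub_im, Complex.mul_im, add_zero, zero_sub, neg_ne_zero]
  rcases hr.eq_or_lt with h0 | h0
  · left
    rw [← h0] at hsr ⊢
    linarith
  rcases hv with h | h
  · right
    positivity
  · left
    nlinarith

lemma crit_core {S : Set ℂ} (hS : IsCompact S) {u : ℂ → ℝ} (hu : ContinuousOn u S)
    (hplus : ∀ c', IsPreconnected {z ∈ S | c' ≤ u z})
    (hminus : ∀ c', IsPreconnected {z ∈ S | u z ≤ c'}) {z0 d : ℂ} {c θ : ℝ} (hθ : 0 < θ)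
    (hθ2 : θ ≤ π / 2) (hz0 : u z0 = c) {ω : ℂ} (hω : ω = Complex.exp (θ * Complex.I))
    (hd : d ≠ 0)
    (h0 : ∀ r : ℝ, 0 < r → r ≤ 1 → z0 + r * d ∈ S ∧ c < u (z0 + r * d))
    (h2 : ∀ r : ℝ, 0 < r → r ≤ 1 → z0 + r * (d * ω ^ 2) ∈ S ∧ c < u (z0 + r * (d * ω ^ 2)))
    (h1 : ∀ r : ℝ, 0 < r → r ≤ 1 → z0 + r * (d * ω) ∈ S ∧ u (z0 + r * (d * ω)) < c)
    (hm : ∀ r : ℝ, 0 < r → r ≤ 1 → z0 + r * (d * ω⁻¹) ∈ S ∧ u (z0 + r * (d * ω⁻¹)) < c) :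
    False := by
  have hpi := Real.pi_pos
  have hω0 : ω ≠ 0 := hω ▸ Complex.exp_ne_zero _
  have hωn : ‖ω‖ = 1 := by rw [hω, Complex.norm_exp_ofReal_mul_I]
  -- slit conditions
  have hsin : 0 < Real.sin θ := Real.sin_pos_of_pos_of_lt_pi hθ (by linarith)
  have hω3 : ω ^ 3 = Complex.exp (((3 * θ : ℝ) : ℂ) * Complex.I) := by
    rw [hω, ← Complex.exp_nat_mul]
    push_cast
    ring_nf
  have hωi : ω⁻¹ = Complex.exp (((-θ : ℝ) : ℂ) * Complex.I) := by
    rw [hω, ← Complex.exp_neg]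
    push_cast
    ring_nf
  have sl1 : ω.im ≠ 0 ∨ ω.re < 0 := by
    left
    rw [hω, Complex.exp_ofReal_mul_I_im]
    exact hsin.ne'
  have slm : ω⁻¹.im ≠ 0 ∨ ω⁻¹.re < 0 := by
    left
    rw [hωi, Complex.exp_ofReal_mul_I_im, Real.sin_neg]
    linarith
  have sl3 : (ω ^ 3).im ≠ 0 ∨ (ω ^ 3).re < 0 := by
    rw [hω3, Complex.exp_ofReal_mul_I_im, Complex.exp_ofReal_mul_I_re]
    rcases lt_trichotomy (3 * θ) π with h | h | h
    · left
      exact (Real.sin_pos_of_pos_of_lt_pi (by linarith) h).ne'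
    · right
      rw [h]
      simp
    · left
      have := Real.sin_pos_of_pos_of_lt_pi (x := 3 * θ - π) (by linarith) (by linarith)
      rw [Real.sin_sub_pi] at this
      linarith
  -- sets
  set A := z0 + d with hA
  set B := z0 + d * ω ^ 2 with hB
  have hA1 := h0 1 one_pos le_rfl
  have hB1 := h2 1 one_pos le_rfl
  have hP1 := h1 1 one_pos le_rfl
  have hQ1 := hm 1 one_pos le_rfl
  simp only [Complex.ofReal_one, one_mul] at hA1 hB1 hP1 hQ1
  obtain ⟨ε, hε, hεA, hεB, hεP, hεQ⟩ : ∃ ε > 0, c + ε ≤ u A ∧ c + ε ≤ u B ∧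
      u (z0 + d * ω) ≤ c - ε ∧ u (z0 + d * ω⁻¹) ≤ c - ε := by
    refine ⟨min (min (u A - c) (u B - c)) (min (c - u (z0 + d * ω)) (c - u (z0 + d * ω⁻¹))),
      ?_, ?_, ?_, ?_, ?_⟩
    · simp only [gt_iff_lt, lt_min_iff, sub_pos]
      exact ⟨⟨hA1.2, hB1.2⟩, hP1.2, hQ1.2⟩
    · have := min_le_left (min (u A - c) (u B - c))
        (min (c - u (z0 + d * ω)) (c - u (z0 + d * ω⁻¹)))
      have := min_le_left (u A - c) (u B - c)
      linarith
    · have := min_le_left (min (u A - c) (u B - c))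
        (min (c - u (z0 + d * ω)) (c - u (z0 + d * ω⁻¹)))
      have := min_le_right (u A - c) (u B - c)
      linarith
    · have := min_le_right (min (u A - c) (u B - c))
        (min (c - u (z0 + d * ω)) (c - u (z0 + d * ω⁻¹)))
      have := min_le_left (c - u (z0 + d * ω)) (c - u (z0 + d * ω⁻¹))
      linarith
    · have := min_le_right (min (u A - c) (u B - c))
        (min (c - u (z0 + d * ω)) (c - u (z0 + d * ω⁻¹)))
      have := min_le_right (c - u (z0 + d * ω)) (c - u (z0 + d * ω⁻¹))
      linarith
  set Kp := {z ∈ S | c + ε ≤ u z} with hKp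
  set Km := {z ∈ S | u z ≤ c - ε} with hKm
  have hKpc : IsCompact Kp := hS.of_isClosed_subset
    (hu.preimage_isClosed_of_isClosed hS.isClosed (isClosed_Ici (a := c + ε))) (fun z hz => hz.1)
  have hAK : A ∈ Kp := ⟨hA1.1, hεA⟩
  have hBK : B ∈ Kp := ⟨hB1.1, hεB⟩
  have hz0K : z0 ∉ Kp := by
    intro h
    have := h.2
    linarith
  obtain ⟨ρ, hρ, hρK⟩ : ∃ ρ > 0, ∀ z ∈ Kp, ρ ≤ ‖z - z0‖ := by
    obtain ⟨ρ, hρ, hb⟩ := Metric.isOpen_iff.1 hKpc.isClosed.isOpen_compl z0 hz0K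
    refine ⟨ρ, hρ, fun z hz => ?_⟩
    by_contra! hlt
    exact hb (by rw [mem_ball, dist_eq_norm]; exact hlt) hz
  set X := Kp ∪ ((fun r : ℝ => z0 + r * d) '' Icc 0 1 ∪
    (fun r : ℝ => z0 + r * (d * ω ^ 2)) '' Icc 0 1) with hX
  have hXc : IsCompact X := hKpc.union
    ((isCompact_Icc.image (by fun_prop)).union (isCompact_Icc.image (by fun_prop)))
  have hXu : ∀ z ∈ X, c ≤ u z := by
    rintro z (hz | ⟨r, hr, rfl⟩ | ⟨r, hr, rfl⟩)
    · linarith [hz.2]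
    · rcases hr.1.eq_or_lt with h | h
      · simp [← h, hz0]
      · exact (h0 r h hr.2).2.le
    · rcases hr.1.eq_or_lt with h | h
      · simp [← h, hz0]
      · exact (h2 r h hr.2).2.le
  have hdn : 0 < ‖d‖ := norm_pos_iff.2 hd
  -- main identity for small s
  have main : ∀ s : ℝ, 0 < s → s < 1 → 3 * s * ‖d‖ < ρ →
      Complex.log ((B - (z0 + s * (d * ω))) / (B - (z0 + s * (d * ω⁻¹)))) -
      Complex.log ((A - (z0 + s * (d * ω))) / (A - (z0 + s * (d * ω⁻¹)))) =
      2 * Complex.log (s - ω) - Complex.log (s - ω ^ 3) - Complex.log (s - ω⁻¹) := by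
    intro s hs hs1 hsρ
    set p := z0 + s * (d * ω) with hp
    set q := z0 + s * (d * ω⁻¹) with hq
    set C := Km ∪ (fun r : ℝ => z0 + r * (d * ω)) '' Icc s 1 ∪
      (fun r : ℝ => z0 + r * (d * ω⁻¹)) '' Icc s 1 with hC
    have hCp : IsPreconnected C := by
      refine IsPreconnected.union (z0 + d * ω⁻¹) ?_ ?_ (IsPreconnected.union (z0 + d * ω) ?_ ?_
        (hminus _) (isPreconnected_Icc.image _ (by fun_prop)))
        (isPreconnected_Icc.image _ (by fun_prop))
      · left
        exact ⟨hQ1.1, hεQ⟩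
      · exact ⟨1, ⟨hs1.le, le_rfl⟩, by simp⟩
      · exact ⟨hP1.1, hεP⟩
      · exact ⟨1, ⟨hs1.le, le_rfl⟩, by simp⟩
    have hCX : Disjoint C X := by
      rw [Set.disjoint_left]
      intro z hz hzX
      have h3 := hXu z hzX
      rcases hz with (hz | ⟨r, hr, rfl⟩) | ⟨r, hr, rfl⟩
      · linarith [hz.2]
      · linarith [(h1 r (by linarith [hr.1]) hr.2).2]
      · linarith [(hm r (by linarith [hr.1]) hr.2).2]
    have hpC : p ∈ C := Or.inl (Or.inr ⟨s, ⟨le_rfl, hs1.le⟩, rfl⟩)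
    have hqC : q ∈ C := Or.inr ⟨s, ⟨le_rfl, hs1.le⟩, rfl⟩
    obtain ⟨L, hL, hLe⟩ := log_quot hXc hCp hCX hpC hqC
    -- on Kp
    have hpn : ‖p - z0‖ = s * ‖d‖ := by
      simp [hp, hωn, abs_of_pos hs]
    have hqn : ‖q - z0‖ = s * ‖d‖ := by
      simp [hq, hωn, abs_of_pos hs]
    have hqne : ∀ z ∈ Kp, z - q ≠ 0 := by
      intro z hz h
      rw [sub_eq_zero] at h
      have := hρK z hz
      rw [h, hqn] at this
      nlinarith
    have hslK : ∀ z ∈ Kp, (z - p) / (z - q) ∈ Complex.slitPlane := by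
      intro z hz
      have e : (z - p) / (z - q) = 1 - (p - q) / (z - q) := by
        rw [eq_sub_iff_add_eq, ← add_div, sub_add_sub_cancel, div_self (hqne z hz)]
      have n1 : ‖p - q‖ ≤ 2 * (s * ‖d‖) := by
        calc ‖p - q‖ = ‖(p - z0) - (q - z0)‖ := by ring_nf
          _ ≤ ‖p - z0‖ + ‖q - z0‖ := norm_sub_le _ _
          _ = _ := by rw [hpn, hqn]; ring
      have n2 : ρ - s * ‖d‖ ≤ ‖z - q‖ := by
        have : ‖z - z0‖ ≤ ‖z - q‖ + ‖q - z0‖ := by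
          calc ‖z - z0‖ = ‖(z - q) + (q - z0)‖ := by ring_nf
            _ ≤ _ := norm_add_le _ _
        linarith [hρK z hz]
      have : ‖(p - q) / (z - q)‖ < 1 := by
        rw [norm_div, div_lt_one (by nlinarith)]
        nlinarith
      left
      rw [e]
      have := (Complex.abs_re_le_norm ((p - q) / (z - q)))
      have := le_abs_self ((p - q) / (z - q)).re
      simp only [Complex.sub_re, Complex.one_re]
      linarith
    obtain ⟨n, hn⟩ := log_unique (hplus (c + ε)) (L1 := L)
      (L2 := fun z => Complex.log ((z - p) / (z - q))) (hL.mono subset_union_left)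
      (ContinuousOn.clog (ContinuousOn.div (by fun_prop) (by fun_prop) hqne) hslK) (by
        intro z hz
        rw [hLe z (Or.inl hz), Complex.exp_log (Complex.slitPlane_ne_zero (hslK z hz))])
    have eA := hn A hAK
    have eB := hn B hBK
    -- slit logs along rays
    have hcl : ∀ v : ℂ, (v.im ≠ 0 ∨ v.re < 0) →
        ContinuousOn (fun r : ℝ => Complex.log ((s : ℂ) - r * v)) (Icc 0 1) := by
      intro v hv
      apply ContinuousOn.clog (by fun_prop)
      intro r hr
      exact slit_aux hv hr.1 hs.le (by linarith [hr.1])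
    have hex : ∀ v : ℂ, (v.im ≠ 0 ∨ v.re < 0) → ∀ r ∈ Icc (0 : ℝ) 1,
        Complex.exp (Complex.log ((s : ℂ) - r * v)) = (s : ℂ) - r * v := by
      intro v hv r hr
      exact Complex.exp_log (Complex.slitPlane_ne_zero
        (slit_aux hv hr.1 hs.le (by linarith [hr.1])))
    have hnz : ∀ v : ℂ, (v.im ≠ 0 ∨ v.re < 0) → ∀ r ∈ Icc (0 : ℝ) 1, (s : ℂ) - r * v ≠ 0 := by
      intro v hv r hr
      exact Complex.slitPlane_ne_zero (slit_aux hv hr.1 hs.le (by linarith [hr.1]))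
    have hexpω : Complex.exp (2 * (θ * Complex.I)) = ω ^ 2 := by
      rw [hω, ← Complex.exp_nat_mul]
      push_cast
      rfl
    obtain ⟨n1, hn1⟩ := log_unique (isPreconnected_Icc (a := (0 : ℝ)) (b := 1))
      (L1 := fun r : ℝ => L (z0 + r * d))
      (L2 := fun r : ℝ => 2 * (θ * Complex.I) +
        (Complex.log ((s : ℂ) - r * ω⁻¹) - Complex.log ((s : ℂ) - r * ω)))
      (hL.comp (by fun_prop) (fun r hr => Or.inr (Or.inl ⟨r, hr, rfl⟩)))
      (continuousOn_const.add ((hcl _ slm).sub (hcl _ sl1))) (by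
        intro r hr
        rw [hLe _ (Or.inr (Or.inl ⟨r, hr, rfl⟩)), Complex.exp_add, Complex.exp_sub,
          hex _ slm r hr, hex _ sl1 r hr, hexpω]
        have e1 : z0 + r * d - p = - (d * ω * (s - r * ω⁻¹)) := by
          rw [hp]
          field_simp
          ring
        have e2 : z0 + r * d - q = - (d * ω⁻¹ * (s - r * ω)) := by
          rw [hq]
          field_simp
          ring
        beta_reduce
        rw [e1, e2]
        have := hnz _ sl1 r hr
        field_simp)
    obtain ⟨n2, hn2⟩ := log_unique (isPreconnected_Icc (a := (0 : ℝ)) (b := 1))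
      (L1 := fun r : ℝ => L (z0 + r * (d * ω ^ 2)))
      (L2 := fun r : ℝ => 2 * (θ * Complex.I) +
        (Complex.log ((s : ℂ) - r * ω) - Complex.log ((s : ℂ) - r * ω ^ 3)))
      (hL.comp (by fun_prop) (fun r hr => Or.inr (Or.inr ⟨r, hr, rfl⟩)))
      (continuousOn_const.add ((hcl _ sl1).sub (hcl _ sl3))) (by
        intro r hr
        rw [hLe _ (Or.inr (Or.inr ⟨r, hr, rfl⟩)), Complex.exp_add, Complex.exp_sub,
          hex _ sl3 r hr, hex _ sl1 r hr, hexpω]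
        have e1 : z0 + r * (d * ω ^ 2) - p = - (d * ω * (s - r * ω)) := by
          rw [hp]
          ring
        have e2 : z0 + r * (d * ω ^ 2) - q = - (d * ω⁻¹ * (s - r * ω ^ 3)) := by
          rw [hq]
          field_simp
          ring
        beta_reduce
        rw [e1, e2]
        have := hnz _ sl3 r hr
        field_simp)
    have a0 := hn1 0 ⟨le_rfl, zero_le_one⟩
    have a1 := hn1 1 ⟨zero_le_one, le_rfl⟩
    have b0 := hn2 0 ⟨le_rfl, zero_le_one⟩
    have b1 := hn2 1 ⟨zero_le_one, le_rfl⟩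
    simp only [Complex.ofReal_zero, zero_mul, sub_zero, add_zero, sub_self, Complex.ofReal_one,
      one_mul] at a0 a1 b0 b1
    rw [← hA] at a1
    rw [← hB] at b1
    linear_combination b1 - a1 + a0 - b0 - eB + eA
  -- limits
  have lim1 : ∀ v : ℂ, v ≠ 0 → Tendsto (fun s : ℝ => Complex.log
      ((z0 + v - (z0 + s * (d * ω))) / (z0 + v - (z0 + s * (d * ω⁻¹))))) (𝓝[>] 0) (𝓝 0) := by
    intro v hv
    have : ContinuousAt (fun s : ℝ => Complex.log
      ((z0 + v - (z0 + s * (d * ω))) / (z0 + v - (z0 + s * (d * ω⁻¹))))) 0 := by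
      apply ContinuousAt.clog
      · apply ContinuousAt.div (by fun_prop) (by fun_prop)
        simpa using hv
      · simp [hv]
    have h3 := this.tendsto
    simp [hv] at h3
    simp only [add_sub_add_left_eq_sub]
    exact h3.mono_left nhdsWithin_le_nhds
  have lim2 : ∀ v : ℂ, (v.im ≠ 0 ∨ v.re < 0) → Tendsto (fun s : ℝ => Complex.log ((s : ℂ) - v))
      (𝓝[>] 0) (𝓝 (Complex.log (-v))) := by
    intro v hv
    have : ContinuousAt (fun s : ℝ => Complex.log ((s : ℂ) - v)) 0 := by
      apply ContinuousAt.clog (by fun_prop)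
      simpa using slit_aux hv (s := 0) (r := 1) (by norm_num) le_rfl (by norm_num)
    have h3 := this.tendsto
    simp only [Complex.ofReal_zero, zero_sub] at h3
    exact h3.mono_left nhdsWithin_le_nhds
  have hev : ∀ᶠ s : ℝ in 𝓝[>] 0, 0 < s ∧ s < 1 ∧ 3 * s * ‖d‖ < ρ := by
    have e1 : ∀ᶠ s : ℝ in 𝓝[>] 0, 0 < s := self_mem_nhdsWithin
    have e2 : ∀ᶠ s : ℝ in 𝓝 0, s < 1 := eventually_lt_nhds zero_lt_one
    have e3 : ∀ᶠ s : ℝ in 𝓝 0, 3 * s * ‖d‖ < ρ := by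
      have : ContinuousAt (fun s : ℝ => 3 * s * ‖d‖) 0 := by fun_prop
      apply this.eventually_lt_const
      simpa using hρ
    filter_upwards [e1, nhdsWithin_le_nhds e2, nhdsWithin_le_nhds e3] with s a b c
    exact ⟨a, b, c⟩
  have T1 := (lim1 (d * ω ^ 2) (by positivity)).sub (lim1 d hd)
  have T2 := (((lim2 ω sl1).const_mul 2).sub (lim2 _ sl3)).sub (lim2 _ slm)
  have T3 := T1.congr' (by
    filter_upwards [hev] with s hs
    exact main s hs.1 hs.2.1 hs.2.2)
  have heq := tendsto_nhds_unique T3 T2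
  have l1 : Complex.log (-ω) = ((θ - π : ℝ) : ℂ) * Complex.I := by
    have : -ω = Complex.exp (((θ - π : ℝ) : ℂ) * Complex.I) := by
      push_cast
      rw [sub_mul, Complex.exp_sub, Complex.exp_pi_mul_I, hω, div_neg, div_one]
    rw [this, Complex.log_exp] <;> simp <;> linarith
  have l3 : Complex.log (-ω ^ 3) = ((3 * θ - π : ℝ) : ℂ) * Complex.I := by
    have : -ω ^ 3 = Complex.exp (((3 * θ - π : ℝ) : ℂ) * Complex.I) := by
      rw [hω3]
      push_cast
      rw [sub_mul, Complex.exp_sub, Complex.exp_pi_mul_I, div_neg, div_one]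
    rw [this, Complex.log_exp] <;> simp <;> linarith
  have lm : Complex.log (-ω⁻¹) = ((π - θ : ℝ) : ℂ) * Complex.I := by
    have : -ω⁻¹ = Complex.exp (((π - θ : ℝ) : ℂ) * Complex.I) := by
      rw [hωi]
      push_cast
      rw [sub_mul, Complex.exp_sub, Complex.exp_pi_mul_I, neg_mul, Complex.exp_neg, inv_eq_one_div, neg_div', div_eq_div_iff] <;> simp
    rw [this, Complex.log_exp] <;> simp <;> linarith
  rw [l1, l3, lm] at heq
  have : (2 * π * Complex.I : ℂ) = 0 := by
    push_cast at heq
    linear_combination heq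
  exact Complex.two_pi_I_ne_zero this

end JS

namespace JS
open Set Filter Topology Metric Real MeasureTheory

lemma Harm.analytic {u : ℂ → ℝ} {D : Set ℂ} (hD : IsOpen D) (hu : Harm u D) :
    AnalyticOnNhd ℝ u D := by
  intro z hz
  obtain ⟨r, hr, hrD⟩ := (small_ball hD hz).exists
  obtain ⟨G, hG, hGu⟩ := hu.holo hr hrD
  have h1 : AnalyticAt ℂ G z := hG.analyticAt (ball_mem_nhds z hr)
  have h2 : AnalyticAt ℝ G z := h1.restrictScalars
  have h3 : AnalyticAt ℝ (fun w => (G w).re) z :=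
    (Complex.reCLM.analyticAt (G z)).comp h2
  refine h3.congr ?_
  filter_upwards [ball_mem_nhds z hr] with w hw
  exact (hGu w hw).symm

lemma no_crit {γ : ℝ → ℂ} (h : Loop γ) {D : Set ℂ} (hD : IsOpen D) (hDc : IsPreconnected D)
    (hb : Bornology.IsBounded D) (hfr : frontier D = range γ) {u : ℂ → ℝ} (hu : Harm u D)
    (huc : ContinuousOn u (closure D)) {τ : ℝ} (hbd : ∀ t, u (γ t) = Real.cos (t - τ))
    {z0 : ℂ} {R : ℝ} (hR : 0 < R) (hRD : closedBall z0 R ⊆ D) {G : ℂ → ℂ}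
    (hG : DifferentiableOn ℂ G (ball z0 R)) (hGu : ∀ z ∈ ball z0 R, u z = (G z).re) :
    deriv G z0 ≠ 0 := by
  intro hder
  have hz0D : z0 ∈ D := hRD (mem_closedBall_self hR.le)
  have hJcl : range γ ⊆ closure D := hfr ▸ frontier_subset_closure
  have hGan : AnalyticAt ℂ G z0 := hG.analyticAt (ball_mem_nhds z0 hR)
  have hfan : AnalyticAt ℂ (fun z => G z - G z0) z0 := hGan.sub analyticAt_const
  have hnc : ¬ ∀ᶠ z in 𝓝 z0, G z - G z0 = 0 := by
    intro hev
    have hev' : u =ᶠ[𝓝 z0] fun _ => (G z0).re := by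
      filter_upwards [hev, ball_mem_nhds z0 hR] with z h1 h2
      rw [hGu z h2, sub_eq_zero.1 h1]
    have hEq := (hu.analytic hD).eqOn_of_preconnected_of_eventuallyEq analyticOnNhd_const hDc
      hz0D hev'
    have hEq2 : EqOn u (fun _ => (G z0).re) (closure D) :=
      hEq.of_subset_closure huc continuousOn_const subset_closure subset_rfl
    have e1 := hEq2 (hJcl (mem_range_self τ))
    have e2 := hEq2 (hJcl (mem_range_self (τ + π)))
    rw [hbd] at e1 e2
    simp at e1 e2
    linarith
  obtain ⟨n, g, hgan, hg0, hgeq⟩ := hfan.exists_eventuallyEq_pow_smul_nonzero_iff.2 hnc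
  have hn2 : 2 ≤ n := by
    by_contra! hlt
    interval_cases n
    · have := hgeq.self_of_nhds
      simp at this
      exact hg0 this.symm
    · have h1 : HasDerivAt (fun z => (z - z0) ^ 1 • g z) (g z0) z0 := by
        have := ((hasDerivAt_id z0).sub_const z0).mul hgan.differentiableAt.hasDerivAt
        simp only [id, sub_self, one_mul, zero_mul, add_zero] at this
        simp only [pow_one, smul_eq_mul]
        exact this
      have h2 : HasDerivAt (fun z => G z - G z0) (deriv G z0) z0 :=
        hGan.differentiableAt.hasDerivAt.sub_const _
      have h3 := (h1.congr_of_eventuallyEq hgeq).unique h2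
      rw [hder] at h3
      exact hg0 h3
  have hn0 : 0 < n := by omega
  set k := g z0 with hk
  obtain ⟨e, he⟩ := IsAlgClosed.exists_pow_nat_eq (k⁻¹) hn0
  have he0 : e ≠ 0 := by
    rintro rfl
    rw [zero_pow hn0.ne'] at he
    exact hg0 (inv_eq_zero.1 he.symm)
  have hre : ∀ᶠ z in 𝓝 z0, 0 < (k⁻¹ * g z).re := by
    have : ContinuousAt (fun z => (k⁻¹ * g z).re) z0 :=
      Complex.continuous_re.continuousAt.comp (continuousAt_const.mul hgan.continuousAt)
    apply this.eventually_const_lt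
    beta_reduce
    rw [← hk, inv_mul_cancel₀ hg0]
    simp
  obtain ⟨ρ, hρ, hρs⟩ := Metric.eventually_nhds_iff.1
    ((hre.and hgeq).and (ball_mem_nhds z0 hR))
  set t : ℝ := ρ / (2 * ‖e‖) with ht
  have hen : 0 < ‖e‖ := norm_pos_iff.2 he0
  have ht0 : 0 < t := by positivity
  have key : ∀ (v : ℂ) (σ : ℝ), ‖v‖ = 1 → v ^ n = σ → ∀ r : ℝ, 0 < r → r ≤ 1 →
      z0 + r * ((t * e) * v) ∈ D ∧ ∃ y > 0, u (z0 + r * ((t * e) * v)) = u z0 + σ * y := by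
    intro v σ hv hvσ r hr hr1
    have hdist : dist (z0 + r * ((t * e) * v)) z0 < ρ := by
      rw [dist_eq_norm, add_sub_cancel_left, norm_mul, norm_mul, norm_mul, hv, Complex.norm_real,
        Complex.norm_real, Real.norm_eq_abs, Real.norm_eq_abs, abs_of_pos hr, abs_of_pos ht0]
      have : t * ‖e‖ = ρ / 2 := by
        rw [ht]
        field_simp
      nlinarith
    obtain ⟨⟨h1, h2⟩, h3⟩ := hρs hdist
    set z := z0 + r * ((t * e) * v) with hz
    refine ⟨hRD (ball_subset_closedBall h3), (r * t) ^ n * (k⁻¹ * g z).re, by positivity, ?_⟩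
    rw [hGu z h3, hGu z0 (mem_ball_self hR)]
    have h4 : G z = G z0 + (z - z0) ^ n * g z := by
      rw [← smul_eq_mul, ← h2]
      ring
    have h5 : (z - z0) ^ n * g z = ((σ * (r * t) ^ n : ℝ) : ℂ) * (k⁻¹ * g z) := by
      rw [hz, add_sub_cancel_left]
      push_cast
      rw [← hvσ, ← he]
      ring
    rw [h4, h5, Complex.add_re, Complex.re_ofReal_mul]
    ring
  set ω := Complex.exp (((π / n : ℝ) : ℂ) * Complex.I) with hω
  have hωn : ω ^ n = -1 := by
    rw [hω, ← Complex.exp_nat_mul, ← Complex.exp_pi_mul_I]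
    congr 1
    push_cast
    have : (n : ℂ) ≠ 0 := by exact_mod_cast hn0.ne'
    field_simp
  have hωa : ‖ω‖ = 1 := by rw [hω, Complex.norm_exp_ofReal_mul_I]
  have hn2' : (2 : ℝ) ≤ n := by exact_mod_cast hn2
  refine crit_core (S := closure D) hb.isCompact_closure huc
    (fun c' => level_conn h hD hb hfr hu huc hbd c') (fun c' => ?_) (z0 := z0) (d := t * e)
    (c := u z0) (θ := π / n) (by positivity) ?_ rfl hω ?_ ?_ ?_ ?_ ?_
  · have := level_conn h hD hb hfr hu.neg huc.neg (τ := τ + π) (fun s => by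
      rw [hbd, ← sub_sub, Real.cos_sub_pi]) (-c')
    convert this using 3
    simp
  · exact div_le_div_of_nonneg_left Real.pi_pos.le (by norm_num) hn2'
  · have : (t : ℂ) ≠ 0 := by exact_mod_cast ht0.ne'
    positivity
  · intro r hr hr1
    obtain ⟨a, y, hy, b⟩ := key 1 1 (by simp) (by simp) r hr hr1
    rw [mul_one] at a b
    refine ⟨subset_closure a, ?_⟩
    rw [b]
    linarith
  · intro r hr hr1
    obtain ⟨a, y, hy, b⟩ := key (ω ^ 2) 1 (by simp [hωa]) (by
      rw [← pow_mul, mul_comm, pow_mul, hωn]; simp) r hr hr1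
    refine ⟨subset_closure a, ?_⟩
    rw [b]
    linarith
  · intro r hr hr1
    obtain ⟨a, y, hy, b⟩ := key ω (-1) hωa (by simp [hωn]) r hr hr1
    refine ⟨subset_closure a, ?_⟩
    rw [b]
    linarith
  · intro r hr hr1
    obtain ⟨a, y, hy, b⟩ := key ω⁻¹ (-1) (by simp [hωa]) (by
      rw [inv_pow, hωn]; norm_num) r hr hr1
    refine ⟨subset_closure a, ?_⟩
    rw [b]
    linarith

end JS

namespace JS
open Set Filter Topology Metric Real MeasureTheory

/-- Boundary data together with the harmonic extension. -/
lemma harm_ext {γ : ℝ → ℂ} (h : Loop γ) {D : Set ℂ} (hD : IsOpen D) (hne : D.Nonempty)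
    (hb : Bornology.IsBounded D) (hfr : frontier D = range γ) :
    ∃ u0 u1 : ℂ → ℝ, Harm u0 D ∧ Harm u1 D ∧ ContinuousOn u0 (closure D) ∧
      ContinuousOn u1 (closure D) ∧ (∀ t, u0 (γ t) = Real.cos t) ∧ ∀ t, u1 (γ t) = Real.sin t := by
  have hpi := Real.pi_pos
  have hdisj : ∀ t, γ t ∉ D := by
    intro t ht
    have : γ t ∈ frontier D := hfr ▸ mem_range_self t
    rw [hD.frontier_eq] at this
    exact this.2 ht
  have hB : ∀ x ∈ frontier D, Barrier D x := by
    intro x hx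
    rw [hfr] at hx
    obtain ⟨t0, rfl⟩ := hx
    have := barrier_of_curve hD (γ := fun θ => γ (t0 + θ)) (h.cont.comp (by fun_prop))
      (fun θ => hdisj _) (θ1 := π) hpi.le (by
        intro he
        have := h.injOn (a := t0) (b := t0 + π) (by linarith) ⟨by linarith, le_rfl⟩
          ⟨by linarith, by linarith⟩ he
        linarith)
    simpa using this
  obtain ⟨M, hM, hMe⟩ := descend (isCompact_Icc (a := 0) (b := 0 + 2 * π)) h.cont.continuousOn
    (M := fun t : ℝ => Complex.exp (t * Complex.I)) (by fun_prop) (by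
      intro s _ t _ hst
      obtain ⟨n, rfl⟩ := (h.eq_iff s t).1 hst
      push_cast
      rw [add_mul, Complex.exp_add, show (n : ℂ) * (2 * π) * Complex.I = n * (2 * π * Complex.I) by
        ring, Complex.exp_int_mul_two_pi_mul_I, mul_one])
  rw [← h.range_eq 0, ← hfr] at hM
  have hMt : ∀ t, M (γ t) = Complex.exp (t * Complex.I) := by
    intro t
    have : γ t ∈ γ '' Icc 0 (0 + 2 * π) := by
      rw [← h.range_eq 0]
      exact mem_range_self t
    obtain ⟨s, hs, hst⟩ := this
    rw [← hst, hMe s hs]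
    obtain ⟨n, rfl⟩ := (h.eq_iff s t).1 hst
    push_cast
    rw [add_mul, Complex.exp_add, show (n : ℂ) * (2 * π) * Complex.I = n * (2 * π * Complex.I) by
        ring, Complex.exp_int_mul_two_pi_mul_I, mul_one]
  obtain ⟨u0, a1, a2, a3⟩ := dirichlet hD hb hne hB
    ⟨fun x => (M x).re, Complex.continuous_re.comp (continuousOn_iff_continuous_domRestrict.1 hM)⟩
  obtain ⟨u1, b1, b2, b3⟩ := dirichlet hD hb hne hB
    ⟨fun x => (M x).im, Complex.continuous_im.comp (continuousOn_iff_continuous_domRestrict.1 hM)⟩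
  refine ⟨u0, u1, a1, b1, a2, b2, fun t => ?_, fun t => ?_⟩
  · have := a3 ⟨γ t, hfr ▸ mem_range_self t⟩
    rw [this]
    simp only [ContinuousMap.coe_mk, hMt, Complex.exp_ofReal_mul_I_re]
  · have := b3 ⟨γ t, hfr ▸ mem_range_self t⟩
    rw [this]
    simp only [ContinuousMap.coe_mk, hMt, Complex.exp_ofReal_mul_I_im]

/-- A complex number of modulus `‖w‖` as seen from its direction. -/
lemma dir_re (w : ℂ) : Real.cos w.arg * w.re + Real.sin w.arg * w.im = ‖w‖ := by
  have h1 := Complex.norm_mul_cos_arg w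
  have h2 := Complex.norm_mul_sin_arg w
  rw [← h1, ← h2]
  have := Real.sin_sq_add_cos_sq w.arg
  linear_combination ‖w‖ * this

lemma local_homeo {γ : ℝ → ℂ} (h : Loop γ) {D : Set ℂ} (hD : IsOpen D) (hDc : IsPreconnected D)
    (hb : Bornology.IsBounded D) (hfr : frontier D = range γ) {u0 u1 : ℂ → ℝ}
    (h0 : Harm u0 D) (h1 : Harm u1 D) (hc0 : ContinuousOn u0 (closure D))
    (hc1 : ContinuousOn u1 (closure D)) (hb0 : ∀ t, u0 (γ t) = Real.cos t)
    (hb1 : ∀ t, u1 (γ t) = Real.sin t) :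
    IsLocalHomeomorphOn (fun z => (u0 z : ℂ) + u1 z * Complex.I) D := by
  intro z hz
  obtain ⟨r, hr, hrD⟩ := (small_ball hD hz).exists
  obtain ⟨G0, hG0, hu0⟩ := h0.holo hr hrD
  obtain ⟨G1, hG1, hu1⟩ := h1.holo hr hrD
  have hbn := ball_mem_nhds z hr
  have s0 : HasStrictDerivAt G0 (deriv G0 z) z := (hG0.analyticAt hbn).hasStrictDerivAt
  have s1 : HasStrictDerivAt G1 (deriv G1 z) z := (hG1.analyticAt hbn).hasStrictDerivAt
  set a0 := deriv G0 z with ha0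
  set a1 := deriv G1 z with ha1
  -- independence
  have ind : ∀ τ : ℝ, (Real.cos τ : ℂ) * a0 + Real.sin τ * a1 ≠ 0 := by
    intro τ
    have hu : Harm (fun z => Real.cos τ * u0 z + Real.sin τ * u1 z) D :=
      (h0.smul (Real.cos τ)).add hD (h1.smul (Real.sin τ))
    have hder : HasDerivAt (fun z => (Real.cos τ : ℂ) * G0 z + Real.sin τ * G1 z)
        ((Real.cos τ : ℂ) * a0 + Real.sin τ * a1) z :=
      (s0.hasDerivAt.const_mul _).add (s1.hasDerivAt.const_mul _)
    rw [← hder.deriv]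
    refine no_crit h hD hDc hb hfr hu ((hc0.const_mul _).add (hc1.const_mul _)) (τ := τ) ?_ hr hrD
      ((hG0.const_mul _).add (hG1.const_mul _)) ?_
    · intro t
      simp only [hb0, hb1, Real.cos_sub]
      ring
    · intro w hw
      simp only [hu0 w hw, hu1 w hw, Complex.add_re, Complex.re_ofReal_mul]
  let T : ℂ →L[ℝ] ℂ := Complex.ofRealCLM.comp (Complex.reCLM.comp
      ((ContinuousLinearMap.toSpanSingleton ℂ a0).restrictScalars ℝ)) +
    Complex.I • Complex.ofRealCLM.comp (Complex.reCLM.comp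
      ((ContinuousLinearMap.toSpanSingleton ℂ a1).restrictScalars ℝ))
  have hT : ∀ v, T v = ((v * a0).re : ℂ) + Complex.I * ((v * a1).re : ℂ) := by
    intro v
    simp [T]
  have hTinj : Function.Injective T := by
    rw [injective_iff_map_eq_zero]
    intro v hv
    rw [hT] at hv
    have e0 : (v * a0).re = 0 := by
      have := congrArg Complex.re hv
      simpa using this
    have e1 : (v * a1).re = 0 := by
      have := congrArg Complex.im hv
      simpa using this
    by_contra hv0
    set w : ℂ := ⟨(v * a1).im, -(v * a0).im⟩ with hw
    have hww : w.re * (v * a0) + w.im * (v * a1) = 0 := by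
      apply Complex.ext
      · rw [Complex.add_re, Complex.re_ofReal_mul, Complex.re_ofReal_mul, e0, e1]
        simp
      · rw [Complex.add_im, Complex.im_ofReal_mul, Complex.im_ofReal_mul]
        simp only [hw, Complex.zero_im]
        ring
    have hwn : w ≠ 0 := by
      intro hw0
      have i0 : (v * a0).im = 0 := by
        have : -(v * a0).im = 0 := congrArg Complex.im hw0
        linarith
      have : v * a0 = 0 := Complex.ext e0 i0
      rcases mul_eq_zero.1 this with h | h
      · exact hv0 h
      · apply ind 0
        simp [h]
    apply ind w.arg
    have hn : (‖w‖ : ℂ) ≠ 0 := by exact_mod_cast (norm_pos_iff.2 hwn).ne'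
    have e3 : ((‖w‖ : ℝ) : ℂ) * Real.cos w.arg = w.re := by
      exact_mod_cast Complex.norm_mul_cos_arg w
    have e4 : ((‖w‖ : ℝ) : ℂ) * Real.sin w.arg = w.im := by
      exact_mod_cast Complex.norm_mul_sin_arg w
    have : v * ‖w‖ * ((Real.cos w.arg : ℂ) * a0 + Real.sin w.arg * a1) = 0 := by
      rw [← hww, ← e3, ← e4]
      ring
    rcases mul_eq_zero.1 this with h | h
    · exact absurd h (mul_ne_zero hv0 hn)
    · exact h
  let Te : ℂ ≃L[ℝ] ℂ := (LinearEquiv.ofInjectiveEndo (T : ℂ →ₗ[ℝ] ℂ) hTinj).toContinuousLinearEquiv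
  have hTe : (Te : ℂ →L[ℝ] ℂ) = T := by
    ext v
    rfl
  have hst : HasStrictFDerivAt (fun w => ((G0 w).re : ℂ) + (G1 w).re * Complex.I)
      (Te : ℂ →L[ℝ] ℂ) z := by
    rw [hTe]
    have f0 := s0.hasStrictFDerivAt.restrictScalars ℝ
    have f1 := s1.hasStrictFDerivAt.restrictScalars ℝ
    have g0 := (Complex.ofRealCLM.comp Complex.reCLM).hasStrictFDerivAt.comp z f0
    have g1 := (Complex.ofRealCLM.comp Complex.reCLM).hasStrictFDerivAt.comp z f1
    have := g0.add (g1.const_smul Complex.I)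
    have hfun : (fun w => ((G0 w).re : ℂ) + (G1 w).re * Complex.I) =
        ((fun x => (Complex.ofRealCLM.comp Complex.reCLM) (G0 x)) +
          Complex.I • fun x => (Complex.ofRealCLM.comp Complex.reCLM) (G1 x)) := by
      funext w
      simp [mul_comm]
    rw [hfun]
    exact this
  have hst' : HasStrictFDerivAt (fun z => (u0 z : ℂ) + u1 z * Complex.I)
      (Te : ℂ →L[ℝ] ℂ) z := by
    refine hst.congr_of_eventuallyEq ?_
    filter_upwards [hbn] with w hw
    rw [hu0 w hw, hu1 w hw]
  exact ⟨hst'.toOpenPartialHomeomorph, hst'.mem_toOpenPartialHomeomorph_source, rfl⟩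

end JS

namespace JS
open Set Filter Topology Metric Real MeasureTheory

/-- A proper local homeomorphism of a connected open set onto the unit disc is bijective. -/
lemma bij_of_proper {D : Set ℂ} (hD : IsOpen D) (hDc : IsConnected D)
    (hb : Bornology.IsBounded D) {k : ℂ → ℂ} (hk : ContinuousOn k (closure D))
    (hl : IsLocalHomeomorphOn k D) (hin : ∀ z ∈ D, k z ∈ ball (0 : ℂ) 1)
    (hfr : ∀ z ∈ frontier D, k z ∉ ball (0 : ℂ) 1) : BijOn k D (ball 0 1) := by
  have hcl : IsCompact (closure D) := hb.isCompact_closure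
  have hfr' : ∀ z ∈ closure D, k z ∈ ball (0 : ℂ) 1 → z ∈ D := by
    intro z hz hkz
    by_contra hzD
    exact hfr z (by rw [hD.frontier_eq]; exact ⟨hz, hzD⟩) hkz
  let k' : D → ball (0 : ℂ) 1 := fun z => ⟨k z, hin z z.2⟩
  have hkD : ContinuousOn k D := hk.mono subset_closure
  have hkc : Continuous k' := (continuousOn_iff_continuous_domRestrict.1 hkD).subtype_mk _
  have hlh : IsLocalHomeomorph k' := by
    refine IsLocalHomeomorph.of_comp (g := (Subtype.val : ball (0 : ℂ) 1 → ℂ)) ?_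
      isOpen_ball.isOpenEmbedding_subtypeVal.isLocalHomeomorph hkc
    rw [isLocalHomeomorph_iff_isLocalHomeomorphOn_univ]
    exact hl.comp (hD.isOpenEmbedding_subtypeVal.isLocalHomeomorph.isLocalHomeomorphOn (s := univ))
      (fun z _ => z.2)
  have hclosed : IsClosedMap k' := by
    intro C hC
    obtain ⟨C', hC', rfl⟩ := isClosed_induced_iff.1 hC
    have h1 : IsClosed (k '' (C' ∩ closure D)) :=
      ((hcl.inter_left hC').image_of_continuousOn (hk.mono inter_subset_right)).isClosed
    have : k' '' (Subtype.val ⁻¹' C') = Subtype.val ⁻¹' (k '' (C' ∩ closure D)) := by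
      ext w
      constructor
      · rintro ⟨z, hz, rfl⟩
        exact ⟨z, ⟨hz, subset_closure z.2⟩, rfl⟩
      · rintro ⟨z, ⟨hz, hzD⟩, hzw⟩
        have : z ∈ D := hfr' z hzD (by rw [hzw]; exact w.2)
        exact ⟨⟨z, this⟩, hz, Subtype.ext hzw⟩
    rw [this]
    exact h1.preimage continuous_subtype_val
  have hfin : ∀ x ∈ (univ : Set (ball (0 : ℂ) 1)), (k' ⁻¹' {x}).Finite := by
    intro x _
    refine IsCompact.finite ?_ ?_
    · rw [Subtype.isCompact_iff]
      have : Subtype.val '' (k' ⁻¹' {x}) = closure D ∩ k ⁻¹' {(x : ℂ)} := by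
        ext z
        constructor
        · rintro ⟨y, hy, rfl⟩
          exact ⟨subset_closure y.2, congrArg Subtype.val hy⟩
        · rintro ⟨hz, hzx⟩
          have hzx' : k z = x := hzx
          exact ⟨⟨z, hfr' z hz (by rw [hzx']; exact x.2)⟩, Subtype.ext hzx, rfl⟩
      rw [this]
      exact hcl.of_isClosed_subset (hk.preimage_isClosed_of_isClosed isClosed_closure
        isClosed_singleton) inter_subset_left
    · refine (hlh.isLocalHomeomorphOn (s := k' ⁻¹' {x})).isDiscrete_of_image ?_
      exact ((Set.finite_singleton x).subset (image_preimage_subset _ _)).isDiscrete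
  have hcov : IsCoveringMap k' := isCoveringMap_iff_isCoveringMapOn_univ.2
    (hclosed.isCoveringMapOn_of_isLocalHomeomorphOn hfin hlh.isLocalHomeomorphOn)
  have : ContractibleSpace (ball (0 : ℂ) 1) := contractibleSpace_ball one_pos
  have : LocallyPathConnectedSpace (ball (0 : ℂ) 1) := isOpen_ball.locallyPathConnectedSpace
  have : PreconnectedSpace D := Subtype.preconnectedSpace hDc.isPreconnected
  obtain ⟨z1, hz1⟩ := hDc.nonempty
  obtain ⟨s, ⟨hs1, hs2⟩, -⟩ := hcov.existsUnique_continuousMap_lifts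
    (ContinuousMap.id (ball (0 : ℂ) 1)) (k' ⟨z1, hz1⟩) ⟨z1, hz1⟩ rfl
  have hsk : (fun z => s (k' z)) = id := by
    refine hcov.eq_of_comp_eq (s.continuous.comp hkc) continuous_id ?_ ⟨z1, hz1⟩ hs1
    funext z
    exact congrFun hs2 (k' z)
  refine ⟨hin, fun x hx y hy hxy => ?_, fun w hw => ?_⟩
  · have h1 : k' ⟨x, hx⟩ = k' ⟨y, hy⟩ := Subtype.ext hxy
    have h2 := congrFun hsk ⟨x, hx⟩
    have h3 := congrFun hsk ⟨y, hy⟩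
    simp only [id] at h2 h3
    rw [h1, h3] at h2
    exact (congrArg Subtype.val h2).symm
  · have := congrFun hs2 ⟨w, hw⟩
    exact ⟨s ⟨w, hw⟩, (s ⟨w, hw⟩).2, congrArg Subtype.val this⟩

theorem rkc {γ : ℝ → ℂ} (h : Loop γ) {D : Set ℂ} (hD : IsOpen D) (hDc : IsConnected D)
    (hb : Bornology.IsBounded D) (hfr : frontier D = range γ) :
    ∃ k : ℂ → ℂ, ContinuousOn k (closure D) ∧ BijOn k (closure D) (closedBall 0 1) ∧
      (∀ z ∈ D, ‖k z‖ < 1) ∧ ∀ t : ℝ, k (γ t) = Complex.exp (t * Complex.I) := by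
  obtain ⟨u0, u1, h0, h1, hc0, hc1, hb0, hb1⟩ := harm_ext h hD hDc.nonempty hb hfr
  have hl := local_homeo h hD hDc.isPreconnected hb hfr h0 h1 hc0 hc1 hb0 hb1
  set k : ℂ → ℂ := fun z => (u0 z : ℂ) + u1 z * Complex.I with hkdef
  have hk : ContinuousOn k (closure D) :=
    (Complex.continuous_ofReal.comp_continuousOn hc0).add
      ((Complex.continuous_ofReal.comp_continuousOn hc1).mul continuousOn_const)
  have hkt : ∀ t : ℝ, k (γ t) = Complex.exp (t * Complex.I) := by
    intro t
    rw [Complex.exp_mul_I]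
    simp only [hkdef, hb0, hb1]
    push_cast
    rfl
  have hle : ∀ z ∈ closure D, ‖k z‖ ≤ 1 := by
    intro z hz
    have := max_principle' hD hb
      (((h0.smul (Real.cos (k z).arg)).add hD (h1.smul (Real.sin (k z).arg))).subM)
      ((hc0.const_mul _).add (hc1.const_mul _)) (m := 1) (by
        intro x hx
        rw [hfr] at hx
        obtain ⟨t, rfl⟩ := hx
        rw [hb0, hb1, ← Real.cos_sub]
        exact Real.cos_le_one _) z hz
    rw [← dir_re]
    simpa [hkdef] using this
  have hopen : IsOpen (k '' D) := by
    rw [isOpen_iff_mem_nhds]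
    rintro _ ⟨z, hz, rfl⟩
    rw [← hl.map_nhds_eq hz]
    exact image_mem_map (hD.mem_nhds hz)
  have hlt : ∀ z ∈ D, k z ∈ ball (0 : ℂ) 1 := by
    have : k '' D ⊆ interior (closedBall (0 : ℂ) 1) := by
      refine interior_maximal ?_ hopen
      rintro _ ⟨z, hz, rfl⟩
      simpa using hle z (subset_closure hz)
    rw [interior_closedBall _ one_ne_zero] at this
    exact fun z hz => this ⟨z, hz, rfl⟩
  have hbij := bij_of_proper hD hDc hb hk hl hlt (by
    intro z hz
    rw [hfr] at hz
    obtain ⟨t, rfl⟩ := hz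
    rw [hkt]
    simp [Complex.norm_exp_ofReal_mul_I])
  have hfrb : BijOn k (frontier D) (sphere 0 1) := by
    rw [hfr]
    refine ⟨?_, ?_, ?_⟩
    · rintro _ ⟨t, rfl⟩
      rw [hkt]
      simp [Complex.norm_exp_ofReal_mul_I]
    · rintro _ ⟨t, rfl⟩ _ ⟨s, rfl⟩ hts
      rw [hkt, hkt, Complex.exp_eq_exp_iff_exists_int] at hts
      obtain ⟨n, hn⟩ := hts
      rw [h.eq_iff]
      refine ⟨n, ?_⟩
      have : (t : ℂ) = s + n * (2 * π) := by
        apply mul_right_cancel₀ Complex.I_ne_zero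
        rw [hn]
        ring
      exact_mod_cast this
    · intro w hw
      refine ⟨γ w.arg, mem_range_self _, ?_⟩
      rw [hkt]
      have := Complex.norm_mul_exp_arg_mul_I w
      rw [mem_sphere_zero_iff_norm.1 hw] at this
      simpa using this
  refine ⟨k, hk, ?_, fun z hz => by simpa using hlt z hz, hkt⟩
  rw [closure_eq_self_union_frontier, ← ball_union_sphere]
  refine hbij.union hfrb ?_
  rw [injOn_union (by rw [hD.frontier_eq]; exact disjoint_sdiff_right)]
  refine ⟨hbij.injOn, hfrb.injOn, fun x hx y hy hxy => ?_⟩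
  have a1 := hlt x hx
  have a2 := hfrb.mapsTo hy
  rw [hxy] at a1
  simp only [mem_ball, mem_sphere] at a1 a2
  linarith

end JS

namespace JS
open Set Filter Topology Metric Real MeasureTheory

instance compact_sphere2 : CompactSpace sphere2 :=
  isCompact_iff_compactSpace.1 (isCompact_sphere (0 : E3) 1)

/-- Inverse stereographic projection from `n`. -/
lemma stereo (n : sphere2) : ∃ q : ℂ → sphere2, IsOpenEmbedding q ∧ range q = {n}ᶜ := by
  have : Fact (Module.finrank ℝ E3 = 2 + 1) := ⟨by simp⟩
  let e : OpenPartialHomeomorph (sphere (0 : E3) 1) (EuclideanSpace ℝ (Fin 2)) :=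
    stereographic' 2 (n : sphere (0 : E3) 1)
  have ht : e.target = univ := stereographic'_target _
  have hs : e.source = {n}ᶜ := stereographic'_source _
  have h1 : IsOpenEmbedding e.symm := e.symm.isOpenEmbedding ht
  refine ⟨fun w => e.symm (Complex.orthonormalBasisOneI.repr w), ?_, ?_⟩
  · exact h1.comp Complex.orthonormalBasisOneI.repr.toHomeomorph.isOpenEmbedding
  · have : range (fun w => e.symm (Complex.orthonormalBasisOneI.repr w)) = range e.symm :=
      Complex.orthonormalBasisOneI.repr.surjective.range_comp e.symm
    have h2 : range e.symm = e.source := by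
      rw [← image_univ, ← ht, e.symm_image_target_eq_source]
    exact (this.trans h2).trans hs

/-- Periodic parametrization of a simple closed curve in the sphere. -/
structure SLoop (g : ℝ → sphere2) : Prop where
  cont : Continuous g
  eq_iff : ∀ s t, g s = g t ↔ ∃ n : ℤ, s = t + n * (2 * π)

lemma SLoop.pull {g : ℝ → sphere2} (h : SLoop g) {q : ℂ → sphere2} (hq : IsOpenEmbedding q)
    (hr : range g ⊆ range q) : ∃ γ : ℝ → ℂ, Loop γ ∧ ∀ t, q (γ t) = g t := by
  choose γ hγ using fun t => hr (mem_range_self t)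
  refine ⟨γ, ⟨?_, fun s t => ?_⟩, hγ⟩
  · rw [hq.isInducing.continuous_iff]
    have : q ∘ γ = g := funext hγ
    rw [this]
    exact h.cont
  · rw [← hq.injective.eq_iff, hγ, hγ, h.eq_iff]

lemma disk {g : ℝ → sphere2} (h : SLoop g) {D : Set sphere2} (hD : IsOpen D) (hDc : IsConnected D)
    (hfr : frontier D = range g) {n : sphere2} (hn : n ∉ closure D) :
    ∃ k : sphere2 → ℂ, ContinuousOn k (closure D) ∧ BijOn k (closure D) (closedBall 0 1) ∧
      (∀ z ∈ D, ‖k z‖ < 1) ∧ ∀ t : ℝ, k (g t) = Complex.exp (t * Complex.I) := by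
  obtain ⟨q, hq, hqr⟩ := stereo n
  have hsub : closure D ⊆ range q := by
    rw [hqr]
    intro x hx hxn
    exact hn (mem_singleton_iff.1 hxn ▸ hx)
  obtain ⟨γ, hγ, hγg⟩ := h.pull hq (hfr ▸ frontier_subset_closure.trans hsub)
  have hcl : q ⁻¹' closure D = closure (q ⁻¹' D) :=
    hq.isOpenMap.preimage_closure_eq_closure_preimage hq.continuous D
  have hcomp : IsCompact (q ⁻¹' closure D) :=
    (hq.isInducing.isCompact_preimage_iff hsub).2 isClosed_closure.isCompact
  obtain ⟨k, hk, hkb, hklt, hkt⟩ := rkc hγ (D := q ⁻¹' D) (hD.preimage hq.continuous)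
    (hDc.preimage_of_isOpenMap hq.injective hq.isOpenMap (subset_closure.trans hsub))
    (hcomp.isBounded.subset (preimage_mono subset_closure)) (by
      rw [← hq.isOpenMap.preimage_frontier_eq_frontier_preimage hq.continuous, hfr]
      ext w
      constructor
      · rintro ⟨t, ht⟩
        exact ⟨t, hq.injective (by rw [hγg, ht])⟩
      · rintro ⟨t, rfl⟩
        exact ⟨t, (hγg t).symm⟩)
  rw [← hcl] at hk hkb
  let e := hq.toOpenPartialHomeomorph q
  have hinv : ∀ w, e.symm (q w) = w := fun w => hq.toOpenPartialHomeomorph_left_inv q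
  have hinv' : ∀ x ∈ range q, q (e.symm x) = x := fun x hx =>
    hq.toOpenPartialHomeomorph_right_inv q hx
  have hec : ContinuousOn e.symm (closure D) := e.continuousOn_symm.mono (by
    rw [hq.toOpenPartialHomeomorph_target q]
    exact hsub)
  have heb : BijOn e.symm (closure D) (q ⁻¹' closure D) := by
    refine ⟨fun x hx => ?_, fun x hx y hy hxy => ?_, fun w hw => ⟨q w, hw, hinv w⟩⟩
    · rw [mem_preimage, hinv' x (hsub hx)]
      exact hx
    · rw [← hinv' x (hsub hx), ← hinv' y (hsub hy), hxy]
  refine ⟨fun x => k (e.symm x), hk.comp hec heb.mapsTo, hkb.comp heb, fun z hz => ?_, fun t => ?_⟩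
  · apply hklt
    rw [mem_preimage, hinv' z (hsub (subset_closure hz))]
    exact hz
  · beta_reduce
    rw [← hγg, hinv, hkt]

lemma conn_pair (a b : sphere2) (hab : a ≠ b) : IsPreconnected ({a, b}ᶜ : Set sphere2) := by
  obtain ⟨q, hq, hqr⟩ := stereo a
  have hb : b ∈ range q := by
    rw [hqr]
    exact hab.symm
  obtain ⟨w, rfl⟩ := hb
  have h1 : IsConnected ({w}ᶜ : Set ℂ) := isConnected_compl_singleton_of_one_lt_rank
    (by rw [Complex.rank_real_complex]; exact Cardinal.one_lt_two) w
  have h2 := h1.isPreconnected.image q hq.continuous.continuousOn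
  have : q '' {w}ᶜ = {a, q w}ᶜ := by
    ext x
    constructor
    · rintro ⟨y, hy, rfl⟩
      rintro (h | h)
      · have : q y ∈ ({a}ᶜ : Set sphere2) := hqr ▸ mem_range_self y
        exact this h
      · exact hy (hq.injective h)
    · intro hx
      have : x ∈ range q := by
        rw [hqr]
        exact fun h => hx (Or.inl h)
      obtain ⟨y, rfl⟩ := this
      exact ⟨y, fun h => hx (Or.inr (congrArg q h)), rfl⟩
  rwa [← this]

lemma SLoop.lt_inj {g : ℝ → sphere2} (h : SLoop g) {s t : ℝ} (hst : s < t) (hst' : t < s + 2 * π) :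
    g s ≠ g t := by
  intro he
  obtain ⟨n, hn⟩ := (h.eq_iff s t).1 he
  have hpi := Real.pi_pos
  have h1 : (n : ℝ) < 0 := by nlinarith
  have h2 : (-1 : ℝ) < n := by nlinarith
  have h1' : n < 0 := by exact_mod_cast h1
  have h2' : -1 < n := by exact_mod_cast h2
  omega

lemma SLoop.not_surj {g : ℝ → sphere2} (h : SLoop g) : ∃ n, n ∉ range g := by
  by_contra hcon
  push Not at hcon
  have hpi := Real.pi_pos
  have hper : ∀ t, g (t + 2 * π) = g t := fun t => (h.eq_iff _ _).2 ⟨1, by push_cast; ring⟩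
  have hc : ∀ a b : ℝ, IsClosed (g '' Icc a b) := fun a b =>
    (isCompact_Icc.image h.cont).isClosed
  have h0p : g 0 ≠ g π := h.lt_inj hpi (by linarith)
  have := isPreconnected_closed_iff.1 (conn_pair (g 0) (g π) h0p) _ _ (hc 0 π) (hc π (2 * π)) (by
      intro x _
      obtain ⟨t, rfl⟩ := hcon x
      obtain ⟨s, hs, hst⟩ : ∃ s ∈ Ico 0 (0 + 2 * π), g t = g s := by
        obtain ⟨s, hs, hst⟩ := (show Function.Periodic g (2 * π) from hper).exists_mem_Ico₀
          (by positivity) t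
        exact ⟨s, by simpa using hs, hst⟩
      rcases le_total s π with hs' | hs'
      · exact Or.inl ⟨s, ⟨hs.1, hs'⟩, hst.symm⟩
      · exact Or.inr ⟨s, ⟨hs', by linarith [hs.2]⟩, hst.symm⟩)
    ⟨g (π / 2), by
      rintro (h' | h')
      · exact h.lt_inj (s := 0) (t := π / 2) (by linarith) (by linarith) h'.symm
      · exact h.lt_inj (s := π / 2) (t := π) (by linarith) (by linarith) h',
      π / 2, ⟨by linarith, by linarith⟩, rfl⟩
    ⟨g (3 * π / 2), by
      rintro (h' | h')
      · exact h.lt_inj (s := 0) (t := 3 * π / 2) (by linarith) (by linarith) h'.symm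
      · exact h.lt_inj (s := π) (t := 3 * π / 2) (by linarith) (by linarith) h'.symm,
      3 * π / 2, ⟨by linarith, by linarith⟩, rfl⟩
  obtain ⟨x, hx, ⟨s, hs, rfl⟩, t, ht, hst⟩ := this
  have hs0 : s ≠ 0 := by
    rintro rfl
    exact hx (Or.inl rfl)
  have hsp : s ≠ π := by
    rintro rfl
    exact hx (Or.inr rfl)
  have hs0' : 0 < s := lt_of_le_of_ne hs.1 hs0.symm
  have hsp' : s < π := lt_of_le_of_ne hs.2 hsp
  exact h.lt_inj (s := s) (t := t) (by linarith [ht.1]) (by linarith [ht.2]) hst.symm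

/-- Jordan curve theorem in the sphere. -/
lemma SLoop.jordan {g : ℝ → sphere2} (h : SLoop g) : ∃ D1 D2 : Set sphere2,
    IsOpen D1 ∧ IsOpen D2 ∧ IsConnected D1 ∧ IsConnected D2 ∧ D2 = (closure D1)ᶜ ∧
    frontier D1 = range g ∧ frontier D2 = range g := by
  obtain ⟨n, hn⟩ := h.not_surj
  obtain ⟨q, hq, hqr⟩ := stereo n
  obtain ⟨γ, hγ, hγg⟩ := h.pull hq (by
    rw [hqr]
    intro x hx hxn
    exact hn (mem_singleton_iff.1 hxn ▸ hx))
  have himg : q '' range γ = range g := by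
    rw [← range_comp]
    exact congrArg range (funext hγg)
  obtain ⟨U, V, hU, hV, hUc, hVc, hdis, hUV, hUb, hVb, hfU, hfV⟩ := hγ.jordan
  have hclU : closure (q '' U) = q '' closure U := by
    refine subset_antisymm ?_ (image_closure_subset_closure_image hq.continuous)
    exact closure_minimal (image_mono subset_closure)
      (hUb.isCompact_closure.image hq.continuous).isClosed
  have hclU' : closure U = U ∪ range γ := by rw [closure_eq_self_union_frontier, hfU]
  have hclV' : closure V = V ∪ range γ := by rw [closure_eq_self_union_frontier, hfV]
  have hVcl : V = (closure U)ᶜ := by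
    ext w
    rw [hclU']
    have hw : w ∈ U ∪ V ↔ w ∉ range γ := by rw [hUV]; rfl
    have hd : w ∈ U → w ∉ V := fun a b => disjoint_left.1 hdis a b
    simp only [mem_union, mem_compl_iff] at *
    tauto
  have hfD1 : frontier (q '' U) = range g := by
    rw [(hq.isOpenMap U hU).frontier_eq, hclU, ← image_sdiff hq.injective, ← hU.frontier_eq, hfU,
      himg]
  set D2 : Set sphere2 := (closure (q '' U))ᶜ with hD2
  have hnot : ∀ w, q w ∈ D2 ↔ w ∈ V := by
    intro w
    rw [hD2, hclU, mem_compl_iff, hq.injective.mem_set_image, hVcl, mem_compl_iff]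
  have hD2o : IsOpen D2 := isClosed_closure.isOpen_compl
  have hncl : n ∈ closure (q '' V) := by
    by_contra hnV
    have hsub : closure (q '' V) ⊆ range q := by
      rw [hqr]
      intro x hx hxn
      exact hnV (mem_singleton_iff.1 hxn ▸ hx)
    have hcomp : IsCompact (q ⁻¹' closure (q '' V)) :=
      (hq.isInducing.isCompact_preimage_iff hsub).2 isClosed_closure.isCompact
    exact hVb (hcomp.isBounded.subset fun w hw => subset_closure (mem_image_of_mem q hw))
  have hVsub : q '' V ⊆ D2 := by
    rintro _ ⟨w, hw, rfl⟩
    exact (hnot w).2 hw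
  have hD2sub : D2 ⊆ closure (q '' V) := by
    intro x hx
    by_cases hxn : x = n
    · rw [hxn]; exact hncl
    · have : x ∈ range q := by rw [hqr]; exact hxn
      obtain ⟨w, rfl⟩ := this
      exact subset_closure (mem_image_of_mem q ((hnot w).1 hx))
  refine ⟨q '' U, D2, hq.isOpenMap U hU, hD2o, hUc.image q hq.continuous.continuousOn,
    (hVc.image q hq.continuous.continuousOn).subset_closure hVsub hD2sub, rfl, hfD1, ?_⟩
  apply subset_antisymm
  · intro x hx
    rw [hD2o.frontier_eq] at hx
    rw [← hfD1, (hq.isOpenMap U hU).frontier_eq]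
    refine ⟨not_not.1 hx.2, fun hxU => ?_⟩
    obtain ⟨y, hy1, hy2⟩ := mem_closure_iff.1 hx.1 _ (hq.isOpenMap U hU) hxU
    exact hy2 (subset_closure hy1)
  · rw [← himg]
    rintro _ ⟨w, hw, rfl⟩
    rw [hD2o.frontier_eq]
    refine ⟨?_, ?_⟩
    · apply closure_mono hVsub
      exact image_closure_subset_closure_image hq.continuous
        (mem_image_of_mem q (by rw [hclV']; exact Or.inr hw))
    · rw [hnot, hVcl, hclU']
      exact fun hh => hh (Or.inr hw)

end JS

namespace JS
open Set Filter Topology Metric Real MeasureTheory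

lemma hemi_mem {w : ℂ} (hw : ‖w‖ ≤ 1) {ε : ℝ} (hε : ε ^ 2 = 1) :
    (!₂[w.re, w.im, ε * Real.sqrt (1 - ‖w‖ ^ 2)] : E3) ∈ sphere2 := by
  have h1 : 0 ≤ 1 - ‖w‖ ^ 2 := by nlinarith [norm_nonneg w]
  have h2 := Real.sq_sqrt h1
  have h3 := Complex.sq_norm w
  rw [Complex.normSq_apply] at h3
  rw [sphere2, mem_sphere_zero_iff_norm, EuclideanSpace.norm_eq, Real.sqrt_eq_one]
  simp only [Fin.sum_univ_three, Real.norm_eq_abs, sq_abs]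
  simp
  rw [mul_pow, hε, h2]
  nlinarith

/-- The map sending a spherical Jordan curve to the equator. -/
lemma SLoop.straighten {g : ℝ → sphere2} (h : SLoop g) : ∃ Φ : sphere2 ≃ₜ sphere2,
    ∀ t, (Φ (g t) : E3) = !₂[Real.cos t, Real.sin t, 0] := by
  classical
  obtain ⟨D1, D2, ho1, ho2, hc1, hc2, hD2, hf1, hf2⟩ := h.jordan
  have hdis : Disjoint D1 D2 := by
    rw [hD2]
    exact disjoint_compl_right.mono_left subset_closure
  obtain ⟨p1, hp1⟩ := hc1.nonempty
  obtain ⟨p2, hp2⟩ := hc2.nonempty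
  have hp1' : p1 ∉ closure D2 := fun hh =>
    disjoint_left.1 (hdis.closure_right ho1) hp1 hh
  have hp2' : p2 ∉ closure D1 := by
    rw [hD2] at hp2
    exact hp2
  obtain ⟨k1, a1, b1, c1, d1⟩ := disk h ho1 hc1 hf1 hp2'
  obtain ⟨k2, a2, b2, c2, d2⟩ := disk h ho2 hc2 hf2 hp1'
  have hn1 : ∀ x ∈ closure D1, ‖k1 x‖ ≤ 1 := fun x hx => by simpa using b1.mapsTo hx
  have hn2 : ∀ x ∈ closure D2, ‖k2 x‖ ≤ 1 := fun x hx => by simpa using b2.mapsTo hx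
  have hnc : ∀ x, x ∉ closure D1 → x ∈ D2 := by
    intro x hx
    rw [hD2]
    exact hx
  let F1 : sphere2 → E3 := fun x => !₂[(k1 x).re, (k1 x).im, 1 * Real.sqrt (1 - ‖k1 x‖ ^ 2)]
  let F2 : sphere2 → E3 := fun x => !₂[(k2 x).re, (k2 x).im, -1 * Real.sqrt (1 - ‖k2 x‖ ^ 2)]
  let F : sphere2 → E3 := fun x => if x ∈ closure D1 then F1 x else F2 x
  have hF1 : ∀ x ∈ closure D1, F x = F1 x := fun x hx => if_pos hx
  have hinter : ∀ x ∈ closure D1, x ∈ closure D2 → x ∈ range g := by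
    intro x hx hx2
    rw [← hf2, ho2.frontier_eq]
    refine ⟨hx2, ?_⟩
    rw [hD2]
    exact fun hh => hh hx
  have hF2 : ∀ x ∈ closure D2, F x = F2 x := by
    intro x hx
    by_cases hx1 : x ∈ closure D1
    · rw [hF1 x hx1]
      obtain ⟨t, rfl⟩ := hinter x hx1 hx
      simp only [F1, F2, d1, d2, Complex.norm_exp_ofReal_mul_I]
      simp
    · exact if_neg hx1
  have hFc : Continuous F := by
    have e1 : ContinuousOn F (closure D1) := by
      refine ContinuousOn.congr (f := F1) ?_ hF1
      have : Continuous fun w : ℂ =>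
        (!₂[w.re, w.im, 1 * Real.sqrt (1 - ‖w‖ ^ 2)] : E3) := by fun_prop
      exact this.comp_continuousOn a1
    have e2 : ContinuousOn F (closure D2) := by
      refine ContinuousOn.congr (f := F2) ?_ hF2
      have : Continuous fun w : ℂ =>
        (!₂[w.re, w.im, -1 * Real.sqrt (1 - ‖w‖ ^ 2)] : E3) := by fun_prop
      exact this.comp_continuousOn a2
    rw [← continuousOn_univ]
    have : (univ : Set sphere2) = closure D1 ∪ closure D2 := by
      symm
      rw [eq_univ_iff_forall]
      intro x
      by_cases hx : x ∈ closure D1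
      · exact Or.inl hx
      · exact Or.inr (subset_closure (hnc x hx))
    rw [this]
    exact e1.union_of_isClosed e2 isClosed_closure isClosed_closure
  have hFm : ∀ x, F x ∈ sphere2 := by
    intro x
    by_cases hx : x ∈ closure D1
    · rw [hF1 x hx]
      exact hemi_mem (hn1 x hx) (by norm_num)
    · rw [hF2 x (subset_closure (hnc x hx))]
      exact hemi_mem (hn2 x (subset_closure (hnc x hx))) (by norm_num)
  have hpos : ∀ x ∈ closure D1, 0 ≤ F x 2 := by
    intro x hx
    rw [hF1 x hx]
    simp [F1, Real.sqrt_nonneg]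
  have hneg : ∀ x ∉ closure D1, F x 2 < 0 := by
    intro x hx
    rw [hF2 x (subset_closure (hnc x hx))]
    have := c2 x (hnc x hx)
    have h1 : 0 < Real.sqrt (1 - ‖k2 x‖ ^ 2) :=
      Real.sqrt_pos.2 (by nlinarith [norm_nonneg (k2 x)])
    simpa [F2] using h1
  have hinj : Function.Injective F := by
    intro x y hxy
    by_cases hx : x ∈ closure D1 <;> by_cases hy : y ∈ closure D1
    · rw [hF1 x hx, hF1 y hy] at hxy
      refine b1.injOn hx hy (Complex.ext ?_ ?_)
      · simpa [F1] using congrArg (fun v : E3 => v 0) hxy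
      · simpa [F1] using congrArg (fun v : E3 => v 1) hxy
    · have := hpos x hx
      rw [hxy] at this
      exact absurd (hneg y hy) (not_lt.2 this)
    · have := hpos y hy
      rw [← hxy] at this
      exact absurd (hneg x hx) (not_lt.2 this)
    · have hx' := subset_closure (hnc x hx)
      have hy' := subset_closure (hnc y hy)
      rw [hF2 x hx', hF2 y hy'] at hxy
      refine b2.injOn hx' hy' (Complex.ext ?_ ?_)
      · simpa [F2] using congrArg (fun v : E3 => v 0) hxy
      · simpa [F2] using congrArg (fun v : E3 => v 1) hxy
  have hsurj : ∀ p ∈ sphere2, ∃ x, F x = p := by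
    intro p hp
    rw [sphere2, mem_sphere_zero_iff_norm, EuclideanSpace.norm_eq, Real.sqrt_eq_one] at hp
    simp only [Fin.sum_univ_three, Real.norm_eq_abs, sq_abs] at hp
    have hw : ‖(⟨p 0, p 1⟩ : ℂ)‖ ^ 2 = 1 - p 2 ^ 2 := by
      rw [Complex.sq_norm, Complex.normSq_apply]
      linarith
    have hw1 : (⟨p 0, p 1⟩ : ℂ) ∈ closedBall (0 : ℂ) 1 := by
      rw [mem_closedBall_zero_iff]
      nlinarith [norm_nonneg (⟨p 0, p 1⟩ : ℂ), sq_nonneg (p 2)]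
    rcases le_or_gt 0 (p 2) with h2 | h2
    · obtain ⟨x, hx, hxk⟩ := b1.surjOn hw1
      refine ⟨x, ?_⟩
      rw [hF1 x hx]
      have h3 : Real.sqrt (1 - ‖k1 x‖ ^ 2) = p 2 := by
        rw [hxk, hw, sub_sub_cancel, Real.sqrt_sq h2]
      ext i
      fin_cases i
      · simp [F1, hxk]
      · simp [F1, hxk]
      · simpa [F1] using h3
    · obtain ⟨x, hx, hxk⟩ := b2.surjOn hw1
      refine ⟨x, ?_⟩
      rw [hF2 x hx]
      have h3 : -Real.sqrt (1 - ‖k2 x‖ ^ 2) = p 2 := by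
        rw [hxk, hw, sub_sub_cancel, Real.sqrt_sq_eq_abs, abs_of_neg h2, neg_neg]
      ext i
      fin_cases i
      · simp [F2, hxk]
      · simp [F2, hxk]
      · simpa [F2] using h3
  let Fs : sphere2 → sphere2 := fun x => ⟨F x, hFm x⟩
  have hbij : Function.Bijective Fs := by
    refine ⟨fun x y hxy => hinj (congrArg Subtype.val hxy), fun p => ?_⟩
    obtain ⟨x, hx⟩ := hsurj p p.2
    exact ⟨x, Subtype.ext hx⟩
  have hFsc : Continuous Fs := hFc.subtype_mk _
  refine ⟨Continuous.homeoOfEquivCompactToT2 (f := Equiv.ofBijective Fs hbij) hFsc, fun t => ?_⟩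
  have hgt : g t ∈ closure D1 := frontier_subset_closure (hf1 ▸ mem_range_self t)
  have : F (g t) = !₂[Real.cos t, Real.sin t, 0] := by
    rw [hF1 _ hgt]
    simp only [F1, d1, Complex.norm_exp_ofReal_mul_I, Complex.exp_ofReal_mul_I_re,
      Complex.exp_ofReal_mul_I_im]
    simp
  exact this

lemma circ_mem (t : ℝ) : (!₂[Real.cos t, Real.sin t] : E2) ∈ sphere1 := by
  rw [sphere1, mem_sphere_zero_iff_norm, EuclideanSpace.norm_eq, Real.sqrt_eq_one]
  simp [Fin.sum_univ_two]

lemma circ_surj (z : sphere1) : ∃ t : ℝ, z = ⟨!₂[Real.cos t, Real.sin t], circ_mem t⟩ := by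
  obtain ⟨p, hp⟩ := z
  have hp' := hp
  rw [sphere1, mem_sphere_zero_iff_norm, EuclideanSpace.norm_eq, Real.sqrt_eq_one] at hp'
  simp only [Fin.sum_univ_two, Real.norm_eq_abs, sq_abs] at hp'
  set w : ℂ := ⟨p 0, p 1⟩ with hw
  have hwn : ‖w‖ = 1 := by
    have : ‖w‖ ^ 2 = 1 := by
      rw [Complex.sq_norm, Complex.normSq_apply]
      simp only [hw]
      linarith
    nlinarith [norm_nonneg w]
  refine ⟨w.arg, Subtype.ext ?_⟩
  have e1 := Complex.norm_mul_cos_arg w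
  have e2 := Complex.norm_mul_sin_arg w
  rw [hwn, one_mul] at e1 e2
  ext i
  fin_cases i
  · simpa using e1.symm
  · simpa using e2.symm

lemma sloop_of {f : sphere1 → sphere2} (hf : Continuous f) (hfi : Function.Injective f) :
    SLoop fun t => f ⟨!₂[Real.cos t, Real.sin t], circ_mem t⟩ := by
  refine ⟨hf.comp (Continuous.subtype_mk (by fun_prop) _), fun s t => ?_⟩
  rw [hfi.eq_iff, Subtype.mk_eq_mk]
  constructor
  · intro he
    have h0 : Real.cos s = Real.cos t := by simpa using congrArg (fun v : E2 => v 0) he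
    have h1 : Real.sin s = Real.sin t := by simpa using congrArg (fun v : E2 => v 1) he
    have : Complex.exp (s * Complex.I) = Complex.exp (t * Complex.I) := by
      apply Complex.ext
      · rw [Complex.exp_ofReal_mul_I_re, Complex.exp_ofReal_mul_I_re, h0]
      · rw [Complex.exp_ofReal_mul_I_im, Complex.exp_ofReal_mul_I_im, h1]
    rw [Complex.exp_eq_exp_iff_exists_int] at this
    obtain ⟨n, hn⟩ := this
    refine ⟨n, ?_⟩
    have : (s : ℂ) = t + n * (2 * π) := by
      apply mul_right_cancel₀ Complex.I_ne_zero
      rw [hn]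
      ring
    exact_mod_cast this
  · rintro ⟨n, rfl⟩
    rw [Real.cos_add_int_mul_two_pi, Real.sin_add_int_mul_two_pi]

end JS

/-- For any two topological embeddings `f, f'` of the unit circle `S¹ ⊆ ℝ²` into the unit
sphere `S² ⊆ ℝ³` (continuous injective maps), there is a homeomorphism `φ` of `S²` with
`φ ∘ f = f'`. -/
theorem stmt0 (f f' : ↥sphere1 → ↥sphere2)
    (hf : Continuous f) (hf' : Continuous f')
    (hfi : Function.Injective f) (hf'i : Function.Injective f') :
    ∃ φ : ↥sphere2 ≃ₜ ↥sphere2, ∀ z, φ (f z) = f' z := by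
  obtain ⟨Φ, hΦ⟩ := (JS.sloop_of hf hfi).straighten
  obtain ⟨Ψ, hΨ⟩ := (JS.sloop_of hf' hf'i).straighten
  refine ⟨Φ.trans Ψ.symm, fun z => ?_⟩
  obtain ⟨t, rfl⟩ := JS.circ_surj z
  rw [Homeomorph.trans_apply, Homeomorph.symm_apply_eq]
  exact Subtype.ext ((hΦ t).trans (hΨ t).symm)
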